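/- Let θ0 ∈ Θ_M°. There exist a neighborhood U ⊂ Θ_M° of θ0 and a measurable function η̇ : ℝ → [0,∞) with ∫_ℝ η̇(x)² f(x;θ0) dx < ∞, such that for all θ', θ'' ∈ U and all x ∈ ℝ, |log f(x;θ') − log f(x;θ'')| ≤ η̇(x)·‖θ' − θ''‖, where ‖·‖ is the Euclidean norm on ℝ⁴. -/

import Mathlib

open MeasureTheory Filter

noncomputable section

def ThetaInt : Set (Fin 4 → ℝ) :=
  {θ | 0 < θ 1 ∧ θ 2 ∈ Set.Ioo (0:ℝ) 2 ∧ θ 3 ∈ Set.Ioo (-1:ℝ) 1}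

/-- Cumulant (log characteristic function) of the continuous (M₀) parameterization,
with `θ = (μ, σ, α, β)`. -/
def psiM (θ : Fin 4 → ℝ) (t : ℝ) : ℂ :=
  if θ 2 = 1 then
    ((-(|θ 1 * t|) : ℝ) : ℂ)
      - Complex.I * (((2 * θ 3 / Real.pi) * (θ 1 * t) * Real.log |θ 1 * t| : ℝ) : ℂ)
      + Complex.I * ((θ 0 * t : ℝ) : ℂ)
  else
    ((-(|θ 1 * t| ^ (θ 2)) : ℝ) : ℂ) *
        (1 + Complex.I * ((θ 3 * Real.sign t * Real.tan (Real.pi * θ 2 / 2)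
            * (|θ 1 * t| ^ (1 - θ 2) - 1) : ℝ) : ℂ))
      + Complex.I * ((θ 0 * t : ℝ) : ℂ)

/-- Characteristic function of the (M₀) parameterization. -/
def phiM (θ : Fin 4 → ℝ) (t : ℝ) : ℂ := Complex.exp (psiM θ t)

/-- Stable density in the (M₀) parameterization, via Fourier inversion. -/
def fM (θ : Fin 4 → ℝ) (x : ℝ) : ℝ :=
  (1 / (2 * Real.pi)) *
    (∫ t : ℝ, Complex.exp (-Complex.I * (t : ℂ) * (x : ℂ)) * phiM θ t).re

/-- Partial derivative of the density in parameter `i`. -/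
def fP (i : Fin 4) (θ : Fin 4 → ℝ) (x : ℝ) : ℝ :=
  deriv (fun s => fM (Function.update θ i s) x) (θ i)

/-- Second partial derivative of the density in parameters `i`, `j`. -/
def fPP (i j : Fin 4) (θ : Fin 4 → ℝ) (x : ℝ) : ℝ :=
  deriv (fun s => fP i (Function.update θ j s) x) (θ j)

/-- Derivative of the density in `x`. -/
def fX (θ : Fin 4 → ℝ) (x : ℝ) : ℝ := deriv (fun y => fM θ y) x

/-- Mixed derivative `∂²f/∂x∂θᵢ`. -/
def fPX (i : Fin 4) (θ : Fin 4 → ℝ) (x : ℝ) : ℝ := deriv (fun y => fP i θ y) x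

/-- Score functions. -/
def ellP (i : Fin 4) (θ : Fin 4 → ℝ) (x : ℝ) : ℝ := fP i θ x / fM θ x

/-- Derivative of the score in `x`. -/
def ellPX (i : Fin 4) (θ : Fin 4 → ℝ) (x : ℝ) : ℝ := deriv (fun y => ellP i θ y) x

/-- Derivative of the score `ℓ_{θᵢ}` in the parameter `θⱼ`. -/
def ellPP (i j : Fin 4) (θ : Fin 4 → ℝ) (x : ℝ) : ℝ :=
  deriv (fun s => ellP i (Function.update θ j s) x) (θ j)

/-- `h = O(r)` as `|x| → ∞`. -/
def IsBigOAtInfty (h r : ℝ → ℝ) : Prop :=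
  ∃ c > 0, ∃ M > 0, ∀ x : ℝ, M ≤ |x| → |h x| ≤ c * r x


end

/-!
Write `α₀` for the index of `θ₀`. For every `γ < α₀`, the cumulant extends holomorphically to a half
strip next to the real axis, and moving the contour of the inversion integral there shows that, near
`θ₀`, both `|f(x;θ)|` and `|f(x;θ) - f(x;θ')| / ‖θ - θ'‖` are at most `C (1 + |x|)^{-(1+γ)}`.

Conversely `f(x;θ) ≥ m (1 + |x|)^{-(1+a)}` near `θ₀` for every `a > α₀`. To see this, choose a
function `p` of that order of decay which lies below both tails of the Lévy density, so that
`φ_θ = exp (p̂) k_θ` where `k_θ` is again infinitely divisible, up to a factor. Every term of the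
exponential series contributes a nonnegative function, and the linear term is the convolution of
`p` with the nonnegative inverse Fourier transform of `k_θ`.

Hence the log-density is Lipschitz with envelope `(C / m) (1 + |x|)^{a - γ}`, whose square is
integrable against `f(·;θ₀)` as soon as `2 a < 3 γ`.
-/

/-! ### The Fourier integral -/

section FourierIntegral

open Set Topology ComplexConjugate

/-- The Fourier integral `x ↦ ∫ e^{-itx} k(t) dt`, in the normalization of `fM`. -/
noncomputable def fourierInt (k : ℝ → ℂ) (x : ℝ) : ℂ :=
  ∫ t : ℝ, Complex.exp (-Complex.I * (t : ℂ) * (x : ℂ)) * k t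

theorem probChar_neg_mul_smul (t x : ℝ) (z : ℂ) :
    Real.probChar (-(LinearMap.mul ℝ ℝ t x)) • z =
      Complex.exp (-Complex.I * (t : ℂ) * (x : ℂ)) * z := by
  rw [Circle.smul_def, smul_eq_mul, Real.probChar_apply, LinearMap.mul_apply']
  congr 2
  push_cast
  ring

theorem fourierInt_eq_vectorFourier (k : ℝ → ℂ) :
    fourierInt k = VectorFourier.fourierIntegral Real.probChar volume (LinearMap.mul ℝ ℝ) k := by
  funext x
  simp only [fourierInt, VectorFourier.fourierIntegral, probChar_neg_mul_smul]

theorem continuous_linearMap_mul :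
    Continuous fun p : ℝ × ℝ ↦ LinearMap.mul ℝ ℝ p.1 p.2 := by
  simp only [LinearMap.mul_apply']
  fun_prop

theorem continuous_fourierInt {k : ℝ → ℂ} (hk : Integrable k) : Continuous (fourierInt k) :=
  fourierInt_eq_vectorFourier k ▸ VectorFourier.fourierIntegral_continuous
    Real.continuous_probChar continuous_linearMap_mul hk

theorem norm_fourierInt_le (k : ℝ → ℂ) (x : ℝ) : ‖fourierInt k x‖ ≤ ∫ t, ‖k t‖ :=
  fourierInt_eq_vectorFourier k ▸ VectorFourier.norm_fourierIntegral_le_integral_norm ..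

theorem integrable_cexp_mul {k : ℝ → ℂ} (hk : Integrable k) (x : ℝ) :
    Integrable fun t : ℝ ↦ Complex.exp (-Complex.I * (t : ℂ) * (x : ℂ)) * k t := by
  simpa only [probChar_neg_mul_smul] using (VectorFourier.fourierIntegral_convergent_iff
    Real.continuous_probChar continuous_linearMap_mul x).2 hk

theorem fourierInt_add {k l : ℝ → ℂ} (hk : Integrable k) (hl : Integrable l) (x : ℝ) :
    fourierInt (fun t ↦ k t + l t) x = fourierInt k x + fourierInt l x := by
  simp only [fourierInt, mul_add]
  exact integral_add (integrable_cexp_mul hk x) (integrable_cexp_mul hl x)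

theorem fourierInt_sub {k l : ℝ → ℂ} (hk : Integrable k) (hl : Integrable l) (x : ℝ) :
    fourierInt (fun t ↦ k t - l t) x = fourierInt k x - fourierInt l x := by
  simp only [fourierInt, mul_sub]
  exact integral_sub (integrable_cexp_mul hk x) (integrable_cexp_mul hl x)

theorem fourierInt_comp_neg (k : ℝ → ℂ) (x : ℝ) :
    fourierInt (fun t ↦ k (-t)) x = fourierInt k (-x) := by
  rw [fourierInt, ← integral_neg_eq_self]
  simp [fourierInt]

theorem fourierInt_cexp_mul (k : ℝ → ℂ) (x y : ℝ) :
    fourierInt (fun t ↦ Complex.exp (-Complex.I * (t : ℂ) * (x : ℂ)) * k t) y =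
      fourierInt k (x + y) := by
  simp only [fourierInt, ← mul_assoc, ← Complex.exp_add]
  congr! 4
  push_cast
  ring

theorem integral_fourierInt_mul {f g : ℝ → ℂ} (hf : Integrable f) (hg : Integrable g) :
    ∫ t, fourierInt f t * g t = ∫ y, f y * fourierInt g y := by
  have hflip : (LinearMap.mul ℝ ℝ).flip = LinearMap.mul ℝ ℝ := by
    ext
    simp
  simpa only [fourierInt_eq_vectorFourier, smul_eq_mul, hflip] using
    VectorFourier.integral_fourierIntegral_smul_eq_flip (L := LinearMap.mul ℝ ℝ)
      Real.continuous_probChar continuous_linearMap_mul hf hg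

theorem tendsto_fourierInt_of_dominated {k : ℕ → ℝ → ℂ} {l : ℝ → ℂ} {bound : ℝ → ℝ}
    (hbound : Integrable bound) (hk : ∀ n, Integrable (k n)) (hle : ∀ n t, ‖k n t‖ ≤ bound t)
    (hlim : ∀ t, Tendsto (fun n ↦ k n t) atTop (𝓝 (l t))) (x : ℝ) :
    Tendsto (fun n ↦ fourierInt (k n) x) atTop (𝓝 (fourierInt l x)) := by
  refine tendsto_integral_of_dominated_convergence bound
    (fun n ↦ (integrable_cexp_mul (hk n) x).aestronglyMeasurable) hbound
    (fun n ↦ .of_forall fun t ↦ ?_) (.of_forall fun t ↦ (hlim t).const_mul _)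
  simpa [Complex.norm_exp] using hle n t

/-- The characteristic function `t ↦ ∫ e^{ity} p(y) dy` of the measure with density `p`. -/
noncomputable def densityCharFun (p : ℝ → ℝ) (t : ℝ) : ℂ :=
  fourierInt (fun y ↦ (p y : ℂ)) (-t)

theorem densityCharFun_eq_integral (p : ℝ → ℝ) (t : ℝ) :
    densityCharFun p t = ∫ y : ℝ, Complex.exp (Complex.I * (y : ℂ) * (t : ℂ)) * (p y : ℂ) := by
  simp [densityCharFun, fourierInt]

theorem densityCharFun_zero (p : ℝ → ℝ) : densityCharFun p 0 = ((∫ y, p y : ℝ) : ℂ) := by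
  simp [densityCharFun_eq_integral, integral_complex_ofReal]

theorem norm_densityCharFun_le (p : ℝ → ℝ) (t : ℝ) : ‖densityCharFun p t‖ ≤ ∫ y, |p y| := by
  simpa [densityCharFun] using norm_fourierInt_le (fun y ↦ (p y : ℂ)) (-t)

theorem continuous_densityCharFun {p : ℝ → ℝ} (hp : Integrable p) :
    Continuous (densityCharFun p) :=
  (continuous_fourierInt hp.ofReal).comp continuous_neg

theorem densityCharFun_neg (p : ℝ → ℝ) (t : ℝ) :
    densityCharFun p (-t) = conj (densityCharFun p t) := by
  rw [densityCharFun_eq_integral, densityCharFun_eq_integral, ← integral_conj]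
  refine integral_congr_ae (.of_forall fun y ↦ ?_)
  simp [← Complex.exp_conj]

theorem integrable_densityCharFun_mul {p : ℝ → ℝ} (hp : Integrable p) {k : ℝ → ℂ}
    (hk : Integrable k) : Integrable fun t ↦ densityCharFun p t * k t :=
  hk.bdd_mul (continuous_densityCharFun hp).aestronglyMeasurable
    (.of_forall fun t ↦ norm_densityCharFun_le p t)

theorem integrable_mul_fourierInt_sub {p : ℝ → ℝ} (hp : Integrable p) {k : ℝ → ℂ}
    (hk : Integrable k) (x : ℝ) : Integrable fun y ↦ (p y : ℂ) * fourierInt k (x - y) :=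
  hp.ofReal.mul_bdd
    ((continuous_fourierInt hk).comp (continuous_const.sub continuous_id)).aestronglyMeasurable
    (.of_forall fun y ↦ norm_fourierInt_le k (x - y))

theorem fourierInt_densityCharFun_mul {p : ℝ → ℝ} (hp : Integrable p) {k : ℝ → ℂ}
    (hk : Integrable k) (x : ℝ) :
    fourierInt (fun t ↦ densityCharFun p t * k t) x =
      ∫ y : ℝ, (p y : ℂ) * fourierInt k (x - y) := by
  have hswap := integral_fourierInt_mul (hp.ofReal : Integrable fun y ↦ (p y : ℂ))
    (integrable_cexp_mul hk x).comp_neg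
  rw [← integral_neg_eq_self] at hswap
  simp only [neg_neg, fourierInt_comp_neg fun t ↦ Complex.exp (-Complex.I * (t : ℂ) * x) * k t,
    fourierInt_cexp_mul, ← sub_eq_add_neg] at hswap
  rw [← hswap, fourierInt]
  simp only [densityCharFun, mul_left_comm]

/-! ### Functions with nonnegative Fourier integral and their multipliers -/

/-- `k` is integrable and the real part of its Fourier integral is nonnegative. -/
structure HasNonnegFourier (k : ℝ → ℂ) : Prop where
  integrable : Integrable k
  nonneg : ∀ x, 0 ≤ (fourierInt k x).re

/-- `ψ` behaves like the characteristic function of a finite positive measure: multiplication by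
`ψ` preserves `HasNonnegFourier`, and `ψ` is bounded by its value at the origin. Unlike the
representability by a measure, this property passes to pointwise limits by dominated convergence. -/
structure IsPositiveMultiplier (ψ : ℝ → ℂ) : Prop where
  measurable : Measurable ψ
  im_zero : (ψ 0).im = 0
  norm_le : ∀ t, ‖ψ t‖ ≤ (ψ 0).re
  hasNonnegFourier_mul : ∀ k, HasNonnegFourier k → HasNonnegFourier fun t ↦ ψ t * k t

namespace HasNonnegFourier

theorem comp_neg {k : ℝ → ℂ} (hk : HasNonnegFourier k) : HasNonnegFourier fun t ↦ k (-t) :=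
  ⟨hk.integrable.comp_neg, fun x ↦ fourierInt_comp_neg k x ▸ hk.nonneg (-x)⟩

theorem of_tendsto {k : ℕ → ℝ → ℂ} {l : ℝ → ℂ} {bound : ℝ → ℝ} (hbound : Integrable bound)
    (hk : ∀ n, HasNonnegFourier (k n)) (hle : ∀ n t, ‖k n t‖ ≤ bound t)
    (hlim : ∀ t, Tendsto (fun n ↦ k n t) atTop (𝓝 (l t))) : HasNonnegFourier l where
  integrable := hbound.mono'
    (aestronglyMeasurable_of_tendsto_ae atTop
      (fun n ↦ (hk n).integrable.aestronglyMeasurable) (.of_forall hlim))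
    (.of_forall fun t ↦ le_of_tendsto (hlim t).norm (.of_forall fun n ↦ hle n t))
  nonneg x := ge_of_tendsto
    ((Complex.continuous_re.tendsto _).comp
      (tendsto_fourierInt_of_dominated hbound (fun n ↦ (hk n).integrable) hle hlim x))
    (.of_forall fun n ↦ (hk n).nonneg x)

theorem gaussian {b : ℝ} (hb : 0 < b) :
    HasNonnegFourier fun t : ℝ ↦ Complex.exp (-(b : ℂ) * (t : ℂ) ^ 2) where
  integrable := integrable_cexp_neg_mul_sq (by simpa using hb)
  nonneg x := by
    have hval : fourierInt (fun t : ℝ ↦ Complex.exp (-(b : ℂ) * (t : ℂ) ^ 2)) x =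
        (((Real.pi / b) ^ (1 / 2 : ℝ) * Real.exp (-x ^ 2 / (4 * b)) : ℝ) : ℂ) := by
      rw [Complex.ofReal_mul, Complex.ofReal_cpow (by positivity)]
      have hgauss := fourierIntegral_gaussian (b := (b : ℂ)) (by simpa using hb) (-(x : ℂ))
      simp only [fourierInt]
      convert hgauss using 5 <;> (push_cast; ring_nf)
    rw [hval, Complex.ofReal_re]
    positivity

end HasNonnegFourier

namespace IsPositiveMultiplier

variable {f g : ℝ → ℂ}

theorem cexp_I_mul (y : ℝ) :
    IsPositiveMultiplier fun t : ℝ ↦ Complex.exp (Complex.I * (y : ℂ) * (t : ℂ)) where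
  measurable := by fun_prop
  im_zero := by simp
  norm_le t := by simp [Complex.norm_exp]
  hasNonnegFourier_mul k hk := by
    have hchar : (fun t : ℝ ↦ Complex.exp (Complex.I * (y : ℂ) * (t : ℂ)) * k t) =
        fun t : ℝ ↦ Complex.exp (-Complex.I * (t : ℂ) * ((-y : ℝ) : ℂ)) * k t := by
      funext t
      congr 2
      push_cast
      ring
    rw [hchar]
    exact ⟨integrable_cexp_mul hk.integrable _,
      fun x ↦ fourierInt_cexp_mul k (-y) x ▸ hk.nonneg (-y + x)⟩

theorem const {c : ℝ} (hc : 0 ≤ c) : IsPositiveMultiplier fun _ ↦ (c : ℂ) where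
  measurable := measurable_const
  im_zero := Complex.ofReal_im c
  norm_le _ := by simp [abs_of_nonneg hc]
  hasNonnegFourier_mul k hk := by
    refine ⟨hk.integrable.const_mul _, fun x ↦ ?_⟩
    simp only [fourierInt, mul_left_comm _ (c : ℂ)]
    rw [integral_const_mul, Complex.re_ofReal_mul]
    exact mul_nonneg hc (hk.nonneg x)

theorem add (hf : IsPositiveMultiplier f) (hg : IsPositiveMultiplier g) :
    IsPositiveMultiplier fun t ↦ f t + g t where
  measurable := hf.measurable.add hg.measurable
  im_zero := by simp [hf.im_zero, hg.im_zero]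
  norm_le t := (norm_add_le _ _).trans (add_le_add (hf.norm_le t) (hg.norm_le t))
  hasNonnegFourier_mul k hk := by
    have hfk := hf.hasNonnegFourier_mul k hk
    have hgk := hg.hasNonnegFourier_mul k hk
    simp_rw [add_mul]
    refine ⟨hfk.integrable.add hgk.integrable, fun x ↦ ?_⟩
    rw [fourierInt_add hfk.integrable hgk.integrable, Complex.add_re]
    exact add_nonneg (hfk.nonneg x) (hgk.nonneg x)

theorem mul (hf : IsPositiveMultiplier f) (hg : IsPositiveMultiplier g) :
    IsPositiveMultiplier fun t ↦ f t * g t where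
  measurable := hf.measurable.mul hg.measurable
  im_zero := by simp [hf.im_zero, hg.im_zero]
  norm_le t := by
    rw [norm_mul, Complex.mul_re, hf.im_zero, zero_mul, sub_zero]
    exact mul_le_mul (hf.norm_le t) (hg.norm_le t) (norm_nonneg _)
      ((norm_nonneg _).trans (hf.norm_le 0))
  hasNonnegFourier_mul k hk := by
    simp_rw [mul_assoc]
    exact hf.hasNonnegFourier_mul _ (hg.hasNonnegFourier_mul k hk)

theorem comp_neg (hf : IsPositiveMultiplier f) : IsPositiveMultiplier fun t ↦ f (-t) where
  measurable := hf.measurable.comp measurable_neg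
  im_zero := by simp [hf.im_zero]
  norm_le t := by simpa using hf.norm_le (-t)
  hasNonnegFourier_mul k hk := by simpa using (hf.hasNonnegFourier_mul _ hk.comp_neg).comp_neg

theorem of_tendsto {f : ℕ → ℝ → ℂ} (hf : ∀ n, IsPositiveMultiplier (f n))
    (hlim : ∀ t, Tendsto (fun n ↦ f n t) atTop (𝓝 (g t))) : IsPositiveMultiplier g := by
  have hre : Tendsto (fun n ↦ (f n 0).re) atTop (𝓝 (g 0).re) :=
    (Complex.continuous_re.tendsto _).comp (hlim 0)
  have him : Tendsto (fun n ↦ (f n 0).im) atTop (𝓝 (g 0).im) :=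
    (Complex.continuous_im.tendsto _).comp (hlim 0)
  simp_rw [(hf _).im_zero] at him
  refine ⟨measurable_of_tendsto_metrizable (fun n ↦ (hf n).measurable) (tendsto_pi_nhds.2 hlim),
    tendsto_nhds_unique him tendsto_const_nhds,
    fun t ↦ le_of_tendsto_of_tendsto (hlim t).norm hre (.of_forall fun n ↦ (hf n).norm_le t),
    fun k hk ↦ ?_⟩
  obtain ⟨C, hC⟩ := hre.bddAbove_range
  refine HasNonnegFourier.of_tendsto (hk.integrable.norm.const_mul C)
    (fun n ↦ (hf n).hasNonnegFourier_mul k hk) (fun n t ↦ ?_) (fun t ↦ (hlim t).mul_const _)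
  rw [norm_mul]
  exact mul_le_mul_of_nonneg_right (((hf n).norm_le t).trans (hC ⟨n, rfl⟩)) (norm_nonneg _)

theorem pow (hf : IsPositiveMultiplier f) (n : ℕ) : IsPositiveMultiplier fun t ↦ f t ^ n := by
  induction n with
  | zero => simpa using const zero_le_one
  | succ n ih =>
    simp_rw [pow_succ]
    exact ih.mul hf

theorem sum {ι : Type*} {f : ι → ℝ → ℂ} (s : Finset ι) (hf : ∀ i, IsPositiveMultiplier (f i)) :
    IsPositiveMultiplier fun t ↦ ∑ i ∈ s, f i t := by
  classical
  induction s using Finset.induction_on with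
  | empty => simpa using const le_rfl
  | insert i s hi ih =>
    simp_rw [Finset.sum_insert hi]
    exact (hf i).add ih

theorem pow_div_factorial (hf : IsPositiveMultiplier f) (n : ℕ) :
    IsPositiveMultiplier fun t ↦ f t ^ n / (n.factorial : ℂ) := by
  simp_rw [div_eq_inv_mul]
  simpa using (const (c := (n.factorial : ℝ)⁻¹) (by positivity)).mul (hf.pow n)

theorem tendsto_sum_pow_div_factorial (z : ℂ) :
    Tendsto (fun N ↦ ∑ n ∈ Finset.range N, z ^ n / (n.factorial : ℂ)) atTop
      (𝓝 (Complex.exp z)) := by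
  rw [Complex.exp_eq_exp_ℂ]
  exact (NormedSpace.expSeries_div_hasSum_exp z).tendsto_sum_nat

theorem cexp (hf : IsPositiveMultiplier f) : IsPositiveMultiplier fun t ↦ Complex.exp (f t) :=
  of_tendsto (fun N ↦ sum (Finset.range N) hf.pow_div_factorial)
    fun t ↦ tendsto_sum_pow_div_factorial (f t)

theorem cexp_sub_self (hf : IsPositiveMultiplier f) :
    IsPositiveMultiplier fun t ↦ Complex.exp (f t) - f t := by
  refine of_tendsto (fun N ↦ sum ((Finset.range (N + 2)).erase 1) hf.pow_div_factorial)
    fun t ↦ ?_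
  refine (((tendsto_add_atTop_iff_nat 2).2
    (tendsto_sum_pow_div_factorial (f t))).sub_const (f t)).congr fun N ↦ ?_
  rw [← Finset.add_sum_erase (Finset.range (N + 2)) _ (a := 1) (by simp)]
  simp

theorem densityCharFun {p : ℝ → ℝ} (hp : Integrable p) (hp₀ : ∀ y, 0 ≤ p y) :
    IsPositiveMultiplier (densityCharFun p) where
  measurable := (continuous_densityCharFun hp).measurable
  im_zero := by rw [densityCharFun_zero, Complex.ofReal_im]
  norm_le t := by
    rw [densityCharFun_zero, Complex.ofReal_re]
    simpa only [abs_of_nonneg (hp₀ _)] using norm_densityCharFun_le p t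
  hasNonnegFourier_mul k hk := by
    refine ⟨integrable_densityCharFun_mul hp hk.integrable, fun x ↦ ?_⟩
    rw [fourierInt_densityCharFun_mul hp hk.integrable, ← RCLike.re_eq_complex_re,
      ← integral_re (integrable_mul_fourierInt_sub hp hk.integrable x)]
    refine integral_nonneg fun y ↦ ?_
    rw [Pi.zero_apply, RCLike.re_eq_complex_re, Complex.re_ofReal_mul]
    exact mul_nonneg (hp₀ y) (hk.nonneg _)

theorem hasNonnegFourier (hf : IsPositiveMultiplier f) (hint : Integrable f) :
    HasNonnegFourier f := by
  refine HasNonnegFourier.of_tendsto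
    (k := fun n t ↦ f t * Complex.exp (-((1 / ((n : ℝ) + 1) : ℝ) : ℂ) * (t : ℂ) ^ 2))
    hint.norm (fun n ↦ hf.hasNonnegFourier_mul _ (.gaussian (by positivity))) (fun n t ↦ ?_)
    fun t ↦ ?_
  · rw [norm_mul]
    refine mul_le_of_le_one_right (norm_nonneg _) ?_
    rw [Complex.norm_exp, Real.exp_le_one_iff, ← Complex.ofReal_neg, ← Complex.ofReal_pow,
      Complex.re_ofReal_mul, Complex.ofReal_re, neg_mul, neg_nonpos]
    positivity
  · have hzero : Tendsto (fun n : ℕ ↦ ((1 / ((n : ℝ) + 1) : ℝ) : ℂ)) atTop (𝓝 ((0 : ℝ) : ℂ)) :=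
      (Complex.continuous_ofReal.tendsto _).comp tendsto_one_div_add_atTop_nhds_zero_nat
    simpa using ((Complex.continuous_exp.tendsto _).comp
      (hzero.neg.mul_const ((t : ℂ) ^ 2))).const_mul (f t)

end IsPositiveMultiplier

end FourierIntegral

/-! ### The Gamma and Lévy integrals over a half-line -/

section GammaLevyIntegral

open Set Topology ProbabilityTheory

theorem norm_cexp_neg_mul_ofReal (r : ℂ) (y : ℝ) :
    ‖Complex.exp (-(r * y))‖ = Real.exp (-(r.re * y)) := by
  simp [Complex.norm_exp]

theorem integrableOn_rpow_mul_exp_neg_mul {a b : ℝ} (ha : -1 < a) (hb : 0 < b) :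
    IntegrableOn (fun y : ℝ ↦ y ^ a * Real.exp (-(b * y))) (Ioi 0) := by
  simpa [neg_mul] using integrableOn_rpow_mul_exp_neg_mul_rpow ha one_pos hb

theorem integral_rpow_mul_cexp_neg_mul_ofReal {a s : ℝ} (ha : 0 < a) (hs : 0 < s) :
    ∫ y in Ioi (0 : ℝ), ((y ^ (a - 1) : ℝ) : ℂ) * Complex.exp (-(s * y)) =
      Real.Gamma a * (s : ℂ) ^ (-(a : ℂ)) := by
  have harg : (s : ℂ).arg ≠ Real.pi := by
    simpa [Complex.arg_ofReal_of_nonneg hs.le] using Real.pi_ne_zero.symm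
  rw [Complex.cpow_neg, ← Complex.inv_cpow _ _ harg, ← one_div, mul_comm, ← Complex.Gamma_ofReal,
    ← Complex.integral_cpow_mul_exp_neg_mul_Ioi (by simpa using ha) hs]
  refine setIntegral_congr_fun measurableSet_Ioi fun y hy ↦ ?_
  simp [Complex.ofReal_cpow (le_of_lt hy)]

theorem integral_rpow_mul_cexp_neg_mul {a : ℝ} (ha : 0 < a) {r : ℂ} (hr : 0 < r.re) :
    ∫ y in Ioi (0 : ℝ), ((y ^ (a - 1) : ℝ) : ℂ) * Complex.exp (-(r * y)) =
      Real.Gamma a * r ^ (-(a : ℂ)) := by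
  -- Both sides are holomorphic on the right half-plane and agree on the positive reals.
  let μ : Measure ℝ := (volume.restrict (Ioi 0)).withDensity fun y ↦ ENNReal.ofReal (y ^ (a - 1))
  have hμ (z : ℂ) : complexMGF id μ (-z) =
      ∫ y in Ioi (0 : ℝ), ((y ^ (a - 1) : ℝ) : ℂ) * Complex.exp (-(z * y)) := by
    rw [complexMGF, integral_withDensity_eq_integral_toReal_smul (by fun_prop) (by simp)]
    refine setIntegral_congr_fun measurableSet_Ioi fun y hy ↦ ?_
    simp [ENNReal.toReal_ofReal (Real.rpow_nonneg (le_of_lt hy) _), Complex.real_smul]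
  have hmem {z : ℂ} (hz : 0 < z.re) : (-z).re ∈ interior (integrableExpSet id μ) := by
    refine mem_interior.2 ⟨Iio 0, fun b hb ↦ ?_, isOpen_Iio, by simpa using hz⟩
    rw [integrableExpSet, mem_ofPred_eq, integrable_withDensity_iff_integrable_smul₀'
      (by fun_prop) (by simp)]
    refine (integrableOn_rpow_mul_exp_neg_mul (by linarith : -1 < a - 1)
      (neg_pos.2 hb)).congr_fun (fun y hy ↦ ?_) measurableSet_Ioi
    simp [ENNReal.toReal_ofReal (Real.rpow_nonneg (le_of_lt hy) _)]
  have hopen : IsOpen {z : ℂ | 0 < z.re} := isOpen_lt continuous_const Complex.continuous_re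
  have hleft : DifferentiableOn ℂ (fun z ↦ complexMGF id μ (-z)) {z | 0 < z.re} :=
    differentiableOn_complexMGF.comp (differentiableOn_neg _) fun _ ↦ hmem
  have hright : DifferentiableOn ℂ (fun z : ℂ ↦ Real.Gamma a * z ^ (-(a : ℂ))) {z | 0 < z.re} :=
    fun z hz ↦ ((differentiableAt_id.cpow_const (Or.inl hz)).const_mul _).differentiableWithinAt
  have hreal : ∃ᶠ z in 𝓝[≠] (1 : ℂ), complexMGF id μ (-z) = Real.Gamma a * z ^ (-(a : ℂ)) := by
    have hofReal : Tendsto (fun s : ℝ ↦ (s : ℂ)) (𝓝[≠] 1) (𝓝[≠] 1) := by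
      simpa using Complex.continuous_ofReal.continuousWithinAt.tendsto_nhdsWithin
        (t := {(1 : ℂ)}ᶜ) (x := 1) (s := {(1 : ℝ)}ᶜ) fun s hs ↦ by simpa using hs
    refine hofReal.frequently (Eventually.frequently ?_)
    filter_upwards [nhdsWithin_le_nhds (lt_mem_nhds one_pos)] with s hs
    rw [hμ, integral_rpow_mul_cexp_neg_mul_ofReal ha hs]
  rw [← hμ]
  exact (hleft.analyticOnNhd hopen).eqOn_of_preconnected_of_frequently_eq
    (hright.analyticOnNhd hopen) (convex_halfSpace_re_gt 0).isPreconnected (by simp) hreal hr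

theorem integral_one_sub_mul_deriv_deriv {f f' f'' : ℂ → ℂ} {s r : ℂ}
    (hf : ∀ z ∈ segment ℝ s r, HasDerivAt f (f' z) z)
    (hf' : ∀ z ∈ segment ℝ s r, HasDerivAt f' (f'' z) z)
    (hf'' : ContinuousOn f'' (segment ℝ s r)) :
    (r - s) ^ 2 * ∫ u in (0 : ℝ)..1, (1 - u : ℂ) * f'' (s + u * (r - s)) =
      f r - f s - f' s * (r - s) := by
  have hmem {u : ℝ} (hu : u ∈ uIcc (0 : ℝ) 1) : s + u * (r - s) ∈ segment ℝ s r := by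
    rw [segment_eq_image']
    exact ⟨u, by simpa using hu, by simp⟩
  have hline (u : ℝ) : HasDerivAt (fun u : ℝ ↦ s + u * (r - s)) (r - s) u := by
    simpa using ((hasDerivAt_id u).ofReal_comp.mul_const (r - s)).const_add s
  have hderiv (u : ℝ) (hu : u ∈ uIcc (0 : ℝ) 1) :
      HasDerivAt (fun u : ℝ ↦ (1 - u : ℂ) * (f' (s + u * (r - s)) * (r - s)) + f (s + u * (r - s)))
        ((r - s) ^ 2 * ((1 - u : ℂ) * f'' (s + u * (r - s)))) u := by
    have h₀ := (hf _ (hmem hu)).comp u (hline u)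
    have h₁ := ((hf' _ (hmem hu)).comp u (hline u)).mul_const (r - s)
    exact (((hasDerivAt_id u).ofReal_comp.const_sub 1).fun_mul h₁ |>.fun_add h₀).congr_deriv
      (by simp; ring)
  have hcont : ContinuousOn (fun u : ℝ ↦ (r - s) ^ 2 * ((1 - u : ℂ) * f'' (s + u * (r - s))))
      (uIcc (0 : ℝ) 1) :=
    .mul (by fun_prop) (.mul (by fun_prop) (hf''.comp (by fun_prop) fun u ↦ hmem))
  rw [← intervalIntegral.integral_const_mul,
    intervalIntegral.integral_eq_sub_of_hasDerivAt hderiv hcont.intervalIntegrable]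
  simp only [Complex.ofReal_one, sub_self, one_mul, add_sub_cancel, zero_mul, zero_add,
    Complex.ofReal_zero, sub_zero, add_zero]
  ring

section LevyIntegral

variable {α : ℝ} {s r : ℂ}

theorem min_re_le_re_segment {u : ℝ} (hu : u ∈ Icc (0 : ℝ) 1) :
    min s.re r.re ≤ (s + u * (r - s)).re := by
  have hre : (s + u * (r - s)).re = (1 - u) * s.re + u * r.re := by
    simp only [Complex.add_re, Complex.mul_re, Complex.ofReal_re, Complex.sub_re,
      Complex.ofReal_im, Complex.sub_im, zero_mul, sub_zero]
    ring
  rw [hre]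
  nlinarith [mul_le_mul_of_nonneg_left (min_le_left s.re r.re) (sub_nonneg.2 hu.2),
    mul_le_mul_of_nonneg_left (min_le_right s.re r.re) hu.1]

theorem rpow_mul_compensated_cexp {y : ℝ} (hy : 0 < y) :
    ((y ^ (-1 - α) : ℝ) : ℂ) * (Complex.exp (-(r * y)) - Complex.exp (-(s * y)) +
        (r - s) * y * Complex.exp (-(s * y))) =
      ∫ u in Ioc (0 : ℝ) 1, (r - s) ^ 2 * ((1 - u : ℂ) *
        (((y ^ (1 - α) : ℝ) : ℂ) * Complex.exp (-((s + u * (r - s)) * y)))) := by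
  have hlin (z : ℂ) : HasDerivAt (fun z : ℂ ↦ -(z * y)) (-y) z := by
    simpa using ((hasDerivAt_id z).mul_const (y : ℂ)).fun_neg
  have htaylor := integral_one_sub_mul_deriv_deriv (s := s) (r := r)
    (fun z _ ↦ (hlin z).cexp) (fun z _ ↦ (hlin z).cexp.mul_const (-(y : ℂ))) (by fun_prop)
  have hpow : y ^ (1 - α) = y ^ (-1 - α) * y ^ 2 := by
    rw [← Real.rpow_natCast y 2, ← Real.rpow_add hy]
    ring_nf
  calc _ = ((y ^ (-1 - α) : ℝ) : ℂ) * (Complex.exp (-(r * y)) - Complex.exp (-(s * y)) -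
        Complex.exp (-(s * y)) * -y * (r - s)) := by ring
    _ = _ := by
      rw [← htaylor, intervalIntegral.integral_of_le zero_le_one, ← integral_const_mul,
        ← integral_const_mul]
      congr with u
      rw [hpow]
      push_cast
      ring

theorem integrable_levy_taylor_kernel (hα : α < 2) (hs : 0 < s.re) (hr : 0 < r.re) :
    Integrable (Function.uncurry fun y u : ℝ ↦ (r - s) ^ 2 * ((1 - u : ℂ) *
        (((y ^ (1 - α) : ℝ) : ℂ) * Complex.exp (-((s + u * (r - s)) * y)))))
      ((volume.restrict (Ioi 0)).prod (volume.restrict (Ioc 0 1))) := by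
  have hbound := (integrableOn_rpow_mul_exp_neg_mul (by linarith : -1 < 1 - α)
    (lt_min hs hr)).mul_prod (integrable_const (μ := volume.restrict (Ioc (0 : ℝ) 1))
      (‖r - s‖ ^ 2))
  refine hbound.mono' (by simp only [Function.uncurry_def]; fun_prop) ?_
  rw [Measure.prod_restrict]
  filter_upwards [ae_restrict_mem (measurableSet_Ioi.prod measurableSet_Ioc)]
  rintro ⟨y, u⟩ ⟨hy : 0 < y, hu : 0 < u ∧ u ≤ 1⟩
  have hu₁ : ‖(1 - u : ℂ)‖ ≤ 1 := by
    rw [← Complex.ofReal_one, ← Complex.ofReal_sub, Complex.norm_real, Real.norm_eq_abs]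
    exact abs_le.2 ⟨by linarith, by linarith⟩
  have hexp : Real.exp (-((s + u * (r - s)).re * y)) ≤ Real.exp (-(min s.re r.re * y)) :=
    Real.exp_le_exp.2 (neg_le_neg (mul_le_mul_of_nonneg_right
      (min_re_le_re_segment ⟨hu.1.le, hu.2⟩) hy.le))
  simp only [Function.uncurry_apply_pair]
  rw [norm_mul, norm_mul, norm_mul, norm_cexp_neg_mul_ofReal, norm_pow, Complex.norm_real,
    Real.norm_of_nonneg (Real.rpow_nonneg hy.le _), mul_comm]
  refine mul_le_mul_of_nonneg_right ?_ (by positivity)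
  exact (mul_le_of_le_one_left (by positivity) hu₁).trans (by gcongr)

theorem integrableOn_levy (hα : α < 2) (hs : 0 < s.re) (hr : 0 < r.re) :
    IntegrableOn (fun y : ℝ ↦ ((y ^ (-1 - α) : ℝ) : ℂ) * (Complex.exp (-(r * y)) -
      Complex.exp (-(s * y)) + (r - s) * y * Complex.exp (-(s * y)))) (Ioi 0) :=
  (integrable_levy_taylor_kernel hα hs hr).integral_prod_left.congr
    (ae_restrict_of_forall_mem measurableSet_Ioi fun _ hy ↦ (rpow_mul_compensated_cexp hy).symm)

theorem integral_one_sub_mul_cpow (hs : 0 < s.re) (hr : 0 < r.re) (c : ℂ) :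
    (r - s) ^ 2 * ∫ u in (0 : ℝ)..1, (1 - u : ℂ) *
        (c * ((c - 1) * (s + u * (r - s)) ^ (c - 2))) =
      r ^ c - s ^ c - c * s ^ (c - 1) * (r - s) := by
  have hslit {z : ℂ} (hz : z ∈ segment ℝ s r) : z ∈ Complex.slitPlane :=
    Or.inl ((convex_halfSpace_re_gt 0).segment_subset hs hr hz)
  have hderiv (c : ℂ) {z : ℂ} (hz : z ∈ segment ℝ s r) :
      HasDerivAt (fun z ↦ z ^ c) (c * z ^ (c - 1)) z := by
    simpa using (hasDerivAt_id z).cpow_const (c := c) (hslit hz)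
  refine integral_one_sub_mul_deriv_deriv (f'' := fun z ↦ c * ((c - 1) * z ^ (c - 2)))
    (fun z ↦ hderiv c) (fun z hz ↦ ((hderiv (c - 1) hz).const_mul c).congr_deriv (by ring_nf)) ?_
  exact .mul (by fun_prop) (.mul (by fun_prop) (.cpow_const (by fun_prop) fun _ ↦ hslit))

theorem integral_levy (h0 : 0 < α) (h2 : α < 2) (h1 : α ≠ 1) (hs : 0 < s.re) (hr : 0 < r.re) :
    ∫ y in Ioi (0 : ℝ), ((y ^ (-1 - α) : ℝ) : ℂ) * (Complex.exp (-(r * y)) -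
        Complex.exp (-(s * y)) + (r - s) * y * Complex.exp (-(s * y))) =
      (Real.Gamma (2 - α) / (α * (α - 1)) : ℝ) *
        (r ^ (α : ℂ) - s ^ (α : ℂ) - α * s ^ ((α : ℂ) - 1) * (r - s)) := by
  have hα : (α : ℂ) ≠ 0 := by exact_mod_cast h0.ne'
  have hα₁ : (α : ℂ) - 1 ≠ 0 := sub_ne_zero.2 (by exact_mod_cast h1)
  have hinner (u : ℝ) (hu : u ∈ Ioc (0 : ℝ) 1) :
      ∫ y in Ioi (0 : ℝ), (r - s) ^ 2 * ((1 - u : ℂ) *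
        (((y ^ (1 - α) : ℝ) : ℂ) * Complex.exp (-((s + u * (r - s)) * y)))) =
      (Real.Gamma (2 - α) / (α * (α - 1)) : ℝ) * ((r - s) ^ 2 * ((1 - u : ℂ) *
        (α * ((α - 1) * (s + u * (r - s)) ^ ((α : ℂ) - 2))))) := by
    have hgamma := integral_rpow_mul_cexp_neg_mul (by linarith : 0 < 2 - α)
      ((lt_min hs hr).trans_le (min_re_le_re_segment ⟨hu.1.le, hu.2⟩))
    rw [show 2 - α - 1 = 1 - α by ring] at hgamma
    rw [integral_const_mul, integral_const_mul, hgamma]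
    push_cast
    rw [neg_sub]
    field_simp
  rw [setIntegral_congr_fun measurableSet_Ioi fun y hy ↦ rpow_mul_compensated_cexp hy,
    integral_integral_swap (integrable_levy_taylor_kernel h2 hs hr),
    setIntegral_congr_fun measurableSet_Ioc hinner, integral_const_mul, integral_const_mul,
    ← intervalIntegral.integral_of_le zero_le_one, integral_one_sub_mul_cpow hs hr]

end LevyIntegral

end GammaLevyIntegral

/-! ### Lévy exponents of one-sided jump measures -/

section LevyExponent

open Set Topology

theorem densityCharFun_indicator {s : Set ℝ} (hs : MeasurableSet s) (p : ℝ → ℝ) (t : ℝ) :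
    densityCharFun (s.indicator p) t =
      ∫ y in s, Complex.exp (Complex.I * (y : ℂ) * (t : ℂ)) * (p y : ℂ) := by
  rw [densityCharFun_eq_integral, ← integral_indicator hs]
  congr with y
  by_cases hy : y ∈ s <;> simp [hy]

theorem norm_cexp_I_mul_ofReal_mul (y t : ℝ) :
    ‖Complex.exp (Complex.I * (y : ℂ) * (t : ℂ))‖ = 1 := by
  simp [Complex.norm_exp]

theorem integrableOn_cexp_mul {s : Set ℝ} {p : ℝ → ℝ} (hp : IntegrableOn p s) (t : ℝ) :
    IntegrableOn (fun y : ℝ ↦ Complex.exp (Complex.I * (y : ℂ) * (t : ℂ)) * (p y : ℂ)) s :=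
  hp.ofReal.bdd_mul (c := 1) (by fun_prop)
    (.of_forall fun y ↦ (norm_cexp_I_mul_ofReal_mul y t).le)

/-- Without the jumps below `δ` this is the exponential of a characteristic function, up to a
constant and a drift; then let `δ → 0`. -/
theorem isPositiveMultiplier_cexp_compensated {w h : ℝ → ℝ} (hw₀ : ∀ y, 0 < y → 0 ≤ w y)
    (hw : ∀ δ, 0 < δ → IntegrableOn w (Ioi δ))
    (hhw : ∀ δ, 0 < δ → IntegrableOn (fun y ↦ h y * w y) (Ioi δ))
    (hint : ∀ t : ℝ, IntegrableOn (fun y : ℝ ↦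
      (Complex.exp (Complex.I * (y : ℂ) * (t : ℂ)) - 1 - Complex.I * h y * t) * w y) (Ioi 0)) :
    IsPositiveMultiplier fun t : ℝ ↦ Complex.exp (∫ y in Ioi (0 : ℝ),
      (Complex.exp (Complex.I * (y : ℂ) * (t : ℂ)) - 1 - Complex.I * h y * t) * w y) := by
  let δ : ℕ → ℝ := fun n ↦ 1 / ((n : ℝ) + 1)
  have hδ (n : ℕ) : 0 < δ n := Nat.one_div_pos_of_nat
  have htrunc (n : ℕ) : IsPositiveMultiplier fun t : ℝ ↦ Complex.exp (∫ y in Ioi (δ n),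
      (Complex.exp (Complex.I * (y : ℂ) * (t : ℂ)) - 1 - Complex.I * h y * t) * w y) := by
    have hwn : IntegrableOn (fun y ↦ (w y : ℂ)) (Ioi (δ n)) := (hw _ (hδ n)).ofReal
    have hhwn : IntegrableOn (fun y ↦ ((h y * w y : ℝ) : ℂ)) (Ioi (δ n)) :=
      (hhw _ (hδ n)).ofReal
    have hjumps : IsPositiveMultiplier (densityCharFun ((Ioi (δ n)).indicator w)) :=
      .densityCharFun ((hw _ (hδ n)).integrable_indicator measurableSet_Ioi)
        (indicator_nonneg fun y hy ↦ hw₀ y ((hδ n).trans hy))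
    convert (hjumps.cexp.mul (.const (Real.exp_pos (-∫ y in Ioi (δ n), w y)).le)).mul
      (.cexp_I_mul (-∫ y in Ioi (δ n), h y * w y)) using 2 with t
    rw [Complex.ofReal_exp, ← Complex.exp_add, ← Complex.exp_add,
      densityCharFun_indicator measurableSet_Ioi, Complex.ofReal_neg, Complex.ofReal_neg,
      ← integral_complex_ofReal, ← integral_complex_ofReal, mul_neg, neg_mul,
      ← integral_const_mul, ← integral_mul_const, ← sub_eq_add_neg, ← sub_eq_add_neg,
      ← integral_sub (integrableOn_cexp_mul (hw _ (hδ n)) t) hwn,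
      ← integral_sub ((integrableOn_cexp_mul (hw _ (hδ n)) t).fun_sub hwn)
        ((hhwn.const_mul _).mul_const _)]
    congr with y
    simp only [Complex.ofReal_mul]
    ring
  refine .of_tendsto htrunc fun t ↦ (Complex.continuous_exp.tendsto _).comp ?_
  have hcover := (aecover_Ioi_of_Ioi (μ := volume)
    tendsto_one_div_add_atTop_nhds_zero_nat).integral_tendsto_of_countably_generated (hint t)
  refine hcover.congr fun n ↦ ?_
  rw [Measure.restrict_restrict_of_subset (Ioi_subset_Ioi (hδ n).le)]

section Stable

variable {α A : ℝ} {g : ℝ → ℝ}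

theorem cexp_neg_sub_I_mul (ρ t y : ℝ) : Complex.exp (-((ρ - Complex.I * t) * y)) =
    Complex.exp (Complex.I * y * t) * Complex.exp (-(ρ * y)) := by
  rw [← Complex.exp_add]
  ring_nf

theorem integrableOn_exp_neg_mul_mul {ρ δ : ℝ} {w : ℝ → ℝ} (hρ : 0 ≤ ρ) (hδ : 0 ≤ δ)
    (hw : IntegrableOn w (Ioi δ)) :
    IntegrableOn (fun y ↦ Real.exp (-(ρ * y)) * w y) (Ioi δ) := by
  refine hw.bdd_mul (c := 1) (by fun_prop) ?_
  filter_upwards [ae_restrict_mem measurableSet_Ioi] with y hy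
  have hy₀ : 0 < y := hδ.trans_lt hy
  rw [Real.norm_of_nonneg (Real.exp_pos _).le, Real.exp_le_one_iff, neg_nonpos]
  positivity

theorem integrableOn_mul_exp_neg_mul_mul {ρ δ : ℝ} {w : ℝ → ℝ} (hρ : 0 < ρ) (hδ : 0 ≤ δ)
    (hw : IntegrableOn w (Ioi δ)) :
    IntegrableOn (fun y ↦ y * (Real.exp (-(ρ * y)) * w y)) (Ioi δ) := by
  simp_rw [← mul_assoc]
  refine hw.bdd_mul (c := ρ⁻¹) (by fun_prop) ?_
  filter_upwards [ae_restrict_mem measurableSet_Ioi] with y hy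
  have hy₀ : 0 < y := hδ.trans_lt hy
  rw [Real.norm_of_nonneg (by positivity), Real.exp_neg, ← div_eq_mul_inv,
    div_le_iff₀ (Real.exp_pos _), inv_mul_eq_div, le_div_iff₀' hρ]
  linarith [Real.add_one_le_exp (ρ * y)]

theorem compensated_tempered_jumps (ρ t y : ℝ) :
    (Complex.exp (Complex.I * y * t) - 1 - Complex.I * y * t) *
        ((Real.exp (-(ρ * y)) * (A * y ^ (-1 - α) - g y) : ℝ) : ℂ) =
      A * (((y ^ (-1 - α) : ℝ) : ℂ) * (Complex.exp (-((ρ - Complex.I * t) * y)) -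
        Complex.exp (-(ρ * y)) + (ρ - Complex.I * t - ρ) * y * Complex.exp (-(ρ * y)))) -
      (Complex.exp (Complex.I * y * t) * ((Real.exp (-(ρ * y)) * g y : ℝ) : ℂ) -
        ((Real.exp (-(ρ * y)) * g y : ℝ) : ℂ) -
        Complex.I * t * ((y * (Real.exp (-(ρ * y)) * g y) : ℝ) : ℂ)) := by
  rw [cexp_neg_sub_I_mul]
  push_cast
  ring

theorem isPositiveMultiplier_tempered (h0 : 0 < α) (h2 : α < 2) (h1 : α ≠ 1)
    (hg : Integrable g) (hgA : ∀ y, 0 < y → g y ≤ A * y ^ (-1 - α)) {ρ : ℝ} (hρ : 0 < ρ) :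
    IsPositiveMultiplier fun t : ℝ ↦ Complex.exp
      ((A * (Real.Gamma (2 - α) / (α * (α - 1))) : ℝ) * (ρ - Complex.I * t) ^ (α : ℂ) -
        densityCharFun ((Ioi 0).indicator fun y ↦ Real.exp (-(ρ * y)) * g y) t) := by
  have hρ' : 0 < (ρ : ℂ).re := by simpa
  have hr (t : ℝ) : 0 < (ρ - Complex.I * t : ℂ).re := by simpa
  have hq : IntegrableOn (fun y ↦ Real.exp (-(ρ * y)) * g y) (Ioi 0) :=
    integrableOn_exp_neg_mul_mul hρ.le le_rfl hg.integrableOn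
  have hqC : IntegrableOn (fun y ↦ ((Real.exp (-(ρ * y)) * g y : ℝ) : ℂ)) (Ioi 0) := hq.ofReal
  have hyq : IntegrableOn (fun y ↦ ((y * (Real.exp (-(ρ * y)) * g y) : ℝ) : ℂ)) (Ioi 0) :=
    (integrableOn_mul_exp_neg_mul_mul hρ le_rfl hg.integrableOn).ofReal
  have hjumps (δ : ℝ) (hδ : 0 < δ) : IntegrableOn (fun y ↦ A * y ^ (-1 - α) - g y) (Ioi δ) :=
    ((integrableOn_Ioi_rpow_of_lt (by linarith) hδ).const_mul A).sub hg.integrableOn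
  have hlevy (t : ℝ) := (integrableOn_levy h2 hρ' (hr t)).const_mul (A : ℂ)
  have hsmall (t : ℝ) := (integrableOn_cexp_mul hq t).fun_sub hqC
  have hdrift (t : ℝ) := hyq.const_mul (Complex.I * t)
  have hLK := isPositiveMultiplier_cexp_compensated (h := fun y ↦ y)
    (w := fun y ↦ Real.exp (-(ρ * y)) * (A * y ^ (-1 - α) - g y))
    (fun y hy ↦ mul_nonneg (Real.exp_pos _).le (sub_nonneg.2 (hgA y hy)))
    (fun δ hδ ↦ integrableOn_exp_neg_mul_mul hρ.le hδ.le (hjumps δ hδ))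
    (fun δ hδ ↦ integrableOn_mul_exp_neg_mul_mul hρ hδ.le (hjumps δ hδ)) fun t ↦ by
      simp_rw [compensated_tempered_jumps]
      exact (hlevy t).sub ((hsmall t).fun_sub (hdrift t))
  let K : ℝ := A * (Real.Gamma (2 - α) / (α * (α - 1)))
  convert (hLK.mul (.const (Real.exp_pos (K * ρ ^ α -
      ∫ y in Ioi 0, Real.exp (-(ρ * y)) * g y)).le)).mul (.cexp_I_mul (-(K * α * ρ ^ (α - 1) +
      ∫ y in Ioi 0, y * (Real.exp (-(ρ * y)) * g y)))) using 2 with t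
  simp_rw [compensated_tempered_jumps]
  rw [Complex.ofReal_exp, ← Complex.exp_add, ← Complex.exp_add,
    integral_sub (hlevy t) ((hsmall t).fun_sub (hdrift t)), integral_sub (hsmall t) (hdrift t),
    integral_sub (integrableOn_cexp_mul hq t) hqC, integral_const_mul, integral_const_mul,
    integral_levy h0 h2 h1 hρ' (hr t), densityCharFun_indicator measurableSet_Ioi,
    integral_complex_ofReal, integral_complex_ofReal]
  simp only [K]
  push_cast [Complex.ofReal_cpow hρ.le]
  ring_nf

theorem isPositiveMultiplier_stable_sub (h0 : 0 < α) (h2 : α < 2) (h1 : α ≠ 1)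
    (hg : Integrable g) (hgA : ∀ y, 0 < y → g y ≤ A * y ^ (-1 - α)) :
    IsPositiveMultiplier fun t : ℝ ↦ Complex.exp
      ((A * (Real.Gamma (2 - α) / (α * (α - 1))) : ℝ) * (-Complex.I * t) ^ (α : ℂ) -
        densityCharFun ((Ioi 0).indicator g) t) := by
  have hρ : Tendsto (fun n : ℕ ↦ 1 / ((n : ℝ) + 1)) atTop (𝓝 0) :=
    tendsto_one_div_add_atTop_nhds_zero_nat
  refine .of_tendsto (fun n : ℕ ↦ isPositiveMultiplier_tempered h0 h2 h1 hg hgA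
    (Nat.one_div_pos_of_nat (n := n))) fun t ↦ ?_
  refine (Complex.continuous_exp.tendsto _).comp (.sub (.const_mul _ ?_) ?_)
  · have hcont : ContinuousAt (fun z : ℂ ↦ z ^ (α : ℂ)) (-Complex.I * t) := by
      obtain rfl | ht := eq_or_ne t 0
      · simpa using Complex.continuousAt_cpow_const_of_re_pos (z := 0) (by simp) (by simpa)
      · exact continuousAt_cpow_const (Or.inr (by simpa using ht))
    refine hcont.tendsto.comp ?_
    simpa using ((Complex.continuous_ofReal.tendsto _).comp hρ).sub_const (Complex.I * t)
  · simp_rw [densityCharFun_indicator measurableSet_Ioi]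
    refine tendsto_integral_of_dominated_convergence (fun y ↦ ‖g y‖) (fun n ↦ ?_)
      hg.norm.integrableOn (fun n ↦ ?_) (.of_forall fun y ↦ ?_)
    · exact (integrableOn_cexp_mul (integrableOn_exp_neg_mul_mul Nat.one_div_pos_of_nat.le
        le_rfl hg.integrableOn) t).aestronglyMeasurable
    · filter_upwards [ae_restrict_mem measurableSet_Ioi] with y (hy : 0 < y)
      rw [norm_mul, norm_cexp_I_mul_ofReal_mul, one_mul, Complex.norm_real, norm_mul,
        Real.norm_of_nonneg (Real.exp_pos _).le]
      refine mul_le_of_le_one_left (norm_nonneg _) (Real.exp_le_one_iff.2 ?_)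
      rw [neg_nonpos]
      positivity
    · refine .const_mul _ ((Complex.continuous_ofReal.tendsto _).comp ?_)
      simpa using ((Real.continuous_exp.tendsto _).comp (hρ.mul_const y).neg).mul_const (g y)

end Stable

end LevyExponent

/-! ### The cumulant as a function of the logarithm -/

section LogCumulant

open Set Topology

theorem norm_mul_sub_mul_le {R : Type*} [SeminormedRing R] (x y x' y' : R) :
    ‖x * y - x' * y'‖ ≤ ‖x - x'‖ * ‖y‖ + ‖x'‖ * ‖y - y'‖ := by
  rw [show x * y - x' * y' = (x - x') * y + x' * (y - y') by noncomm_ring]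
  exact (norm_add_le _ _).trans (add_le_add (norm_mul_le _ _) (norm_mul_le _ _))

theorem norm_cexp_sub_cexp_le {z w : ℂ} {W : ℝ} (hz : ‖Complex.exp z‖ ≤ W)
    (hw : ‖Complex.exp w‖ ≤ W) : ‖Complex.exp z - Complex.exp w‖ ≤ W * ‖z - w‖ := by
  have hW : 0 < W := (norm_pos_iff.2 (Complex.exp_ne_zero z)).trans_le hz
  have norm_exp_le_iff : ∀ x : ℂ, ‖Complex.exp x‖ ≤ W ↔ x.re ≤ Real.log W := fun x ↦ by
    rw [Complex.norm_exp, Real.le_log_iff_exp_le hW]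
  exact (convex_halfSpace_re_le (Real.log W)).norm_image_sub_le_of_norm_hasDerivWithin_le
    (fun x _ ↦ (Complex.hasDerivAt_exp x).hasDerivWithinAt)
    (fun x hx ↦ (norm_exp_le_iff x).2 hx) ((norm_exp_le_iff w).1 hw) ((norm_exp_le_iff z).1 hz)

theorem sinc_eq_integral_cos (u : ℝ) : Real.sinc u = ∫ v in (0 : ℝ)..1, Real.cos (u * v) := by
  rcases eq_or_ne u 0 with rfl | hu
  · simp
  · rw [Real.sinc_of_ne_zero hu, intervalIntegral.integral_comp_mul_left _ hu, integral_cos]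
    simp only [mul_one, mul_zero, Real.sin_zero, sub_zero, smul_eq_mul]
    field_simp

theorem lipschitzWith_sinc : LipschitzWith 1 Real.sinc := by
  refine LipschitzWith.of_dist_le_mul fun u v ↦ ?_
  have hi : ∀ u : ℝ, IntervalIntegrable (fun w ↦ Real.cos (u * w)) volume 0 1 := fun u ↦
    Continuous.intervalIntegrable (by fun_prop) _ _
  rw [dist_eq_norm, sinc_eq_integral_cos, sinc_eq_integral_cos,
    ← intervalIntegral.integral_sub (hi u) (hi v)]
  refine (intervalIntegral.norm_integral_le_of_norm_le_const (C := |u - v|) fun w hw ↦ ?_).trans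
    (by simp [Real.dist_eq])
  rw [uIoc_of_le zero_le_one] at hw
  calc ‖Real.cos (u * w) - Real.cos (v * w)‖
    _ ≤ |u * w - v * w| := by
      simpa [Real.dist_eq] using Real.lipschitzWith_cos.dist_le_mul (u * w) (v * w)
    _ = |u - v| * w := by rw [← sub_mul, abs_mul, abs_of_pos hw.1]
    _ ≤ |u - v| := mul_le_of_le_one_right (abs_nonneg _) hw.2

theorem half_le_sinc {u : ℝ} (hu : |u| ≤ Real.pi / 2) : 1 / 2 ≤ Real.sinc u := by
  wlog h0 : 0 ≤ u generalizing u
  · rw [← Real.sinc_neg]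
    exact this (by rwa [abs_neg]) (by linarith)
  rcases h0.eq_or_lt with rfl | hpos
  · norm_num
  · rw [Real.sinc_of_ne_zero hpos.ne', le_div_iff₀ hpos]
    have half_le : 1 / 2 ≤ 2 / Real.pi := by
      rw [div_le_div_iff₀ two_pos Real.pi_pos]
      linarith [Real.pi_le_four]
    exact (mul_le_mul_of_nonneg_right half_le h0).trans
      (Real.mul_le_sin h0 (by rwa [abs_of_nonneg h0] at hu))

/-- The continuous extension to `a = 1` of `a ↦ -(a - 1) * tan (π * a / 2)`; it equals `2 / π` at
`a = 1`. -/
noncomputable def tanCoeff (a : ℝ) : ℝ :=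
  2 / Real.pi * (Real.cos (Real.pi * (a - 1) / 2) / Real.sinc (Real.pi * (a - 1) / 2))

theorem tanCoeff_one : tanCoeff 1 = 2 / Real.pi := by simp [tanCoeff]

theorem tanCoeff_of_ne_one {a : ℝ} (h : a ≠ 1) :
    tanCoeff a = -((a - 1) * Real.tan (Real.pi * a / 2)) := by
  have ha : a - 1 ≠ 0 := sub_ne_zero.2 h
  have hu : Real.pi * (a - 1) / 2 ≠ 0 := by positivity
  rw [tanCoeff, Real.sinc_of_ne_zero hu, Real.tan_eq_sin_div_cos,
    show Real.pi * a / 2 = Real.pi * (a - 1) / 2 + Real.pi / 2 by ring,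
    Real.sin_add_pi_div_two, Real.cos_add_pi_div_two]
  rcases eq_or_ne (Real.sin (Real.pi * (a - 1) / 2)) 0 with hs | hs
  · rw [hs]; simp
  · field_simp

theorem half_le_sinc_pi_mul {a : ℝ} (ha : a ∈ Icc (0 : ℝ) 2) :
    1 / 2 ≤ Real.sinc (Real.pi * (a - 1) / 2) :=
  half_le_sinc (abs_le.2 ⟨by nlinarith [ha.1, Real.pi_pos], by nlinarith [ha.2, Real.pi_pos]⟩)

theorem abs_tanCoeff_le {a : ℝ} (ha : a ∈ Icc (0 : ℝ) 2) : |tanCoeff a| ≤ 2 := by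
  have hs := half_le_sinc_pi_mul ha
  have hquot : |Real.cos (Real.pi * (a - 1) / 2)| / Real.sinc (Real.pi * (a - 1) / 2) ≤ 2 := by
    rw [div_le_iff₀ (by linarith)]
    linarith [Real.abs_cos_le_one (Real.pi * (a - 1) / 2)]
  rw [tanCoeff, abs_mul, abs_div, abs_div, abs_of_pos Real.pi_pos, abs_two,
    abs_of_pos (show 0 < Real.sinc (Real.pi * (a - 1) / 2) by linarith)]
  calc 2 / Real.pi * (|Real.cos (Real.pi * (a - 1) / 2)| / Real.sinc (Real.pi * (a - 1) / 2))
    _ ≤ 1 * 2 := by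
      gcongr
      exact div_le_one_of_le₀ (by linarith [Real.pi_gt_three]) Real.pi_pos.le
    _ = 2 := one_mul 2

theorem abs_tanCoeff_sub_le {a b : ℝ} (ha : a ∈ Icc (0 : ℝ) 2) (hb : b ∈ Icc (0 : ℝ) 2) :
    |tanCoeff a - tanCoeff b| ≤ 8 * |a - b| := by
  have hs := half_le_sinc_pi_mul ha
  have ht := half_le_sinc_pi_mul hb
  have harg : |Real.pi * (a - 1) / 2 - Real.pi * (b - 1) / 2| = Real.pi / 2 * |a - b| := by
    rw [show Real.pi * (a - 1) / 2 - Real.pi * (b - 1) / 2 = Real.pi / 2 * (a - b) by ring,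
      abs_mul, abs_of_pos (by positivity)]
  have hsinc := lipschitzWith_sinc.dist_le_mul (Real.pi * (a - 1) / 2) (Real.pi * (b - 1) / 2)
  have hcos := Real.lipschitzWith_cos.dist_le_mul (Real.pi * (a - 1) / 2) (Real.pi * (b - 1) / 2)
  rw [Real.dist_eq, Real.dist_eq, NNReal.coe_one, one_mul, harg] at hsinc hcos
  have ht1 := Real.sinc_le_one (Real.pi * (b - 1) / 2)
  have hd1 := Real.abs_cos_le_one (Real.pi * (b - 1) / 2)
  unfold tanCoeff
  set s := Real.sinc (Real.pi * (a - 1) / 2)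
  set t := Real.sinc (Real.pi * (b - 1) / 2)
  set c := Real.cos (Real.pi * (a - 1) / 2)
  set d := Real.cos (Real.pi * (b - 1) / 2)
  have hnum : |c * t - d * s| ≤ Real.pi * |a - b| := by
    have hsplit := norm_mul_sub_mul_le c t d s
    simp only [Real.norm_eq_abs] at hsplit
    rw [abs_of_pos (show 0 < t by linarith), abs_sub_comm t s] at hsplit
    nlinarith [abs_nonneg (c - d), abs_nonneg (s - t)]
  have hquot : |c / s - d / t| ≤ 4 * (Real.pi * |a - b|) := by
    rw [div_sub_div _ _ (by linarith) (by linarith), abs_div,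
      abs_of_pos (show 0 < s * t by positivity), div_le_iff₀ (by positivity), mul_comm s d]
    have hst : 1 / 4 ≤ s * t := by nlinarith
    nlinarith [show 0 ≤ Real.pi * |a - b| by positivity]
  rw [← mul_sub, abs_mul, abs_of_pos (show 0 < 2 / Real.pi by positivity)]
  calc 2 / Real.pi * |c / s - d / t| ≤ 2 / Real.pi * (4 * (Real.pi * |a - b|)) := by gcongr
    _ = 8 * |a - b| := by field_simp; ring

theorem abs_mul_tanCoeff_sub_le {a a' b b' : ℝ} (ha : a ∈ Icc (0 : ℝ) 2)
    (ha' : a' ∈ Icc (0 : ℝ) 2) (hb' : |b'| ≤ 1) :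
    |b * tanCoeff a - b' * tanCoeff a'| ≤ 2 * |b - b'| + 8 * |a - a'| := by
  calc |b * tanCoeff a - b' * tanCoeff a'|
    _ ≤ |b - b'| * |tanCoeff a| + |b'| * |tanCoeff a - tanCoeff a'| :=
      norm_mul_sub_mul_le b (tanCoeff a) b' (tanCoeff a')
    _ ≤ |b - b'| * 2 + 1 * (8 * |a - a'|) := by
      gcongr
      · exact abs_tanCoeff_le ha
      · exact abs_tanCoeff_sub_le ha ha'
    _ = 2 * |b - b'| + 8 * |a - a'| := by ring

/-- The slope of `v ↦ exp (v * L)` between `1` and `a`, written as an integral so that it makes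
sense and is regular at `a = 1`. -/
noncomputable def expSlope (a : ℝ) (L : ℂ) : ℂ :=
  ∫ u in (0 : ℝ)..1, L * Complex.exp ((1 + u * (a - 1) : ℝ) * L)

theorem expSlope_one (L : ℂ) : expSlope 1 L = L * Complex.exp L := by simp [expSlope]

theorem sub_one_mul_expSlope (a : ℝ) (L : ℂ) :
    (a - 1) * expSlope a L = Complex.exp (a * L) - Complex.exp L := by
  have hderiv : ∀ u : ℝ, HasDerivAt (fun u : ℝ ↦ Complex.exp ((1 + u * (a - 1) : ℝ) * L))
      ((a - 1) * (L * Complex.exp ((1 + u * (a - 1) : ℝ) * L))) u := fun u ↦ by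
    have h := ((((hasDerivAt_id u).mul_const (a - 1)).const_add 1).ofReal_comp.mul_const L).cexp
    refine h.congr_deriv ?_
    simp only [id_eq]
    push_cast
    ring
  rw [expSlope, ← intervalIntegral.integral_const_mul,
    intervalIntegral.integral_eq_sub_of_hasDerivAt
      (fun u _ ↦ hderiv u) (Continuous.intervalIntegrable (by fun_prop) _ _)]
  simp

theorem expSlope_ofReal (a x : ℝ) :
    expSlope a x = (∫ u in (0 : ℝ)..1, x * Real.exp ((1 + u * (a - 1)) * x) : ℝ) := by
  rw [expSlope, ← intervalIntegral.integral_ofReal]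
  congr 1 with u
  push_cast
  rfl

/-- The cumulant of the centred stable law of index `a` and skewness `b` at a point `t` with
`L = log (σ * t)`. In this variable the two cases `α = 1` and `α ≠ 1` are given by one formula. -/
noncomputable def logCumulant (a b : ℝ) (L : ℂ) : ℂ :=
  -Complex.exp (a * L) - Complex.I * b * (tanCoeff a * expSlope a L)

theorem logCumulant_one (b : ℝ) (L : ℂ) :
    logCumulant 1 b L = -Complex.exp L - Complex.I * b * (2 / Real.pi * (L * Complex.exp L)) := by
  rw [logCumulant, tanCoeff_one, expSlope_one]
  push_cast
  rw [one_mul]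

theorem logCumulant_of_ne_one {a : ℝ} (h : a ≠ 1) (b : ℝ) (L : ℂ) :
    logCumulant a b L = -Complex.exp (a * L) +
      Complex.I * b * Real.tan (Real.pi * a / 2) * (Complex.exp (a * L) - Complex.exp L) := by
  rw [logCumulant, tanCoeff_of_ne_one h, ← sub_one_mul_expSlope]
  push_cast
  ring

theorem logCumulant_ofReal_re (a b x : ℝ) : (logCumulant a b x).re = -Real.exp (a * x) := by
  rw [logCumulant, expSlope_ofReal]
  simp [Complex.exp_re]

theorem differentiable_logCumulant (a b : ℝ) : Differentiable ℂ (logCumulant a b) := by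
  rcases eq_or_ne a 1 with rfl | h
  · simp only [funext (logCumulant_one b)]
    fun_prop
  · simp only [funext (logCumulant_of_ne_one h b)]
    fun_prop

/-- `L` has norm at most `K ≥ 1`, and `exp (v * L)` has norm at most `W` for all exponents `v`
between `lo` and `hi`: the data that control `logCumulant a b L` and its increments. -/
structure ExpBound (lo hi K W : ℝ) (L : ℂ) : Prop where
  one_le : 1 ≤ K
  norm_le : ‖L‖ ≤ K
  norm_exp_le : ∀ v ∈ Icc lo hi, ‖Complex.exp ((v : ℝ) * L)‖ ≤ W

variable {lo hi K W a a' b b' : ℝ} {L L' : ℂ}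

theorem one_add_mul_sub_one_mem (h1 : (1 : ℝ) ∈ Icc lo hi) (ha : a ∈ Icc lo hi) {u : ℝ}
    (hu : u ∈ uIoc (0 : ℝ) 1) : 1 + u * (a - 1) ∈ Icc lo hi := by
  rw [uIoc_of_le zero_le_one] at hu
  exact (convex_Icc lo hi).add_smul_sub_mem h1 ha ⟨hu.1.le, hu.2⟩

namespace ExpBound

theorem nonneg (hL : ExpBound lo hi K W L) (ha : a ∈ Icc lo hi) : 0 ≤ W :=
  (norm_nonneg _).trans (hL.norm_exp_le a ha)

theorem norm_expSlope_le (hL : ExpBound lo hi K W L) (h1 : (1 : ℝ) ∈ Icc lo hi)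
    (ha : a ∈ Icc lo hi) : ‖expSlope a L‖ ≤ K * W := by
  refine (intervalIntegral.norm_integral_le_of_norm_le_const (C := K * W) fun u hu ↦ ?_).trans
    (by simp)
  rw [norm_mul]
  exact mul_le_mul hL.norm_le (hL.norm_exp_le _ (one_add_mul_sub_one_mem h1 ha hu))
    (norm_nonneg _) (zero_le_one.trans hL.one_le)

theorem norm_exp_mul_sub_le (hL : ExpBound lo hi K W L) (hL' : ExpBound lo hi K W L')
    (h02 : Icc lo hi ⊆ Icc 0 2) (ha : a ∈ Icc lo hi) (ha' : a' ∈ Icc lo hi) :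
    ‖Complex.exp (a * L) - Complex.exp (a' * L')‖ ≤ W * (|a - a'| * K + 2 * ‖L - L'‖) := by
  have hW := hL.nonneg ha
  refine (norm_cexp_sub_cexp_le (hL.norm_exp_le a ha) (hL'.norm_exp_le a' ha')).trans ?_
  gcongr
  refine (norm_mul_sub_mul_le _ _ _ _).trans ?_
  rw [← Complex.ofReal_sub, Complex.norm_real, Complex.norm_real, Real.norm_eq_abs,
    Real.norm_eq_abs, abs_of_nonneg (h02 ha').1]
  gcongr
  · exact hL.norm_le
  · exact (h02 ha').2

theorem norm_expSlope_sub_le (hL : ExpBound lo hi K W L) (hL' : ExpBound lo hi K W L')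
    (h02 : Icc lo hi ⊆ Icc 0 2) (h1 : (1 : ℝ) ∈ Icc lo hi) (ha : a ∈ Icc lo hi)
    (ha' : a' ∈ Icc lo hi) :
    ‖expSlope a L - expSlope a' L'‖ ≤ 3 * K ^ 2 * W * (|a - a'| + ‖L - L'‖) := by
  have hint : ∀ (a : ℝ) (L : ℂ), IntervalIntegrable
      (fun u : ℝ ↦ L * Complex.exp ((1 + u * (a - 1) : ℝ) * L)) volume 0 1 := fun a L ↦
    Continuous.intervalIntegrable (by fun_prop) _ _
  rw [expSlope, expSlope, ← intervalIntegral.integral_sub (hint _ _) (hint _ _)]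
  refine (intervalIntegral.norm_integral_le_of_norm_le_const
    (C := 3 * K ^ 2 * W * (|a - a'| + ‖L - L'‖)) fun u hu ↦ ?_).trans (by simp)
  have hm := one_add_mul_sub_one_mem h1 ha hu
  have hm' := one_add_mul_sub_one_mem h1 ha' hu
  have hW := hL.nonneg ha
  have hK := hL.one_le
  rw [uIoc_of_le zero_le_one] at hu
  have hexp := hL.norm_exp_mul_sub_le hL' h02 hm hm'
  have hdist : |1 + u * (a - 1) - (1 + u * (a' - 1))| ≤ |a - a'| := by
    rw [show 1 + u * (a - 1) - (1 + u * (a' - 1)) = u * (a - a') by ring, abs_mul,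
      abs_of_pos hu.1]
    exact mul_le_of_le_one_left (abs_nonneg _) hu.2
  rw [mul_comm L, mul_comm L']
  calc _ ≤ _ := norm_mul_sub_mul_le _ _ _ _
    _ ≤ W * (|a - a'| * K + 2 * ‖L - L'‖) * K + W * ‖L - L'‖ := by
      gcongr
      · exact hexp.trans (by gcongr)
      · exact hL.norm_le
      · exact hL'.norm_exp_le _ hm'
    _ = W * (K ^ 2 * |a - a'| + (2 * K + 1) * ‖L - L'‖) := by ring
    _ ≤ W * (3 * K ^ 2 * |a - a'| + 3 * K ^ 2 * ‖L - L'‖) := by gcongr <;> nlinarith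
    _ = _ := by ring

theorem norm_logCumulant_le (hL : ExpBound lo hi K W L) (h02 : Icc lo hi ⊆ Icc 0 2)
    (h1 : (1 : ℝ) ∈ Icc lo hi) (ha : a ∈ Icc lo hi) (hb : |b| ≤ 1) :
    ‖logCumulant a b L‖ ≤ 3 * K * W := by
  have hW := hL.nonneg ha
  have hK := hL.one_le
  calc ‖logCumulant a b L‖
    _ ≤ ‖Complex.exp (a * L)‖ + |b| * (|tanCoeff a| * ‖expSlope a L‖) :=
      (norm_sub_le _ _).trans (by simp)
    _ ≤ W + 1 * (2 * (K * W)) := by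
      gcongr
      · exact hL.norm_exp_le a ha
      · exact abs_tanCoeff_le (h02 ha)
      · exact hL.norm_expSlope_le h1 ha
    _ ≤ 3 * K * W := by nlinarith

theorem norm_mul_tanCoeff_mul_expSlope_sub_le (hL : ExpBound lo hi K W L)
    (hL' : ExpBound lo hi K W L') (h02 : Icc lo hi ⊆ Icc 0 2) (h1 : (1 : ℝ) ∈ Icc lo hi)
    (ha : a ∈ Icc lo hi) (ha' : a' ∈ Icc lo hi) (hb' : |b'| ≤ 1) :
    ‖((b * tanCoeff a : ℝ) : ℂ) * expSlope a L - ((b' * tanCoeff a' : ℝ) : ℂ) * expSlope a' L'‖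
      ≤ (2 * |b - b'| + 8 * |a - a'|) * (K * W)
        + 2 * (3 * K ^ 2 * W * (|a - a'| + ‖L - L'‖)) := by
  have hcoeff' : |b' * tanCoeff a'| ≤ 2 := by
    rw [abs_mul]
    exact (mul_le_mul hb' (abs_tanCoeff_le (h02 ha')) (abs_nonneg _) zero_le_one).trans_eq
      (one_mul 2)
  refine (norm_mul_sub_mul_le _ _ _ _).trans ?_
  rw [← Complex.ofReal_sub, Complex.norm_real, Complex.norm_real, Real.norm_eq_abs,
    Real.norm_eq_abs]
  gcongr
  · exact abs_mul_tanCoeff_sub_le (h02 ha) (h02 ha') hb'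
  · exact hL.norm_expSlope_le h1 ha
  · exact hL.norm_expSlope_sub_le hL' h02 h1 ha ha'

theorem norm_logCumulant_sub_le (hL : ExpBound lo hi K W L) (hL' : ExpBound lo hi K W L')
    (h02 : Icc lo hi ⊆ Icc 0 2) (h1 : (1 : ℝ) ∈ Icc lo hi) (ha : a ∈ Icc lo hi)
    (ha' : a' ∈ Icc lo hi) (hb' : |b'| ≤ 1) :
    ‖logCumulant a b L - logCumulant a' b' L'‖
      ≤ 16 * K ^ 2 * W * (|a - a'| + |b - b'| + ‖L - L'‖) := by
  have hW := hL.nonneg ha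
  have hK := hL.one_le
  have hKsq : K ≤ K ^ 2 := by nlinarith
  have hsplit : logCumulant a b L - logCumulant a' b' L'
      = -(Complex.exp (a * L) - Complex.exp (a' * L'))
        - Complex.I * (((b * tanCoeff a : ℝ) : ℂ) * expSlope a L
          - ((b' * tanCoeff a' : ℝ) : ℂ) * expSlope a' L') := by
    simp only [logCumulant]
    push_cast
    ring
  calc ‖logCumulant a b L - logCumulant a' b' L'‖
    _ ≤ W * (|a - a'| * K + 2 * ‖L - L'‖) + ((2 * |b - b'| + 8 * |a - a'|) * (K * W)
        + 2 * (3 * K ^ 2 * W * (|a - a'| + ‖L - L'‖))) := by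
      rw [hsplit]
      refine (norm_sub_le _ _).trans ?_
      rw [norm_neg, norm_mul, Complex.norm_I, one_mul]
      exact add_le_add (hL.norm_exp_mul_sub_le hL' h02 ha ha')
        (hL.norm_mul_tanCoeff_mul_expSlope_sub_le hL' h02 h1 ha ha' hb')
    _ = W * ((9 * K + 6 * K ^ 2) * |a - a'| + 2 * K * |b - b'|
        + (2 + 6 * K ^ 2) * ‖L - L'‖) := by ring
    _ ≤ W * (16 * K ^ 2 * |a - a'| + 16 * K ^ 2 * |b - b'| + 16 * K ^ 2 * ‖L - L'‖) := by
      gcongr <;> nlinarith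
    _ = _ := by ring

end ExpBound

end LogCumulant

section Cumulant

/-- The cumulant `psiM θ`, continued analytically from `t > 0` to the slit plane. -/
noncomputable def cumulant (θ : Fin 4 → ℝ) (t : ℂ) : ℂ :=
  Complex.I * θ 0 * t + logCumulant (θ 2) (θ 3) (Real.log (θ 1) + Complex.log t)

theorem differentiableAt_cumulant (θ : Fin 4 → ℝ) {t : ℂ} (ht : t ∈ Complex.slitPlane) :
    DifferentiableAt ℂ (cumulant θ) t :=
  (by fun_prop : DifferentiableAt ℂ (fun t : ℂ ↦ Complex.I * θ 0 * t) t).add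
    ((differentiable_logCumulant _ _ _).comp t ((Complex.differentiableAt_log ht).const_add _))

theorem cexp_mul_log_ofReal {r : ℝ} (hr : 0 < r) (a : ℝ) :
    Complex.exp (a * (Real.log r : ℂ)) = (r ^ a : ℝ) := by
  rw [Real.rpow_def_of_pos hr, ← Complex.ofReal_mul, ← Complex.ofReal_exp, mul_comm]

theorem psiM_eq_cumulant {θ : Fin 4 → ℝ} (hσ : 0 < θ 1) {t : ℝ} (ht : 0 < t) :
    psiM θ t = cumulant θ t := by
  have hσt : 0 < θ 1 * t := mul_pos hσ ht
  have hlog : (Real.log (θ 1) : ℂ) + Complex.log t = (Real.log (θ 1 * t) : ℝ) := by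
    rw [Real.log_mul hσ.ne' ht.ne', ← Complex.ofReal_log ht.le, Complex.ofReal_add]
  have hexp : Complex.exp (Real.log (θ 1 * t) : ℂ) = (θ 1 * t : ℝ) := by
    rw [← Complex.ofReal_exp, Real.exp_log hσt]
  rw [psiM, cumulant, hlog, abs_of_pos hσt, Real.sign_of_pos ht]
  split_ifs with h
  · rw [h, logCumulant_one, hexp]
    push_cast
    ring
  · have hprod : (((θ 1 * t) ^ (θ 2) : ℝ) : ℂ) * (((θ 1 * t) ^ (1 - θ 2) : ℝ) : ℂ)
        = (θ 1 * t : ℝ) := by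
      rw [← Complex.ofReal_mul, ← Real.rpow_add hσt, add_sub_cancel, Real.rpow_one]
    rw [logCumulant_of_ne_one h, cexp_mul_log_ofReal hσt, hexp, ← hprod]
    push_cast
    ring

theorem cos_pi_mul_div_two_ne_zero {a : ℝ} (ha : a ∈ Set.Ioo (0 : ℝ) 2) (h1 : a ≠ 1) :
    Real.cos (Real.pi * a / 2) ≠ 0 := by
  have hpi := Real.pi_pos
  rcases lt_or_gt_of_ne h1 with hlt | hgt
  · exact (Real.cos_pos_of_mem_Ioo ⟨by nlinarith [ha.1], by nlinarith⟩).ne'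
  · exact (Real.cos_neg_of_pi_div_two_lt_of_lt (by nlinarith) (by nlinarith [ha.2])).ne

theorem cumulant_neg_I_mul_im {θ : Fin 4 → ℝ} (hσ : 0 < θ 1) (hα : θ 2 ∈ Set.Ioo (0 : ℝ) 2) {y : ℝ}
    (hy : 0 < y) : (cumulant θ (-(Complex.I * y))).im
      = (1 + θ 3) * Real.sin (Real.pi * θ 2 / 2) * (θ 1 * y) ^ (θ 2) := by
  have hσy : 0 < θ 1 * y := mul_pos hσ hy
  have hlog : (Real.log (θ 1) : ℂ) + Complex.log (-(Complex.I * y))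
      = Real.log (θ 1 * y) - Complex.I * (Real.pi / 2) := by
    rw [show -(Complex.I * (y : ℂ)) = y * (-Complex.I) by ring,
      Complex.log_ofReal_mul hy (neg_ne_zero.2 Complex.I_ne_zero), Complex.log_neg_I,
      Real.log_mul hσ.ne' hy.ne']
    push_cast
    ring
  have hexp (a : ℝ) : Complex.exp (a * (Real.log (θ 1 * y) - Complex.I * (Real.pi / 2)))
      = ((θ 1 * y) ^ a : ℝ)
        * (Real.cos (Real.pi * a / 2) - Complex.I * Real.sin (Real.pi * a / 2)) := by
    rw [← cexp_mul_log_ofReal hσy, show (a : ℂ) * (Real.log (θ 1 * y) - Complex.I * (Real.pi / 2))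
      = a * Real.log (θ 1 * y) + (-(Real.pi * a / 2) : ℝ) * Complex.I by push_cast; ring,
      Complex.exp_add, Complex.exp_mul_I, ← Complex.ofReal_cos, ← Complex.ofReal_sin, Real.cos_neg,
      Real.sin_neg]
    push_cast
    ring
  have hexp1 : Complex.exp (Real.log (θ 1 * y) - Complex.I * (Real.pi / 2))
      = -Complex.I * (θ 1 * y : ℝ) := by
    have h := hexp 1
    simp only [Complex.ofReal_one, one_mul, mul_one, Real.rpow_one, Real.cos_pi_div_two,
      Real.sin_pi_div_two, Complex.ofReal_zero, zero_sub] at h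
    rw [h, mul_comm]
  rw [cumulant, hlog]
  by_cases h : θ 2 = 1
  · rw [h, logCumulant_one, hexp1]
    simp only [mul_neg, Complex.ofReal_mul, neg_mul, neg_neg, sub_neg_eq_add, Complex.add_im,
      Complex.neg_im, Complex.mul_im, Complex.mul_re, Complex.I_re, Complex.ofReal_re, zero_mul,
      Complex.I_im, Complex.ofReal_im, mul_zero, sub_self, one_mul, zero_add, add_zero, neg_zero,
      sub_zero, Complex.div_ofReal_re, Complex.re_ofNat, Complex.sub_re, Complex.div_ofNat_re,
      Complex.div_ofNat_im, zero_div, Complex.sub_im, zero_sub, Complex.div_ofReal_im,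
      Complex.im_ofNat, mul_one, Real.sin_pi_div_two, Real.rpow_one]
    field_simp
  · have htan := Real.tan_mul_cos (cos_pi_mul_div_two_ne_zero hα h)
    rw [logCumulant_of_ne_one h, hexp, hexp1, ← htan]
    simp only [Complex.add_im, Complex.sub_im, Complex.mul_im, Complex.mul_re, Complex.neg_re,
      Complex.neg_im, Complex.I_re, Complex.I_im, Complex.ofReal_re, Complex.ofReal_im,
      Complex.sub_re]
    ring

end Cumulant

/-! ### Compact parameter boxes -/

section ParameterBox

open Set Topology

/-- Bounds cutting out a box of parameters `θ = (μ, σ, α, β)` with `σ` and `α` away from the ends of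
their ranges: `|μ| ≤ M`, `|log σ| ≤ Λ`, `α ∈ [a₁, a₂] ⊆ (0, 2)`. -/
structure ParamBox where
  M : ℝ
  Λ : ℝ
  a₁ : ℝ
  a₂ : ℝ
  M_nonneg : 0 ≤ M
  Λ_nonneg : 0 ≤ Λ
  a₁_pos : 0 < a₁
  a₂_lt : a₂ < 2

/-- The parameter `θ` lies in the box `B`; the skewness is only subject to `|β| ≤ 1`. -/
structure ParamBox.Mem (B : ParamBox) (θ : Fin 4 → ℝ) : Prop where
  abs_loc_le : |θ 0| ≤ B.M
  scale_pos : 0 < θ 1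
  abs_log_scale_le : |Real.log (θ 1)| ≤ B.Λ
  le_index : B.a₁ ≤ θ 2
  index_le : θ 2 ≤ B.a₂
  abs_skew_le : |θ 3| ≤ 1

/-- The Euclidean distance on the parameter space, whose Mathlib distance is the sup distance. -/
noncomputable def paramDist (θ θ' : Fin 4 → ℝ) : ℝ := Real.sqrt (∑ i : Fin 4, (θ i - θ' i) ^ 2)

theorem paramDist_nonneg (θ θ' : Fin 4 → ℝ) : 0 ≤ paramDist θ θ' := Real.sqrt_nonneg _

theorem abs_sub_le_paramDist (θ θ' : Fin 4 → ℝ) (i : Fin 4) : |θ i - θ' i| ≤ paramDist θ θ' :=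
  Real.abs_le_sqrt <| Finset.single_le_sum (f := fun i ↦ (θ i - θ' i) ^ 2)
    (fun _ _ ↦ sq_nonneg _) (Finset.mem_univ i)

theorem abs_log_sub_log_le_div {L x y : ℝ} (hL : 0 < L) (hx : L ≤ x) (hy : L ≤ y) :
    |Real.log x - Real.log y| ≤ |x - y| / L := by
  wlog hxy : y ≤ x generalizing x y
  · rw [abs_sub_comm, abs_sub_comm x]
    exact this hy hx (le_of_not_ge hxy)
  have hy₀ : 0 < y := hL.trans_le hy
  have hx₀ : 0 < x := hL.trans_le hx
  rw [abs_of_nonneg (sub_nonneg.2 (Real.log_le_log hy₀ hxy)), abs_of_nonneg (sub_nonneg.2 hxy)]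
  calc Real.log x - Real.log y
    _ = Real.log (x / y) := (Real.log_div hx₀.ne' hy₀.ne').symm
    _ ≤ x / y - 1 := Real.log_le_sub_one_of_pos (div_pos hx₀ hy₀)
    _ = (x - y) / y := by rw [sub_div, div_self hy₀.ne']
    _ ≤ (x - y) / L := div_le_div_of_nonneg_left (sub_nonneg.2 hxy) hL hy

theorem abs_log_sub_log_le {Λ x y : ℝ} (hx : 0 < x) (hy : 0 < y) (hxl : |Real.log x| ≤ Λ)
    (hyl : |Real.log y| ≤ Λ) : |Real.log x - Real.log y| ≤ Real.exp Λ * |x - y| := by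
  have hlower {z : ℝ} (hz : 0 < z) (hzl : |Real.log z| ≤ Λ) : Real.exp (-Λ) ≤ z :=
    (Real.le_log_iff_exp_le hz).1 (abs_le.1 hzl).1
  calc |Real.log x - Real.log y|
    _ ≤ |x - y| / Real.exp (-Λ) :=
      abs_log_sub_log_le_div (Real.exp_pos _) (hlower hx hxl) (hlower hy hyl)
    _ = Real.exp Λ * |x - y| := by rw [Real.exp_neg, div_inv_eq_mul, mul_comm]

theorem rpow_le_rpow_add_rpow {r a b v : ℝ} (hr : 0 < r) (hv : v ∈ Icc a b) :
    r ^ v ≤ r ^ a + r ^ b := by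
  have ha : 0 < r ^ a := by positivity
  have hb : 0 < r ^ b := by positivity
  rcases le_total r 1 with h | h
  · linarith [Real.rpow_le_rpow_of_exponent_ge hr h hv.1]
  · linarith [Real.rpow_le_rpow_of_exponent_le h hv.2]

theorem le_rpow_add_rpow {r a b : ℝ} (hr : 0 < r) (h1 : (1 : ℝ) ∈ Icc a b) :
    r ≤ r ^ a + r ^ b := by
  simpa using rpow_le_rpow_add_rpow hr h1

theorem add_log_sq_le_rpow {A ε R : ℝ} (hA : 0 ≤ A) (hε : 0 < ε) (hR : 1 ≤ R) :
    (A + Real.log R) ^ 2 ≤ (A + 1 / ε) ^ 2 * R ^ (2 * ε) := by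
  have hlog : Real.log R ≤ R ^ ε / ε := Real.log_le_rpow_div (zero_le_one.trans hR) hε
  have hpow : 1 ≤ R ^ ε := Real.one_le_rpow hR hε.le
  have hbase : A + Real.log R ≤ (A + 1 / ε) * R ^ ε := by
    rw [add_mul, one_div_mul_eq_div]
    nlinarith
  have hnonneg : 0 ≤ A + Real.log R := add_nonneg hA (Real.log_nonneg hR)
  calc (A + Real.log R) ^ 2
    _ ≤ ((A + 1 / ε) * R ^ ε) ^ 2 := by gcongr
    _ = (A + 1 / ε) ^ 2 * R ^ (2 * ε) := by
      rw [mul_pow, ← Real.rpow_mul_natCast (by linarith)]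
      push_cast
      rw [mul_comm ε]

theorem exists_add_abs_log_sq_mul_le {A lo γ : ℝ} (hA : 0 ≤ A) (hγ : γ < lo) (hlo : lo ≤ 2) :
    ∃ C, 0 ≤ C ∧ ∀ r : ℝ, 0 < r →
      (A + |Real.log r|) ^ 2 * (r ^ lo + r ^ (2 : ℝ)) ≤ C * (r ^ γ + r ^ (3 : ℝ)) := by
  have hε : 0 < (min (lo - γ) 1) / 2 := by
    have := sub_pos.2 hγ
    positivity
  set ε := (min (lo - γ) 1) / 2 with hεdef
  have h2ε : 2 * ε ≤ lo - γ := by linarith [min_le_left (lo - γ) 1]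
  have h2ε' : 2 * ε ≤ 1 := by linarith [min_le_right (lo - γ) 1]
  refine ⟨2 * (A + 1 / ε) ^ 2, by positivity, fun r hr ↦ ?_⟩
  have hγr : 0 < r ^ γ := by positivity
  have h3r : 0 < r ^ (3 : ℝ) := by positivity
  rcases le_total r 1 with h | h
  · have hlog : (A + |Real.log r|) ^ 2 ≤ (A + 1 / ε) ^ 2 * r ^ (-(2 * ε)) := by
      rw [abs_of_nonpos (Real.log_nonpos hr.le h), ← Real.log_inv, Real.rpow_neg hr.le,
        ← Real.inv_rpow hr.le]
      exact add_log_sq_le_rpow hA hε ((one_le_inv₀ hr).2 h)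
    calc (A + |Real.log r|) ^ 2 * (r ^ lo + r ^ (2 : ℝ))
      _ ≤ (A + 1 / ε) ^ 2 * r ^ (-(2 * ε)) * (r ^ lo + r ^ lo) := by
        gcongr ?_ * (_ + ?_)
        exact Real.rpow_le_rpow_of_exponent_ge hr h (by linarith)
      _ = 2 * (A + 1 / ε) ^ 2 * r ^ (-(2 * ε) + lo) := by rw [Real.rpow_add hr]; ring
      _ ≤ 2 * (A + 1 / ε) ^ 2 * (r ^ γ + r ^ (3 : ℝ)) := by
        gcongr
        linarith [Real.rpow_le_rpow_of_exponent_ge hr h (by linarith : γ ≤ -(2 * ε) + lo)]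
  · have hlog := add_log_sq_le_rpow hA hε h
    rw [← abs_of_nonneg (Real.log_nonneg h)] at hlog
    calc (A + |Real.log r|) ^ 2 * (r ^ lo + r ^ (2 : ℝ))
      _ ≤ (A + 1 / ε) ^ 2 * r ^ (2 * ε) * (r ^ (2 : ℝ) + r ^ (2 : ℝ)) := by
        gcongr ?_ * (?_ + _)
        exact Real.rpow_le_rpow_of_exponent_le h (by linarith)
      _ = 2 * (A + 1 / ε) ^ 2 * r ^ (2 * ε + 2) := by rw [Real.rpow_add hr]; ring
      _ ≤ 2 * (A + 1 / ε) ^ 2 * (r ^ γ + r ^ (3 : ℝ)) := by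
        gcongr
        linarith [Real.rpow_le_rpow_of_exponent_le h (by linarith : 2 * ε + 2 ≤ 3)]

theorem norm_cexp_mul_log_add_log {σ : ℝ} {t : ℂ} (ht : t ≠ 0) (v : ℝ) :
    ‖Complex.exp (v * (Real.log σ + Complex.log t))‖ = Real.exp (v * Real.log σ) * ‖t‖ ^ v := by
  rw [Complex.norm_exp, Real.rpow_def_of_pos (norm_pos_iff.2 ht), ← Real.exp_add,
    Complex.re_ofReal_mul, Complex.add_re, Complex.log_re, Complex.ofReal_re]
  ring_nf

namespace ParamBox

variable {B : ParamBox} {θ θ' : Fin 4 → ℝ} {γ : ℝ} {t : ℂ}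

theorem Mem.index_mem (h : B.Mem θ) : θ 2 ∈ Ioo (0 : ℝ) 2 :=
  ⟨B.a₁_pos.trans_le h.le_index, h.index_le.trans_lt B.a₂_lt⟩

theorem Mem.abs_log_scale_sub_le (h : B.Mem θ) (h' : B.Mem θ') :
    |Real.log (θ 1) - Real.log (θ' 1)| ≤ Real.exp B.Λ * paramDist θ θ' :=
  (abs_log_sub_log_le h.scale_pos h'.scale_pos h.abs_log_scale_le h'.abs_log_scale_le).trans
    (mul_le_mul_of_nonneg_left (abs_sub_le_paramDist θ θ' 1) (Real.exp_pos _).le)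

theorem Mem.norm_log_add_log_le (h : B.Mem θ) (ht : 0 ≤ t.re) :
    ‖(Real.log (θ 1) : ℂ) + Complex.log t‖ ≤ B.Λ + 2 + |Real.log ‖t‖| := by
  have hlog : ‖Complex.log t‖ ≤ |Real.log ‖t‖| + |t.arg| := by
    simpa only [Complex.log_re, Complex.log_im] using
      Complex.norm_le_abs_re_add_abs_im (Complex.log t)
  have harg : |t.arg| ≤ Real.pi / 2 := Complex.abs_arg_le_pi_div_two_iff.2 ht
  refine (norm_add_le _ _).trans ?_
  rw [Complex.norm_real, Real.norm_eq_abs]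
  linarith [h.abs_log_scale_le, Real.pi_le_four]

theorem Mem.mul_log_scale_le (h : B.Mem θ) {v : ℝ} (hv : v ∈ Icc (0 : ℝ) 2) :
    v * Real.log (θ 1) ≤ 2 * B.Λ :=
  calc v * Real.log (θ 1)
    _ ≤ v * B.Λ := mul_le_mul_of_nonneg_left ((le_abs_self _).trans h.abs_log_scale_le) hv.1
    _ ≤ 2 * B.Λ := mul_le_mul_of_nonneg_right hv.2 B.Λ_nonneg

theorem Mem.expBound (h : B.Mem θ) (ht : t ≠ 0) (hre : 0 ≤ t.re) :
    ExpBound (min B.a₁ 1) 2 (B.Λ + 2 + |Real.log ‖t‖|)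
      (Real.exp (2 * B.Λ) * (‖t‖ ^ min B.a₁ 1 + ‖t‖ ^ (2 : ℝ)))
      (Real.log (θ 1) + Complex.log t) where
  one_le := by linarith [abs_nonneg (Real.log ‖t‖), B.Λ_nonneg]
  norm_le := h.norm_log_add_log_le hre
  norm_exp_le v hv := by
    have hlo : 0 ≤ min B.a₁ 1 := le_min B.a₁_pos.le zero_le_one
    rw [norm_cexp_mul_log_add_log ht]
    exact mul_le_mul (Real.exp_le_exp.2 (h.mul_log_scale_le ⟨hlo.trans hv.1, hv.2⟩))
      (rpow_le_rpow_add_rpow (norm_pos_iff.2 ht) hv) (by positivity) (by positivity)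

variable (B)

theorem one_mem_Icc : (1 : ℝ) ∈ Icc (min B.a₁ 1) 2 := ⟨min_le_right _ _, one_le_two⟩

theorem Icc_subset : Icc (min B.a₁ 1) 2 ⊆ Icc 0 2 :=
  Icc_subset_Icc_left (le_min B.a₁_pos.le zero_le_one)

variable {B}

theorem Mem.index_mem_Icc (h : B.Mem θ) : θ 2 ∈ Icc (min B.a₁ 1) 2 :=
  ⟨(min_le_left _ _).trans h.le_index, h.index_mem.2.le⟩

variable (B)

theorem exists_norm_cumulant_le (hγ : γ < min B.a₁ 1) :
    ∃ C, 0 ≤ C ∧ ∀ θ, B.Mem θ → ∀ t : ℂ, t ≠ 0 → 0 ≤ t.re →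
      ‖cumulant θ t‖ ≤ C * (‖t‖ ^ γ + ‖t‖ ^ (3 : ℝ)) := by
  have hM := B.M_nonneg
  obtain ⟨C, hC, hlog⟩ := exists_add_abs_log_sq_mul_le (A := B.Λ + 2)
    (by linarith [B.Λ_nonneg]) hγ ((min_le_right _ _).trans one_le_two)
  refine ⟨B.M + 3 * Real.exp (2 * B.Λ) * C, by positivity, fun θ h t ht hre ↦ ?_⟩
  have hL := h.expBound ht hre
  have hr := norm_pos_iff.2 ht
  have hlin : ‖t‖ ≤ ‖t‖ ^ γ + ‖t‖ ^ (3 : ℝ) :=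
    le_rpow_add_rpow hr ⟨(hγ.trans_le (min_le_right _ _)).le, by norm_num⟩
  set K := B.Λ + 2 + |Real.log ‖t‖|
  have hK : K ≤ K ^ 2 := le_self_pow₀ hL.one_le two_ne_zero
  set E := ‖t‖ ^ γ + ‖t‖ ^ (3 : ℝ)
  set V := ‖t‖ ^ min B.a₁ 1 + ‖t‖ ^ (2 : ℝ)
  calc ‖cumulant θ t‖
    _ ≤ |θ 0| * ‖t‖ + 3 * K * (Real.exp (2 * B.Λ) * V) := by
      refine (norm_add_le _ _).trans (add_le_add (by simp) ?_)
      exact hL.norm_logCumulant_le B.Icc_subset B.one_mem_Icc h.index_mem_Icc h.abs_skew_le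
    _ ≤ B.M * E + 3 * K ^ 2 * (Real.exp (2 * B.Λ) * V) := by
      gcongr
      exact h.abs_loc_le
    _ = B.M * E + 3 * Real.exp (2 * B.Λ) * (K ^ 2 * V) := by ring
    _ ≤ B.M * E + 3 * Real.exp (2 * B.Λ) * (C * E) := by
      gcongr _ + _ * ?_
      exact hlog _ hr
    _ = (B.M + 3 * Real.exp (2 * B.Λ) * C) * E := by ring

theorem exists_norm_cumulant_sub_le (hγ : γ < min B.a₁ 1) :
    ∃ C, 0 ≤ C ∧ ∀ θ, B.Mem θ → ∀ θ', B.Mem θ' → ∀ t : ℂ, t ≠ 0 → 0 ≤ t.re →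
      ‖cumulant θ t - cumulant θ' t‖ ≤ C * paramDist θ θ' * (‖t‖ ^ γ + ‖t‖ ^ (3 : ℝ)) := by
  obtain ⟨C, hC, hlog⟩ := exists_add_abs_log_sq_mul_le (A := B.Λ + 2)
    (by linarith [B.Λ_nonneg]) hγ ((min_le_right _ _).trans one_le_two)
  refine ⟨1 + 16 * (2 + Real.exp B.Λ) * Real.exp (2 * B.Λ) * C, by positivity,
    fun θ h θ' h' t ht hre ↦ ?_⟩
  have hL := h.expBound ht hre
  have hL' := h'.expBound ht hre
  have hd := paramDist_nonneg θ θ'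
  have hr := norm_pos_iff.2 ht
  have hlin : ‖t‖ ≤ ‖t‖ ^ γ + ‖t‖ ^ (3 : ℝ) :=
    le_rpow_add_rpow hr ⟨(hγ.trans_le (min_le_right _ _)).le, by norm_num⟩
  set K := B.Λ + 2 + |Real.log ‖t‖|
  set E := ‖t‖ ^ γ + ‖t‖ ^ (3 : ℝ)
  set V := ‖t‖ ^ min B.a₁ 1 + ‖t‖ ^ (2 : ℝ)
  set d := paramDist θ θ'
  set L : ℂ := Real.log (θ 1) + Complex.log t with hLdef
  set L' : ℂ := Real.log (θ' 1) + Complex.log t with hLdef'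
  have hscale : ‖L - L'‖ ≤ Real.exp B.Λ * d := by
    rw [add_sub_add_right_eq_sub, ← Complex.ofReal_sub, Complex.norm_real, Real.norm_eq_abs]
    exact h.abs_log_scale_sub_le h'
  have hsum : |θ 2 - θ' 2| + |θ 3 - θ' 3| + ‖L - L'‖ ≤ (2 + Real.exp B.Λ) * d := by
    linarith [abs_sub_le_paramDist θ θ' 2, abs_sub_le_paramDist θ θ' 3]
  have hsplit : cumulant θ t - cumulant θ' t = Complex.I * ((θ 0 - θ' 0 : ℝ) : ℂ) * t
      + (logCumulant (θ 2) (θ 3) L - logCumulant (θ' 2) (θ' 3) L') := by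
    simp only [cumulant, ← hLdef, ← hLdef', Complex.ofReal_sub]
    ring
  calc ‖cumulant θ t - cumulant θ' t‖
    _ ≤ |θ 0 - θ' 0| * ‖t‖ + 16 * K ^ 2 * (Real.exp (2 * B.Λ) * V)
        * (|θ 2 - θ' 2| + |θ 3 - θ' 3| + ‖L - L'‖) := by
      rw [hsplit]
      refine (norm_add_le _ _).trans (add_le_add ?_ ?_)
      · rw [norm_mul, norm_mul, Complex.norm_I, Complex.norm_real, Real.norm_eq_abs, one_mul]
      · exact hL.norm_logCumulant_sub_le hL' B.Icc_subset B.one_mem_Icc h.index_mem_Icc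
          h'.index_mem_Icc h'.abs_skew_le
    _ ≤ d * E + 16 * K ^ 2 * (Real.exp (2 * B.Λ) * V) * ((2 + Real.exp B.Λ) * d) := by
      gcongr
      exact abs_sub_le_paramDist θ θ' 0
    _ = d * E + 16 * (2 + Real.exp B.Λ) * Real.exp (2 * B.Λ) * d * (K ^ 2 * V) := by ring
    _ ≤ d * E + 16 * (2 + Real.exp B.Λ) * Real.exp (2 * B.Λ) * d * (C * E) := by
      gcongr _ + _ * ?_
      exact hlog _ hr
    _ = (1 + 16 * (2 + Real.exp B.Λ) * Real.exp (2 * B.Λ) * C) * d * E := by ring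

end ParamBox

end ParameterBox

/-! ### Decay of the characteristic function in a half-strip -/

section HalfStripDecay

open Set Topology

/-- The half-strip `{s - iy : s ≥ 0, 0 ≤ y ≤ 1}` through which the contour of the Fourier inversion
integral is moved. -/
def halfStrip : Set ℂ := {t | 0 ≤ t.re ∧ t.im ∈ Icc (-1) 0}

theorem norm_le_of_mem_halfStrip {t : ℂ} (ht : t ∈ halfStrip) : ‖t‖ ≤ t.re + 1 := by
  have him : |t.im| ≤ 1 := abs_le.2 ⟨ht.2.1, ht.2.2.trans zero_le_one⟩
  calc ‖t‖
    _ ≤ |t.re| + |t.im| := Complex.norm_le_abs_re_add_abs_im t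
    _ ≤ t.re + 1 := by rw [abs_of_nonneg ht.1]; gcongr

theorem norm_sub_re_le_of_mem_halfStrip {t : ℂ} (ht : t ∈ halfStrip) : ‖t - t.re‖ ≤ 1 := by
  have him : t - t.re = t.im * Complex.I := sub_eq_of_eq_add' (Complex.re_add_im t).symm
  rw [him, norm_mul, Complex.norm_I, mul_one, Complex.norm_real, Real.norm_eq_abs]
  exact abs_le.2 ⟨ht.2.1, ht.2.2.trans zero_le_one⟩

theorem norm_log_sub_log_re_le {t : ℂ} (ht : 0 < t.re) :
    ‖Complex.log t - Complex.log t.re‖ ≤ ‖t - t.re‖ / t.re := by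
  rw [div_eq_inv_mul]
  refine (convex_halfSpace_re_ge t.re).norm_image_sub_le_of_norm_hasDerivWithin_le
    (f := Complex.log) (f' := fun w ↦ w⁻¹)
    (fun w hw ↦ (Complex.hasDerivAt_log (Or.inl (ht.trans_le hw))).hasDerivWithinAt)
    (fun w hw ↦ ?_) (Complex.ofReal_re _).ge (le_refl t.re)
  rw [norm_inv]
  exact inv_anti₀ ht (le_trans hw (Complex.re_le_norm w))

theorem eventually_add_log_sq_le (A : ℝ) {p δ : ℝ} (hp : 0 < p) (hδ : 0 < δ) :
    ∀ᶠ s in atTop, (A + Real.log s) ^ 2 ≤ δ * s ^ p := by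
  have hconst : (fun _ : ℝ ↦ A) =o[atTop] fun s : ℝ ↦ s ^ (p / 2) :=
    Asymptotics.isLittleO_const_left.2 <| Or.inr <|
      tendsto_norm_atTop_atTop.comp (tendsto_rpow_atTop (half_pos hp))
  have hsq := ((hconst.add (isLittleO_log_rpow_atTop (half_pos hp))).pow two_pos).bound hδ
  filter_upwards [hsq, eventually_gt_atTop 0] with s hs hs0
  rwa [← Real.rpow_mul_natCast hs0.le, Nat.cast_two, div_mul_cancel₀ p two_ne_zero,
    Real.norm_of_nonneg (by positivity), Real.norm_of_nonneg (by positivity)] at hs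

namespace ParamBox

variable {B : ParamBox} {θ : Fin 4 → ℝ} {t : ℂ} {s : ℝ}

theorem Mem.expBound_of_large (h : B.Mem θ) (hs : 2 ≤ s) (hre : s ≤ t.re) (ht : ‖t‖ ≤ 2 * s) :
    ExpBound 0 (max (θ 2) 1) (B.Λ + 3 + Real.log s)
      (Real.exp (2 * B.Λ) * (4 * s ^ max (θ 2) 1)) (Real.log (θ 1) + Complex.log t) where
  one_le := by linarith [B.Λ_nonneg, Real.log_nonneg (one_le_two.trans hs)]
  norm_le := by
    have hst : s ≤ ‖t‖ := hre.trans (Complex.re_le_norm t)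
    have hlog : Real.log ‖t‖ ≤ Real.log 2 + Real.log s := by
      rw [← Real.log_mul two_ne_zero (by linarith)]
      exact Real.log_le_log (by linarith) ht
    refine (h.norm_log_add_log_le (by linarith)).trans ?_
    rw [abs_of_nonneg (Real.log_nonneg (by linarith))]
    linarith [Real.log_two_lt_d9]
  norm_exp_le v hv := by
    have hi2 : max (θ 2) 1 ≤ 2 := max_le h.index_mem.2.le one_le_two
    have ht0 : t ≠ 0 := by
      rintro rfl
      linarith [Complex.zero_re]
    rw [norm_cexp_mul_log_add_log ht0]
    refine mul_le_mul (Real.exp_le_exp.2 (h.mul_log_scale_le ⟨hv.1, hv.2.trans hi2⟩)) ?_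
      (by positivity) (by positivity)
    calc ‖t‖ ^ v
      _ ≤ (2 * s) ^ v := Real.rpow_le_rpow (norm_nonneg _) ht hv.1
      _ ≤ (2 * s) ^ max (θ 2) 1 := Real.rpow_le_rpow_of_exponent_le (by linarith) hv.2
      _ = 2 ^ max (θ 2) 1 * s ^ max (θ 2) 1 := Real.mul_rpow zero_le_two (by linarith)
      _ ≤ 2 ^ (2 : ℝ) * s ^ max (θ 2) 1 := by
        gcongr
        exact one_le_two
      _ = 4 * s ^ max (θ 2) 1 := by norm_num

theorem Mem.norm_cumulant_sub_cumulant_re_le (h : B.Mem θ) (ht : t ∈ halfStrip) (hs : 2 ≤ t.re) :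
    ‖cumulant θ t - cumulant θ t.re‖ ≤ B.M + 64 * Real.exp (2 * B.Λ) *
      (B.Λ + 3 + Real.log t.re) ^ 2 * t.re ^ (max (θ 2) 1 - 1) := by
  have hs0 : 0 < t.re := two_pos.trans_le hs
  have hoffset := norm_sub_re_le_of_mem_halfStrip ht
  have hL := h.expBound_of_large hs le_rfl (by linarith [norm_le_of_mem_halfStrip ht])
  have hL' := h.expBound_of_large (t := t.re) hs (Complex.ofReal_re _).ge
    (by rw [Complex.norm_of_nonneg hs0.le]; linarith)
  have hlog : ‖Complex.log t - Complex.log t.re‖ ≤ 1 / t.re :=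
    (norm_log_sub_log_re_le hs0).trans (by gcongr)
  have hsub := hL.norm_logCumulant_sub_le hL'
    (Icc_subset_Icc_right (max_le h.index_mem.2.le one_le_two)) ⟨zero_le_one, le_max_right _ _⟩
    ⟨h.index_mem.1.le, le_max_left _ _⟩ ⟨h.index_mem.1.le, le_max_left _ _⟩ h.abs_skew_le
    (b := θ 3)
  rw [sub_self, sub_self, abs_zero, add_zero, zero_add, add_sub_add_left_eq_sub] at hsub
  have hsplit : cumulant θ t - cumulant θ t.re = Complex.I * θ 0 * (t - t.re) +
      (logCumulant (θ 2) (θ 3) (Real.log (θ 1) + Complex.log t) -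
        logCumulant (θ 2) (θ 3) (Real.log (θ 1) + Complex.log t.re)) := by
    simp only [cumulant]
    ring
  rw [hsplit]
  refine (norm_add_le _ _).trans (add_le_add ?_ (hsub.trans ?_))
  · rw [norm_mul, norm_mul, Complex.norm_I, Complex.norm_real, Real.norm_eq_abs, one_mul]
    exact (mul_le_mul h.abs_loc_le hoffset (norm_nonneg _) B.M_nonneg).trans_eq (mul_one _)
  · rw [Real.rpow_sub_one hs0.ne']
    calc _ ≤ 16 * (B.Λ + 3 + Real.log t.re) ^ 2 *
          (Real.exp (2 * B.Λ) * (4 * t.re ^ max (θ 2) 1)) * (1 / t.re) := by gcongr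
      _ = _ := by ring

theorem Mem.cumulant_ofReal_re_le (h : B.Mem θ) (hs : 0 < s) :
    (cumulant θ s).re ≤ -Real.exp (-(2 * B.Λ)) * s ^ θ 2 := by
  have hscale : -(2 * B.Λ) ≤ θ 2 * Real.log (θ 1) := by
    nlinarith [(abs_le.1 h.abs_log_scale_le).1, h.index_mem.1, h.index_mem.2, B.Λ_nonneg]
  have hlin : (Complex.I * θ 0 * s).re = 0 := by simp
  rw [cumulant, Complex.add_re, hlin, zero_add, ← Complex.ofReal_log hs.le,
    ← Complex.ofReal_add, logCumulant_ofReal_re, mul_add, Real.exp_add, mul_comm (θ 2) (Real.log s),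
    ← Real.rpow_def_of_pos hs, neg_mul]
  gcongr

variable (B)

theorem eventually_cumulant_re_le : ∀ᶠ s in atTop, ∀ θ, B.Mem θ → ∀ t ∈ halfStrip, t.re = s →
    (cumulant θ t).re ≤ B.M - Real.exp (-(2 * B.Λ)) / 2 * s ^ B.a₁ := by
  have hlo : 0 < min B.a₁ 1 := lt_min B.a₁_pos one_pos
  set c := Real.exp (-(2 * B.Λ))
  set D := 64 * Real.exp (2 * B.Λ)
  have hDpos : 0 < D := by positivity
  filter_upwards [eventually_add_log_sq_le (B.Λ + 3) hlo (by positivity : 0 < c / 2 / D),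
    eventually_ge_atTop 2] with s hlog hs θ h t ht hts
  subst hts
  have hs0 : 0 < t.re := two_pos.trans_le hs
  have hs1 : 1 ≤ t.re := one_le_two.trans hs
  have hexponent : min B.a₁ 1 + (max (θ 2) 1 - 1) ≤ θ 2 := by
    rcases le_total (θ 2) 1 with hα | hα
    · rw [max_eq_right hα, sub_self, add_zero]
      exact (min_le_left _ _).trans h.le_index
    · rw [max_eq_left hα]
      linarith [min_le_right B.a₁ 1]
  have herror : D * (B.Λ + 3 + Real.log t.re) ^ 2 * t.re ^ (max (θ 2) 1 - 1)
      ≤ c / 2 * t.re ^ θ 2 :=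
    calc _ ≤ D * (c / 2 / D * t.re ^ min B.a₁ 1) * t.re ^ (max (θ 2) 1 - 1) := by gcongr
      _ = c / 2 * t.re ^ (min B.a₁ 1 + (max (θ 2) 1 - 1)) := by
        rw [Real.rpow_add hs0]
        field_simp
      _ ≤ c / 2 * t.re ^ θ 2 := by gcongr
  have hsub := (Complex.re_le_norm _).trans (h.norm_cumulant_sub_cumulant_re_le ht hs)
  rw [Complex.sub_re] at hsub
  have hmain := h.cumulant_ofReal_re_le hs0
  have hpow : c / 2 * t.re ^ B.a₁ ≤ c / 2 * t.re ^ θ 2 := by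
    gcongr
    exact h.le_index
  linarith

theorem exists_cumulant_re_le :
    ∃ c, 0 < c ∧ ∃ C, 0 ≤ C ∧ ∀ θ, B.Mem θ → ∀ t ∈ halfStrip, t ≠ 0 →
      (cumulant θ t).re ≤ -c * t.re ^ B.a₁ + C := by
  have hlo : 0 < min B.a₁ 1 := lt_min B.a₁_pos one_pos
  obtain ⟨S, hS⟩ := eventually_atTop.1 B.eventually_cumulant_re_le
  obtain ⟨C, hC, hnear⟩ := B.exists_norm_cumulant_le (half_lt_self hlo)
  set c := Real.exp (-(2 * B.Λ)) / 2
  have hc : 0 < c := by positivity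
  set R := max S 0
  have : 0 ≤ R := le_max_right _ _
  have hM := B.M_nonneg
  set Cnear := C * ((R + 1) ^ (min B.a₁ 1 / 2) + (R + 1) ^ (3 : ℝ)) + c * R ^ B.a₁
  have hCnear : 0 ≤ Cnear := by positivity
  refine ⟨c, hc, B.M + Cnear, by positivity, fun θ h t ht ht0 ↦ ?_⟩
  rcases le_total t.re R with htR | htR
  · have hnorm : ‖t‖ ≤ R + 1 := (norm_le_of_mem_halfStrip ht).trans (by gcongr)
    have hre := ht.1
    calc (cumulant θ t).re
      _ ≤ C * (‖t‖ ^ (min B.a₁ 1 / 2) + ‖t‖ ^ (3 : ℝ)) :=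
        (Complex.re_le_norm _).trans (hnear θ h t ht0 ht.1)
      _ ≤ C * ((R + 1) ^ (min B.a₁ 1 / 2) + (R + 1) ^ (3 : ℝ)) := by gcongr
      _ = -c * R ^ B.a₁ + Cnear := by ring
      _ ≤ -c * t.re ^ B.a₁ + Cnear := by
        have : t.re ^ B.a₁ ≤ R ^ B.a₁ := Real.rpow_le_rpow hre htR B.a₁_pos.le
        nlinarith
      _ ≤ -c * t.re ^ B.a₁ + (B.M + Cnear) := by linarith
  · linarith [hS t.re ((le_max_left _ _).trans htR) θ h t ht rfl]

end ParamBox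

end HalfStripDecay

/-! ### Moving the contour of the inversion integral -/

section ContourShift

open Set Topology

/-- `Φ` is continuous on the half-strip, holomorphic to the right of the imaginary axis, and bounded
by `g (re t)`, so that its integral along the real half-line can be moved to `s - i`. -/
structure HolomorphicOnHalfStrip (g : ℝ → ℝ) (Φ : ℂ → ℂ) : Prop where
  continuousOn : ContinuousOn Φ halfStrip
  differentiableAt : ∀ t : ℂ, 0 < t.re → DifferentiableAt ℂ Φ t
  norm_le : ∀ t ∈ halfStrip, ‖Φ t‖ ≤ g t.re

theorem neg_I_mul_mem_halfStrip {y : ℝ} (hy : y ∈ Icc (0 : ℝ) 1) :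
    -(Complex.I * y) ∈ halfStrip := by
  simpa [halfStrip] using hy.symm

theorem add_mul_I_mem_halfStrip {s y : ℝ} (hs : 0 ≤ s) (hy : y ∈ Icc (-1 : ℝ) 0) :
    (s : ℂ) + y * Complex.I ∈ halfStrip := by
  simpa [halfStrip] using ⟨hs, hy⟩

namespace HolomorphicOnHalfStrip

variable {g : ℝ → ℝ} {Φ : ℂ → ℂ} {x y : ℝ}

theorem norm_line_le (h : HolomorphicOnHalfStrip g Φ) {s : ℝ} (hs : 0 ≤ s)
    (hy : y ∈ Icc (-1 : ℝ) 0) : ‖Φ (s + y * Complex.I)‖ ≤ g s := by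
  simpa using h.norm_le _ (add_mul_I_mem_halfStrip hs hy)

theorem integrableOn_line (h : HolomorphicOnHalfStrip g Φ) (hg : IntegrableOn g (Ioi 0))
    (hy : y ∈ Icc (-1 : ℝ) 0) : IntegrableOn (fun s : ℝ ↦ Φ (s + y * Complex.I)) (Ioi 0) := by
  refine hg.mono' (ContinuousOn.aestronglyMeasurable ?_ measurableSet_Ioi) ?_
  · exact h.continuousOn.comp (by fun_prop) fun s (hs : 0 < s) ↦ add_mul_I_mem_halfStrip hs.le hy
  · filter_upwards [ae_restrict_mem measurableSet_Ioi] with s (hs : 0 < s)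
    exact h.norm_line_le hs.le hy

theorem tendsto_integral_vertical (h : HolomorphicOnHalfStrip g Φ) (hg : Tendsto g atTop (𝓝 0)) :
    Tendsto (fun R : ℝ ↦ ∫ y in (-1 : ℝ)..0, Φ (R + y * Complex.I)) atTop (𝓝 0) := by
  refine squeeze_zero_norm' ?_ hg
  filter_upwards [eventually_ge_atTop 0] with R hR
  refine (intervalIntegral.norm_integral_le_of_norm_le_const (C := g R) fun y hy ↦ ?_).trans
    (by simp)
  rw [uIoc_of_le (by norm_num)] at hy
  exact h.norm_line_le hR (Ioc_subset_Icc_self hy)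

theorem integral_rectangle (h : HolomorphicOnHalfStrip g Φ) {R : ℝ} (hR : 0 ≤ R) :
    (∫ s in (0 : ℝ)..R, Φ (s + (-1 : ℝ) * Complex.I))
      - (∫ s in (0 : ℝ)..R, Φ (s + (0 : ℝ) * Complex.I))
      + Complex.I * (∫ y in (-1 : ℝ)..0, Φ (R + y * Complex.I))
      - Complex.I * (∫ y in (-1 : ℝ)..0, Φ ((0 : ℝ) + y * Complex.I)) = 0 := by
  have hcauchy := Complex.integral_boundary_rect_eq_zero_of_continuousOn_of_differentiableOn Φ
    (-Complex.I) R
  simp only [Complex.neg_re, Complex.I_re, neg_zero, Complex.ofReal_re, Complex.neg_im,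
    Complex.I_im, Complex.ofReal_im, smul_eq_mul, uIcc_of_le hR, min_eq_left hR, max_eq_right hR,
    uIcc_of_le (by norm_num : (-1 : ℝ) ≤ 0)] at hcauchy
  refine hcauchy (h.continuousOn.mono fun t ht ↦ ?_) fun t ht ↦ ?_
  · exact ⟨ht.1.1, ht.2⟩
  · exact (h.differentiableAt t ht.1.1).differentiableWithinAt

theorem integral_Ioi_eq (h : HolomorphicOnHalfStrip g Φ) (hg : IntegrableOn g (Ioi 0))
    (hg0 : Tendsto g atTop (𝓝 0)) :
    ∫ s in Ioi (0 : ℝ), Φ s = (∫ s in Ioi (0 : ℝ), Φ (s - Complex.I))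
      - Complex.I * ∫ y in (0 : ℝ)..1, Φ (-(Complex.I * y)) := by
  have hlim := ((intervalIntegral_tendsto_integral_Ioi 0
      (h.integrableOn_line hg (by norm_num : (-1 : ℝ) ∈ _)) tendsto_id).sub
    (intervalIntegral_tendsto_integral_Ioi 0
      (h.integrableOn_line hg (by norm_num : (0 : ℝ) ∈ _)) tendsto_id)).add
    ((h.tendsto_integral_vertical hg0).const_mul Complex.I) |>.sub_const
      (Complex.I * (∫ y in (-1 : ℝ)..0, Φ ((0 : ℝ) + y * Complex.I)))
  have hzero := tendsto_nhds_unique hlim <| tendsto_const_nhds.congr' <| by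
    filter_upwards [eventually_ge_atTop 0] with R hR using (h.integral_rectangle hR).symm
  have hleft : ∫ y in (-1 : ℝ)..0, Φ ((0 : ℝ) + y * Complex.I)
      = ∫ y in (0 : ℝ)..1, Φ (-(Complex.I * y)) := by
    rw [← neg_zero, ← intervalIntegral.integral_comp_neg]
    simp [mul_comm]
  rw [hleft] at hzero
  simp only [Complex.ofReal_neg, Complex.ofReal_one, neg_mul, one_mul, ← sub_eq_add_neg,
    Complex.ofReal_zero, zero_mul, add_zero, mul_zero] at hzero
  linear_combination -hzero

theorem cexp_mul (h : HolomorphicOnHalfStrip g Φ) (hx : 0 ≤ x) :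
    HolomorphicOnHalfStrip g fun t ↦ Complex.exp (-Complex.I * t * x) * Φ t where
  continuousOn := ContinuousOn.mul (by fun_prop) h.continuousOn
  differentiableAt t ht := DifferentiableAt.mul (by fun_prop) (h.differentiableAt t ht)
  norm_le t ht := by
    have hexp : ‖Complex.exp (-Complex.I * t * x)‖ ≤ 1 := by
      rw [Complex.norm_exp, Real.exp_le_one_iff]
      simpa using mul_nonpos_of_nonpos_of_nonneg ht.2.2 hx
    rw [norm_mul]
    exact (mul_le_of_le_one_left (norm_nonneg _) hexp).trans (h.norm_le t ht)

theorem abs_re_integral_le (h : HolomorphicOnHalfStrip g Φ) (hg : IntegrableOn g (Ioi 0))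
    (hg0 : Tendsto g atTop (𝓝 0)) (hx : 0 ≤ x) :
    |(∫ s in Ioi (0 : ℝ), Complex.exp (-Complex.I * s * x) * Φ s).re|
      ≤ Real.exp (-x) * (∫ s in Ioi (0 : ℝ), g s)
        + ∫ y in (0 : ℝ)..1, Real.exp (-(x * y)) * |(Φ (-(Complex.I * y))).im| := by
  rw [(h.cexp_mul hx).integral_Ioi_eq hg hg0, Complex.sub_re, Complex.I_mul_re]
  have hleft : ∀ y : ℝ, Complex.exp (-Complex.I * -(Complex.I * y) * x)
      = (Real.exp (-(x * y)) : ℝ) := fun y ↦ by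
    push_cast
    congr 1
    linear_combination (y : ℂ) * x * Complex.I_mul_I
  have hcont : ContinuousOn (fun y : ℝ ↦ Φ (-(Complex.I * y))) (uIcc 0 1) := by
    rw [uIcc_of_le zero_le_one]
    exact h.continuousOn.comp (by fun_prop) fun y hy ↦ neg_I_mul_mem_halfStrip hy
  have him : (∫ y in (0 : ℝ)..1, (Real.exp (-(x * y)) : ℝ) * Φ (-(Complex.I * y))).im
      = ∫ y in (0 : ℝ)..1, Real.exp (-(x * y)) * (Φ (-(Complex.I * y))).im := by
    have h := Complex.imCLM.intervalIntegral_comp_comm (μ := volume)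
      (ContinuousOn.intervalIntegrable (ContinuousOn.mul
        (f := fun y : ℝ ↦ ((Real.exp (-(x * y)) : ℝ) : ℂ)) (by fun_prop) hcont))
    simpa only [Pi.mul_apply, Complex.imCLM_apply, Complex.im_ofReal_mul] using h.symm
  simp only [hleft, him, sub_neg_eq_add]
  refine (abs_add_le _ _).trans (add_le_add ((Complex.abs_re_le_norm _).trans ?_) ?_)
  · rw [← integral_const_mul]
    refine norm_integral_le_of_norm_le (hg.const_mul _) ?_
    filter_upwards [ae_restrict_mem measurableSet_Ioi] with s (hs : 0 < s)
    have hΦ := h.norm_line_le hs.le (by norm_num : (-1 : ℝ) ∈ Icc (-1) 0)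
    rw [Complex.ofReal_neg, Complex.ofReal_one, neg_one_mul, ← sub_eq_add_neg] at hΦ
    rw [norm_mul, Complex.norm_exp]
    simpa using mul_le_mul_of_nonneg_left hΦ (Real.exp_pos (-x)).le
  · refine (intervalIntegral.abs_integral_le_integral_abs zero_le_one).trans_eq ?_
    simp only [abs_mul, Real.abs_exp]

end HolomorphicOnHalfStrip

theorem exp_neg_le_mul_rpow {p x : ℝ} (hp : 0 < p) (hx : -1 < x) :
    Real.exp (-x) ≤ p ^ p * Real.exp (1 - p) * (1 + x) ^ (-p) := by
  have hx1 : 0 < 1 + x := by linarith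
  have hbase : (1 + x) / p ≤ Real.exp ((1 + x) / p - 1) := by
    linarith [Real.add_one_le_exp ((1 + x) / p - 1)]
  have hpow : (1 + x) ^ p / p ^ p ≤ Real.exp (1 + x - p) := by
    rw [← Real.div_rpow hx1.le hp.le]
    refine (Real.rpow_le_rpow (by positivity) hbase hp.le).trans_eq ?_
    rw [← Real.exp_mul]
    congr 1
    field_simp
  rw [div_le_iff₀ (by positivity)] at hpow
  rw [Real.rpow_neg hx1.le, ← div_eq_mul_inv, le_div_iff₀ (by positivity)]
  calc Real.exp (-x) * (1 + x) ^ p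
    _ ≤ Real.exp (-x) * (Real.exp (1 + x - p) * p ^ p) := by gcongr
    _ = p ^ p * Real.exp (1 - p) := by
      rw [← mul_assoc, ← Real.exp_add]
      ring_nf

theorem integral_exp_neg_mul_le {φ : ℝ → ℝ} {D γ x : ℝ} (hφ : ContinuousOn φ (Icc 0 1))
    (hγ : 0 < γ) (hD : 0 ≤ D) (hφD : ∀ y ∈ Ioc (0 : ℝ) 1, φ y ≤ D * y ^ γ) (hx : 0 ≤ x) :
    ∫ y in (0 : ℝ)..1, Real.exp (-(x * y)) * φ y
      ≤ D * (Real.exp 1 * Real.Gamma (1 + γ)) * (1 + x) ^ (-(1 + γ)) := by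
  have hx1 : 0 < 1 + x := by linarith
  have hint : IntegrableOn (fun y : ℝ ↦ y ^ γ * Real.exp (-((1 + x) * y))) (Ioi 0) := by
    simpa only [Real.rpow_one, neg_mul] using
      integrableOn_rpow_mul_exp_neg_mul_rpow (p := 1) (by linarith : -1 < γ) one_pos hx1
  have hGamma : ∫ y in Ioi (0 : ℝ), y ^ γ * Real.exp (-((1 + x) * y))
      = Real.Gamma (1 + γ) * (1 + x) ^ (-(1 + γ)) := by
    have h := Real.integral_rpow_mul_exp_neg_mul_Ioi (by linarith : 0 < 1 + γ) hx1
    rwa [add_sub_cancel_left, one_div, Real.inv_rpow hx1.le, ← Real.rpow_neg hx1.le,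
      mul_comm ((1 + x) ^ _)] at h
  rw [intervalIntegral.integral_of_le zero_le_one]
  calc ∫ y in Ioc (0 : ℝ) 1, Real.exp (-(x * y)) * φ y
    _ ≤ ∫ y in Ioc (0 : ℝ) 1, D * Real.exp 1 * (y ^ γ * Real.exp (-((1 + x) * y))) := by
      refine setIntegral_mono_on ?_ ?_ measurableSet_Ioc fun y hy ↦ ?_
      · exact (ContinuousOn.mul (by fun_prop) hφ).integrableOn_Icc.mono_set Ioc_subset_Icc_self
      · exact IntegrableOn.mono_set (hint.const_mul _) Ioc_subset_Ioi_self
      · have hexp : Real.exp (-(x * y)) ≤ Real.exp 1 * Real.exp (-((1 + x) * y)) := by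
          rw [← Real.exp_add]
          gcongr
          linarith [hy.2]
        have hpow : 0 ≤ D * y ^ γ := mul_nonneg hD (Real.rpow_nonneg hy.1.le _)
        calc Real.exp (-(x * y)) * φ y
          _ ≤ Real.exp (-(x * y)) * (D * y ^ γ) := by gcongr; exact hφD y hy
          _ ≤ Real.exp 1 * Real.exp (-((1 + x) * y)) * (D * y ^ γ) := by gcongr
          _ = _ := by ring
    _ ≤ ∫ y in Ioi (0 : ℝ), D * Real.exp 1 * (y ^ γ * Real.exp (-((1 + x) * y))) := by
      refine setIntegral_mono_set (hint.const_mul _) ?_ Ioc_subset_Ioi_self.eventuallyLE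
      filter_upwards [ae_restrict_mem measurableSet_Ioi] with y (hy : 0 < y)
      simp only [Pi.zero_apply]
      positivity
    _ = D * (Real.exp 1 * Real.Gamma (1 + γ)) * (1 + x) ^ (-(1 + γ)) := by
      rw [integral_const_mul, hGamma]
      ring

theorem HolomorphicOnHalfStrip.exists_abs_re_integral_le {g : ℝ → ℝ} {γ : ℝ}
    (hg : IntegrableOn g (Ioi 0)) (hg0 : Tendsto g atTop (𝓝 0)) (hγ : 0 < γ) :
    ∃ C, 0 ≤ C ∧ ∀ (G D : ℝ) (Φ : ℂ → ℂ), 0 ≤ G → 0 ≤ D →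
      HolomorphicOnHalfStrip (fun s ↦ G * g s) Φ →
      (∀ y : ℝ, y ∈ Ioc (0 : ℝ) 1 → |(Φ (-(Complex.I * y))).im| ≤ D * y ^ γ) → ∀ x : ℝ, 0 ≤ x →
      |(∫ s in Ioi (0 : ℝ), Complex.exp (-Complex.I * s * x) * Φ s).re|
        ≤ C * (G + D) * (1 + x) ^ (-(1 + γ)) := by
  have hp : 0 < 1 + γ := by linarith
  have := Real.Gamma_pos_of_pos hp
  set C₁ := (1 + γ) ^ (1 + γ) * Real.exp (1 - (1 + γ)) * |∫ s in Ioi (0 : ℝ), g s|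
  set C₂ := Real.exp 1 * Real.Gamma (1 + γ)
  have hC₁ : 0 ≤ C₁ := by positivity
  have hC₂ : 0 ≤ C₂ := by positivity
  refine ⟨C₁ + C₂, by positivity, fun G D Φ hG hD h hΦ x hx ↦ ?_⟩
  have hcont : ContinuousOn (fun y : ℝ ↦ |(Φ (-(Complex.I * y))).im|) (Icc 0 1) :=
    (Complex.continuous_im.comp_continuousOn
      (h.continuousOn.comp (by fun_prop) fun y hy ↦ neg_I_mul_mem_halfStrip hy)).abs
  have hbottom : Real.exp (-x) * ∫ s in Ioi (0 : ℝ), G * g s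
      ≤ C₁ * G * (1 + x) ^ (-(1 + γ)) := by
    rw [integral_const_mul]
    calc Real.exp (-x) * (G * ∫ s in Ioi (0 : ℝ), g s)
      _ ≤ Real.exp (-x) * (G * |∫ s in Ioi (0 : ℝ), g s|) := by
        gcongr
        exact le_abs_self _
      _ ≤ (1 + γ) ^ (1 + γ) * Real.exp (1 - (1 + γ)) * (1 + x) ^ (-(1 + γ))
          * (G * |∫ s in Ioi (0 : ℝ), g s|) := by
        gcongr
        exact exp_neg_le_mul_rpow hp (by linarith)
      _ = C₁ * G * (1 + x) ^ (-(1 + γ)) := by ring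
  calc _ ≤ C₁ * G * (1 + x) ^ (-(1 + γ)) + D * C₂ * (1 + x) ^ (-(1 + γ)) :=
        (h.abs_re_integral_le (hg.const_mul G) (by simpa using hg0.const_mul G) hx).trans
          (add_le_add hbottom (integral_exp_neg_mul_le hcont hγ hD hΦ hx))
    _ ≤ (C₁ + C₂) * (G + D) * (1 + x) ^ (-(1 + γ)) := by
      rw [← add_mul]
      gcongr
      nlinarith [mul_nonneg hC₁ hD, mul_nonneg hC₂ hG]

/-- A majorant of the characteristic function and of its parameter derivatives along the lines
`s - iy`: the factor `(1 + s) ^ 3` bounds the derivatives of the cumulant. -/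
noncomputable def envelope (c a s : ℝ) : ℝ := (1 + s) ^ 3 * Real.exp (-c * s ^ a)

theorem integrableOn_envelope {c a : ℝ} (hc : 0 < c) (ha : 0 < a) :
    IntegrableOn (envelope c a) (Ioi 0) := by
  have hpow : ∀ n : ℕ, IntegrableOn (fun s : ℝ ↦ s ^ n * Real.exp (-c * s ^ a)) (Ioi 0) :=
    fun n ↦ by
      simpa only [Real.rpow_natCast] using integrableOn_rpow_mul_exp_neg_mul_rpow (p := a)
        (neg_one_lt_zero.trans_le n.cast_nonneg) ha hc
  refine ((((hpow 0).add ((hpow 1).const_mul 3)).add ((hpow 2).const_mul 3)).add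
    (hpow 3)).congr (Eventually.of_forall fun s ↦ ?_)
  simp only [Pi.add_apply, envelope]
  ring

theorem tendsto_envelope {c a : ℝ} (hc : 0 < c) (ha : 0 < a) :
    Tendsto (envelope c a) atTop (𝓝 0) := by
  have hlim := ((tendsto_rpow_mul_exp_neg_mul_atTop_nhds_zero (3 / a) c hc).comp
    (tendsto_rpow_atTop ha)).const_mul 8
  rw [mul_zero] at hlim
  refine squeeze_zero' ?_ ?_ hlim
  · filter_upwards [eventually_ge_atTop 0] with s hs
    rw [envelope]
    positivity
  · filter_upwards [eventually_ge_atTop 1] with s hs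
    have hs0 : 0 ≤ s := zero_le_one.trans hs
    have hcube : (s ^ a) ^ (3 / a) = s ^ 3 := by
      rw [← Real.rpow_mul hs0, mul_div_cancel₀ _ ha.ne']
      exact_mod_cast Real.rpow_natCast s 3
    calc envelope c a s
      _ ≤ (2 * s) ^ 3 * Real.exp (-c * s ^ a) := by
        rw [envelope]
        gcongr
        linarith
      _ = 8 * ((s ^ a) ^ (3 / a) * Real.exp (-c * s ^ a)) := by rw [hcube]; ring

end ContourShift

/-! ### The characteristic function on the half-strip -/

section CharFunExtension

open Set Topology

/-- The holomorphic extension of the stable characteristic function from the positive half-line to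
the slit plane. The value at `0` is set by hand, because `Complex.log 0 = 0` makes
`cumulant θ 0 ≠ 0`. -/
noncomputable def charFunExt (θ : Fin 4 → ℝ) (t : ℂ) : ℂ :=
  if t = 0 then 1 else Complex.exp (cumulant θ t)

theorem charFunExt_zero (θ : Fin 4 → ℝ) : charFunExt θ 0 = 1 := if_pos rfl

theorem charFunExt_of_ne_zero (θ : Fin 4 → ℝ) {t : ℂ} (ht : t ≠ 0) :
    charFunExt θ t = Complex.exp (cumulant θ t) := if_neg ht

theorem differentiableAt_charFunExt (θ : Fin 4 → ℝ) {t : ℂ} (ht : t ∈ Complex.slitPlane) :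
    DifferentiableAt ℂ (charFunExt θ) t := by
  refine (differentiableAt_cumulant θ ht).cexp.congr_of_eventuallyEq ?_
  filter_upwards [isOpen_ne.mem_nhds (Complex.slitPlane_ne_zero ht)] with z hz
  exact charFunExt_of_ne_zero θ hz

theorem mem_slitPlane_of_mem_halfStrip {t : ℂ} (ht : t ∈ halfStrip) (h0 : t ≠ 0) :
    t ∈ Complex.slitPlane := by
  rw [Complex.mem_slitPlane_iff, or_iff_not_imp_left, not_lt]
  exact fun hre him ↦ h0 (Complex.ext (hre.antisymm ht.1) him)

theorem charFunExt_neg_I_mul_im (θ : Fin 4 → ℝ) {y : ℝ} (hy : y ≠ 0) :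
    (charFunExt θ (-(Complex.I * y))).im
      = ‖charFunExt θ (-(Complex.I * y))‖ * Real.sin (cumulant θ (-(Complex.I * y))).im := by
  rw [charFunExt_of_ne_zero θ (by simpa using hy), Complex.exp_im, Complex.norm_exp]

namespace ParamBox

variable (B : ParamBox) {θ θ' : Fin 4 → ℝ}

theorem Mem.tendsto_charFunExt_zero {B : ParamBox} (h : B.Mem θ) :
    Tendsto (charFunExt θ) (𝓝[halfStrip] 0) (𝓝 1) := by
  have hlo : 0 < min B.a₁ 1 := lt_min B.a₁_pos one_pos
  obtain ⟨C, hC, hbound⟩ := B.exists_norm_cumulant_le (half_lt_self hlo)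
  set γ := min B.a₁ 1 / 2
  have hγ : 0 < γ := half_pos hlo
  have hcont : Continuous fun t : ℂ ↦ C * (‖t‖ ^ γ + ‖t‖ ^ (3 : ℝ)) :=
    continuous_const.mul ((continuous_norm.rpow_const fun _ ↦ Or.inr hγ.le).add
      (continuous_norm.rpow_const fun _ ↦ Or.inr (by norm_num)))
  have hzero : Tendsto (fun t : ℂ ↦ C * (‖t‖ ^ γ + ‖t‖ ^ (3 : ℝ))) (𝓝[halfStrip] 0) (𝓝 0) := by
    simpa [hγ.ne'] using hcont.tendsto 0 |>.mono_left nhdsWithin_le_nhds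
  have hlim : Tendsto (fun t : ℂ ↦ if t = 0 then 0 else cumulant θ t) (𝓝[halfStrip] 0) (𝓝 0) := by
    refine squeeze_zero_norm' ?_ hzero
    filter_upwards [self_mem_nhdsWithin] with t ht
    split_ifs with h0
    · rw [norm_zero]
      positivity
    · exact hbound θ h t h0 ht.1
  have hexp := (Complex.continuous_exp.tendsto 0).comp hlim
  rw [Complex.exp_zero] at hexp
  refine hexp.congr fun t ↦ ?_
  rw [Function.comp_apply, charFunExt, apply_ite Complex.exp, Complex.exp_zero]

theorem Mem.continuousOn_charFunExt {B : ParamBox} (h : B.Mem θ) :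
    ContinuousOn (charFunExt θ) halfStrip := fun t ht ↦ by
  rcases eq_or_ne t 0 with rfl | h0
  · simpa only [ContinuousWithinAt, charFunExt_zero] using h.tendsto_charFunExt_zero
  · exact (differentiableAt_charFunExt θ
      (mem_slitPlane_of_mem_halfStrip ht h0)).continuousAt.continuousWithinAt

theorem norm_rpow_add_norm_rpow_le {γ : ℝ} (hγ : γ ∈ Icc 0 3) {t : ℂ} (ht : t ∈ halfStrip) :
    ‖t‖ ^ γ + ‖t‖ ^ (3 : ℝ) ≤ 2 * (1 + t.re) ^ 3 := by
  have hnorm : ‖t‖ ≤ 1 + t.re := (norm_le_of_mem_halfStrip ht).trans_eq (add_comm _ _)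
  have hone : 1 ≤ 1 + t.re := le_add_of_nonneg_right ht.1
  have hcube : (1 + t.re) ^ (3 : ℝ) = (1 + t.re) ^ 3 := by exact_mod_cast Real.rpow_natCast _ 3
  have hlow : ‖t‖ ^ γ ≤ (1 + t.re) ^ (3 : ℝ) :=
    (Real.rpow_le_rpow (norm_nonneg t) hnorm hγ.1).trans
      (Real.rpow_le_rpow_of_exponent_le hone hγ.2)
  have hhigh : ‖t‖ ^ (3 : ℝ) ≤ (1 + t.re) ^ (3 : ℝ) := by gcongr
  rw [← hcube, two_mul]
  exact add_le_add hlow hhigh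

theorem exists_norm_charFunExt_le_exp :
    ∃ c, 0 < c ∧ ∃ C, 0 ≤ C ∧ ∀ θ, B.Mem θ → ∀ t ∈ halfStrip,
      ‖charFunExt θ t‖ ≤ C * Real.exp (-c * t.re ^ B.a₁) := by
  obtain ⟨c, hc, C, hC, hre⟩ := B.exists_cumulant_re_le
  refine ⟨c, hc, Real.exp C, (Real.exp_pos C).le, fun θ h t ht ↦ ?_⟩
  rcases eq_or_ne t 0 with rfl | h0
  · simpa [charFunExt_zero, Real.zero_rpow B.a₁_pos.ne'] using hC
  · rw [charFunExt_of_ne_zero θ h0, Complex.norm_exp, ← Real.exp_add, Real.exp_le_exp, add_comm]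
    exact hre θ h t ht h0

theorem exists_norm_cumulant_sub_le_of_mem_halfStrip :
    ∃ C, 0 ≤ C ∧ ∀ θ, B.Mem θ → ∀ θ', B.Mem θ' → ∀ t ∈ halfStrip, t ≠ 0 →
      ‖cumulant θ t - cumulant θ' t‖ ≤ C * paramDist θ θ' * (1 + t.re) ^ 3 := by
  have hlo : 0 < min B.a₁ 1 := lt_min B.a₁_pos one_pos
  obtain ⟨C, hC, hsub⟩ := B.exists_norm_cumulant_sub_le (half_lt_self hlo)
  have hγ : min B.a₁ 1 / 2 ∈ Icc 0 3 :=
    ⟨(half_pos hlo).le, ((half_lt_self hlo).le.trans (min_le_right _ _)).trans (by norm_num)⟩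
  refine ⟨2 * C, by positivity, fun θ h θ' h' t ht h0 ↦ ?_⟩
  have hd := paramDist_nonneg θ θ'
  calc ‖cumulant θ t - cumulant θ' t‖
    _ ≤ C * paramDist θ θ' * (‖t‖ ^ (min B.a₁ 1 / 2) + ‖t‖ ^ (3 : ℝ)) := hsub θ h θ' h' t h0 ht.1
    _ ≤ C * paramDist θ θ' * (2 * (1 + t.re) ^ 3) := by
      gcongr
      exact norm_rpow_add_norm_rpow_le hγ ht
    _ = 2 * C * paramDist θ θ' * (1 + t.re) ^ 3 := by ring

theorem exists_norm_charFunExt_le :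
    ∃ c, 0 < c ∧ ∃ G, 0 ≤ G ∧
      (∀ θ, B.Mem θ → ∀ t ∈ halfStrip, ‖charFunExt θ t‖ ≤ G * envelope c B.a₁ t.re) ∧
      ∀ θ, B.Mem θ → ∀ θ', B.Mem θ' → ∀ t ∈ halfStrip,
        ‖charFunExt θ t - charFunExt θ' t‖ ≤ G * paramDist θ θ' * envelope c B.a₁ t.re := by
  obtain ⟨c, hc, C, hC, hexp⟩ := B.exists_norm_charFunExt_le_exp
  obtain ⟨D, hD, hsub⟩ := B.exists_norm_cumulant_sub_le_of_mem_halfStrip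
  refine ⟨c, hc, C * (1 + D), by positivity, fun θ h t ht ↦ ?_, fun θ h θ' h' t ht ↦ ?_⟩
  · have hpow : 1 ≤ (1 + t.re) ^ 3 := one_le_pow₀ (le_add_of_nonneg_right ht.1)
    refine (hexp θ h t ht).trans ?_
    rw [envelope]
    refine mul_le_mul (le_mul_of_one_le_right hC (le_add_of_nonneg_right hD))
      (le_mul_of_one_le_left (Real.exp_pos _).le hpow) (Real.exp_pos _).le (by positivity)
  · have hre := ht.1
    have hd := paramDist_nonneg θ θ'
    rw [envelope]
    rcases eq_or_ne t 0 with rfl | h0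
    · rw [charFunExt_zero, charFunExt_zero, sub_self, norm_zero]
      positivity
    have hθ := hexp θ h t ht
    have hθ' := hexp θ' h' t ht
    rw [charFunExt_of_ne_zero _ h0] at hθ hθ'
    rw [charFunExt_of_ne_zero θ h0, charFunExt_of_ne_zero θ' h0]
    calc ‖Complex.exp (cumulant θ t) - Complex.exp (cumulant θ' t)‖
      _ ≤ C * Real.exp (-c * t.re ^ B.a₁) * ‖cumulant θ t - cumulant θ' t‖ :=
        norm_cexp_sub_cexp_le hθ hθ'
      _ ≤ C * Real.exp (-c * t.re ^ B.a₁) * (D * paramDist θ θ' * (1 + t.re) ^ 3) := by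
        gcongr
        exact hsub θ h θ' h' t ht h0
      _ = C * D * paramDist θ θ' * ((1 + t.re) ^ 3 * Real.exp (-c * t.re ^ B.a₁)) := by ring
      _ ≤ C * (1 + D) * paramDist θ θ' * ((1 + t.re) ^ 3 * Real.exp (-c * t.re ^ B.a₁)) := by
        gcongr
        exact le_add_of_nonneg_left zero_le_one

end ParamBox

end CharFunExtension

/-! ### The jump of the characteristic function across the imaginary axis -/

section Jump

open Set Topology

theorem abs_exp_sub_exp_le {u v W : ℝ} (hu : Real.exp u ≤ W) (hv : Real.exp v ≤ W) :
    |Real.exp u - Real.exp v| ≤ W * |u - v| := by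
  have h := norm_cexp_sub_cexp_le (z := u) (w := v) (W := W)
  simp only [← Complex.ofReal_exp, ← Complex.ofReal_sub, Complex.norm_real, Real.norm_eq_abs,
    Real.abs_exp] at h
  exact h hu hv

theorem abs_charFunExt_neg_I_mul_im_le (θ : Fin 4 → ℝ) {y : ℝ} (hy : y ≠ 0) :
    |(charFunExt θ (-(Complex.I * y))).im| ≤
      ‖charFunExt θ (-(Complex.I * y))‖ * |(cumulant θ (-(Complex.I * y))).im| := by
  rw [charFunExt_neg_I_mul_im θ hy, abs_mul, abs_norm]
  exact mul_le_mul_of_nonneg_left Real.abs_sin_le_abs (norm_nonneg _)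

theorem abs_charFunExt_neg_I_mul_im_sub_le (θ θ' : Fin 4 → ℝ) {y : ℝ} (hy : y ≠ 0) :
    |(charFunExt θ (-(Complex.I * y)) - charFunExt θ' (-(Complex.I * y))).im| ≤
      ‖charFunExt θ (-(Complex.I * y)) - charFunExt θ' (-(Complex.I * y))‖
          * |(cumulant θ (-(Complex.I * y))).im|
        + ‖charFunExt θ' (-(Complex.I * y))‖
          * |(cumulant θ (-(Complex.I * y))).im - (cumulant θ' (-(Complex.I * y))).im| := by
  rw [Complex.sub_im, charFunExt_neg_I_mul_im θ hy, charFunExt_neg_I_mul_im θ' hy]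
  refine (norm_mul_sub_mul_le (R := ℝ) _ _ _ _).trans ?_
  simp only [Real.norm_eq_abs, abs_norm]
  exact add_le_add
    (mul_le_mul (abs_norm_sub_norm_le _ _) Real.abs_sin_le_abs (abs_nonneg _) (norm_nonneg _))
    (mul_le_mul_of_nonneg_left (Real.abs_sin_sub_sin_le _ _) (norm_nonneg _))

namespace ParamBox

variable {B : ParamBox} {θ θ' : Fin 4 → ℝ} {γ y : ℝ}

theorem Mem.rpow_scale_mul_le (h : B.Mem θ) (hγ : γ ≤ B.a₁) (hy : y ∈ Ioc (0 : ℝ) 1) :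
    (θ 1 * y) ^ θ 2 ≤ Real.exp (2 * B.Λ) * y ^ γ := by
  rw [Real.mul_rpow h.scale_pos.le hy.1.le]
  refine mul_le_mul ?_ (Real.rpow_le_rpow_of_exponent_ge hy.1 hy.2 (hγ.trans h.le_index))
    (Real.rpow_nonneg hy.1.le _) (Real.exp_pos _).le
  rw [Real.rpow_def_of_pos h.scale_pos, mul_comm, Real.exp_le_exp]
  exact h.mul_log_scale_le (Ioo_subset_Icc_self h.index_mem)

theorem Mem.abs_index_mul_log_scale_mul_sub_le (h : B.Mem θ) (h' : B.Mem θ') (hy : 0 < y) :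
    |θ 2 * Real.log (θ 1 * y) - θ' 2 * Real.log (θ' 1 * y)|
      ≤ (2 * Real.exp B.Λ + B.Λ + |Real.log y|) * paramDist θ θ' := by
  have hd := paramDist_nonneg θ θ'
  rw [Real.log_mul h.scale_pos.ne' hy.ne', Real.log_mul h'.scale_pos.ne' hy.ne']
  have hlog : |Real.log (θ 1) + Real.log y| ≤ B.Λ + |Real.log y| :=
    (abs_add_le _ _).trans (by gcongr; exact h.abs_log_scale_le)
  calc |θ 2 * (Real.log (θ 1) + Real.log y) - θ' 2 * (Real.log (θ' 1) + Real.log y)|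
    _ ≤ |θ 2 - θ' 2| * |Real.log (θ 1) + Real.log y|
        + |θ' 2| * |Real.log (θ 1) + Real.log y - (Real.log (θ' 1) + Real.log y)| :=
      norm_mul_sub_mul_le (R := ℝ) _ _ _ _
    _ ≤ paramDist θ θ' * (B.Λ + |Real.log y|) + 2 * (Real.exp B.Λ * paramDist θ θ') := by
      rw [add_sub_add_right_eq_sub]
      gcongr
      · exact abs_sub_le_paramDist θ θ' 2
      · exact (abs_of_pos h'.index_mem.1).trans_le h'.index_mem.2.le
      · exact h.abs_log_scale_sub_le h'
    _ = (2 * Real.exp B.Λ + B.Λ + |Real.log y|) * paramDist θ θ' := by ring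

theorem Mem.abs_rpow_scale_mul_sub_le (h : B.Mem θ) (h' : B.Mem θ') (hγ : γ < B.a₁)
    (hy : y ∈ Ioc (0 : ℝ) 1) : |(θ 1 * y) ^ θ 2 - (θ' 1 * y) ^ θ' 2|
      ≤ Real.exp (2 * B.Λ) * (2 * Real.exp B.Λ + B.Λ + 1 / (B.a₁ - γ)) * paramDist θ θ'
        * y ^ γ := by
  have hexp : ∀ {θ}, B.Mem θ → (θ 1 * y) ^ θ 2 = Real.exp (θ 2 * Real.log (θ 1 * y)) :=
    fun h ↦ by rw [Real.rpow_def_of_pos (mul_pos h.scale_pos hy.1), mul_comm]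
  have hle : ∀ {θ}, B.Mem θ →
      Real.exp (θ 2 * Real.log (θ 1 * y)) ≤ Real.exp (2 * B.Λ) * y ^ B.a₁ :=
    fun h ↦ hexp h ▸ h.rpow_scale_mul_le le_rfl hy
  have hd := paramDist_nonneg θ θ'
  have hΛ := B.Λ_nonneg
  have hy0 := hy.1
  have hδ : 0 < B.a₁ - γ := sub_pos.2 hγ
  set d := paramDist θ θ'
  have hlog_pow : |Real.log y| * y ^ (B.a₁ - γ) ≤ 1 / (B.a₁ - γ) := by
    have h := Real.abs_log_mul_self_rpow_lt y _ hy0 hy.2 hδ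
    rw [abs_mul, Real.abs_rpow_of_nonneg hy0.le, abs_of_pos hy0] at h
    exact h.le
  rw [hexp h, hexp h']
  calc |Real.exp (θ 2 * Real.log (θ 1 * y)) - Real.exp (θ' 2 * Real.log (θ' 1 * y))|
    _ ≤ Real.exp (2 * B.Λ) * y ^ B.a₁ * ((2 * Real.exp B.Λ + B.Λ + |Real.log y|) * d) :=
      (abs_exp_sub_exp_le (hle h) (hle h')).trans
        (by gcongr; exact h.abs_index_mul_log_scale_mul_sub_le h' hy0)
    _ = Real.exp (2 * B.Λ) * ((2 * Real.exp B.Λ + B.Λ) * y ^ (B.a₁ - γ)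
        + |Real.log y| * y ^ (B.a₁ - γ)) * d * y ^ γ := by
      rw [show B.a₁ = B.a₁ - γ + γ by ring, Real.rpow_add hy0]
      ring_nf
    _ ≤ Real.exp (2 * B.Λ) * ((2 * Real.exp B.Λ + B.Λ) * 1 + 1 / (B.a₁ - γ)) * d * y ^ γ := by
      gcongr
      exact Real.rpow_le_one hy0.le hy.2 hδ.le
    _ = Real.exp (2 * B.Λ) * (2 * Real.exp B.Λ + B.Λ + 1 / (B.a₁ - γ)) * d * y ^ γ := by
      rw [mul_one]

theorem Mem.abs_one_add_skew_le (h : B.Mem θ) : |1 + θ 3| ≤ 2 :=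
  (abs_add_le _ _).trans (by rw [abs_one]; linarith [h.abs_skew_le])

theorem Mem.abs_one_add_skew_mul_sin_sub_le (h' : B.Mem θ') :
    |(1 + θ 3) * Real.sin (Real.pi * θ 2 / 2) - (1 + θ' 3) * Real.sin (Real.pi * θ' 2 / 2)|
      ≤ 5 * paramDist θ θ' := by
  have hsin : |Real.sin (Real.pi * θ 2 / 2) - Real.sin (Real.pi * θ' 2 / 2)|
      ≤ 2 * paramDist θ θ' :=
    calc |Real.sin (Real.pi * θ 2 / 2) - Real.sin (Real.pi * θ' 2 / 2)|
      _ ≤ |Real.pi * θ 2 / 2 - Real.pi * θ' 2 / 2| := Real.abs_sin_sub_sin_le _ _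
      _ = Real.pi / 2 * |θ 2 - θ' 2| := by
        rw [show Real.pi * θ 2 / 2 - Real.pi * θ' 2 / 2 = Real.pi / 2 * (θ 2 - θ' 2) by ring,
          abs_mul, abs_of_pos Real.pi_div_two_pos]
      _ ≤ 2 * paramDist θ θ' := by
        gcongr
        · linarith [Real.pi_le_four]
        · exact abs_sub_le_paramDist θ θ' 2
  calc |(1 + θ 3) * Real.sin (Real.pi * θ 2 / 2) - (1 + θ' 3) * Real.sin (Real.pi * θ' 2 / 2)|
    _ ≤ |θ 3 - θ' 3| * |Real.sin (Real.pi * θ 2 / 2)|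
        + |1 + θ' 3| * |Real.sin (Real.pi * θ 2 / 2) - Real.sin (Real.pi * θ' 2 / 2)| := by
      simpa using norm_mul_sub_mul_le (1 + θ 3) (Real.sin (Real.pi * θ 2 / 2)) (1 + θ' 3)
        (Real.sin (Real.pi * θ' 2 / 2))
    _ ≤ paramDist θ θ' * 1 + 2 * (2 * paramDist θ θ') := by
      gcongr
      · exact paramDist_nonneg θ θ'
      · exact abs_sub_le_paramDist θ θ' 3
      · exact Real.abs_sin_le_one _
      · exact h'.abs_one_add_skew_le
    _ = 5 * paramDist θ θ' := by ring

theorem Mem.abs_one_add_skew_mul_sin_le (h : B.Mem θ) :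
    |(1 + θ 3) * Real.sin (Real.pi * θ 2 / 2)| ≤ 2 := by
  rw [abs_mul]
  exact (mul_le_of_le_one_right (abs_nonneg _) (Real.abs_sin_le_one _)).trans
    h.abs_one_add_skew_le

theorem Mem.abs_cumulant_neg_I_mul_im_le (h : B.Mem θ) (hγ : γ ≤ B.a₁) (hy : y ∈ Ioc (0 : ℝ) 1) :
    |(cumulant θ (-(Complex.I * y))).im| ≤ 2 * Real.exp (2 * B.Λ) * y ^ γ := by
  rw [cumulant_neg_I_mul_im h.scale_pos h.index_mem hy.1, abs_mul, mul_assoc,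
    abs_of_nonneg (Real.rpow_nonneg (mul_pos h.scale_pos hy.1).le _)]
  exact mul_le_mul h.abs_one_add_skew_mul_sin_le (h.rpow_scale_mul_le hγ hy)
    (Real.rpow_nonneg (mul_pos h.scale_pos hy.1).le _) zero_le_two

variable (B)

theorem exists_abs_cumulant_neg_I_mul_im_sub_le (hγ : γ < B.a₁) :
    ∃ C, 0 ≤ C ∧ ∀ θ, B.Mem θ → ∀ θ', B.Mem θ' → ∀ y ∈ Ioc (0 : ℝ) 1,
      |(cumulant θ (-(Complex.I * y))).im - (cumulant θ' (-(Complex.I * y))).im|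
        ≤ C * paramDist θ θ' * y ^ γ := by
  have hΛ := B.Λ_nonneg
  have : 0 < B.a₁ - γ := sub_pos.2 hγ
  set E := Real.exp (2 * B.Λ)
  set K := 2 * Real.exp B.Λ + B.Λ + 1 / (B.a₁ - γ)
  refine ⟨5 * E + 2 * (E * K), by positivity, fun θ h θ' h' y hy ↦ ?_⟩
  rw [cumulant_neg_I_mul_im h.scale_pos h.index_mem hy.1,
    cumulant_neg_I_mul_im h'.scale_pos h'.index_mem hy.1]
  have hd := paramDist_nonneg θ θ'
  calc _ ≤ |(1 + θ 3) * Real.sin (Real.pi * θ 2 / 2) - (1 + θ' 3) * Real.sin (Real.pi * θ' 2 / 2)|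
          * |(θ 1 * y) ^ θ 2|
        + |(1 + θ' 3) * Real.sin (Real.pi * θ' 2 / 2)|
          * |(θ 1 * y) ^ θ 2 - (θ' 1 * y) ^ θ' 2| := norm_mul_sub_mul_le (R := ℝ) _ _ _ _
    _ ≤ 5 * paramDist θ θ' * (E * y ^ γ) + 2 * (E * K * paramDist θ θ' * y ^ γ) := by
      refine add_le_add (mul_le_mul h'.abs_one_add_skew_mul_sin_sub_le ?_ (abs_nonneg _)
        (by positivity)) (mul_le_mul h'.abs_one_add_skew_mul_sin_le
        (h.abs_rpow_scale_mul_sub_le h' hγ hy) (abs_nonneg _) zero_le_two)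
      rw [abs_of_nonneg (Real.rpow_nonneg (mul_pos h.scale_pos hy.1).le _)]
      exact h.rpow_scale_mul_le hγ.le hy
    _ = (5 * E + 2 * (E * K)) * paramDist θ θ' * y ^ γ := by ring

theorem exists_abs_charFunExt_neg_I_mul_im_le (hγ : γ < B.a₁) {c G : ℝ} (hG : 0 ≤ G)
    (hle : ∀ θ, B.Mem θ → ∀ t ∈ halfStrip, ‖charFunExt θ t‖ ≤ G * envelope c B.a₁ t.re)
    (hsub : ∀ θ, B.Mem θ → ∀ θ', B.Mem θ' → ∀ t ∈ halfStrip,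
      ‖charFunExt θ t - charFunExt θ' t‖ ≤ G * paramDist θ θ' * envelope c B.a₁ t.re) :
    ∃ D, 0 ≤ D ∧
      (∀ θ, B.Mem θ → ∀ y ∈ Ioc (0 : ℝ) 1,
        |(charFunExt θ (-(Complex.I * y))).im| ≤ D * y ^ γ) ∧
      ∀ θ, B.Mem θ → ∀ θ', B.Mem θ' → ∀ y ∈ Ioc (0 : ℝ) 1,
        |(charFunExt θ (-(Complex.I * y)) - charFunExt θ' (-(Complex.I * y))).im|
          ≤ D * paramDist θ θ' * y ^ γ := by
  obtain ⟨C, hC, hJ⟩ := B.exists_abs_cumulant_neg_I_mul_im_sub_le hγ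
  have hmem : ∀ y ∈ Ioc (0 : ℝ) 1, -(Complex.I * y) ∈ halfStrip :=
    fun y hy ↦ neg_I_mul_mem_halfStrip (Ioc_subset_Icc_self hy)
  have henv : ∀ y : ℝ, envelope c B.a₁ (-(Complex.I * y)).re = 1 := fun y ↦ by
    simp [envelope, Real.zero_rpow B.a₁_pos.ne']
  have hnorm : ∀ θ, B.Mem θ → ∀ y ∈ Ioc (0 : ℝ) 1, ‖charFunExt θ (-(Complex.I * y))‖ ≤ G :=
    fun θ h y hy ↦ by simpa only [henv, mul_one] using hle θ h _ (hmem y hy)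
  have hnorm_sub : ∀ θ, B.Mem θ → ∀ θ', B.Mem θ' → ∀ y ∈ Ioc (0 : ℝ) 1,
      ‖charFunExt θ (-(Complex.I * y)) - charFunExt θ' (-(Complex.I * y))‖ ≤ G * paramDist θ θ' :=
    fun θ h θ' h' y hy ↦ by simpa only [henv, mul_one] using hsub θ h θ' h' _ (hmem y hy)
  set E := 2 * Real.exp (2 * B.Λ)
  refine ⟨G * E + G * C, by positivity, fun θ h y hy ↦ ?_, fun θ h θ' h' y hy ↦ ?_⟩
  · have hy0 := hy.1
    calc |(charFunExt θ (-(Complex.I * y))).im|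
      _ ≤ G * (E * y ^ γ) :=
        (abs_charFunExt_neg_I_mul_im_le θ hy0.ne').trans <| mul_le_mul (hnorm θ h y hy)
          (h.abs_cumulant_neg_I_mul_im_le hγ.le hy) (abs_nonneg _) hG
      _ ≤ (G * E + G * C) * y ^ γ := by
        rw [← mul_assoc]
        gcongr
        exact le_add_of_nonneg_right (by positivity)
  · have hd := paramDist_nonneg θ θ'
    calc |(charFunExt θ (-(Complex.I * y)) - charFunExt θ' (-(Complex.I * y))).im|
      _ ≤ G * paramDist θ θ' * (E * y ^ γ) + G * (C * paramDist θ θ' * y ^ γ) :=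
        (abs_charFunExt_neg_I_mul_im_sub_le θ θ' hy.1.ne').trans <| add_le_add
          (mul_le_mul (hnorm_sub θ h θ' h' y hy) (h.abs_cumulant_neg_I_mul_im_le hγ.le hy)
            (abs_nonneg _) (by positivity))
          (mul_le_mul (hnorm θ' h' y hy) (hJ θ h θ' h' y hy) (abs_nonneg _) hG)
      _ = (G * E + G * C) * paramDist θ θ' * y ^ γ := by ring

theorem exists_abs_re_integral_charFunExt_le (hγ : 0 < γ) (hγB : γ < B.a₁) :
    ∃ C, 0 ≤ C ∧
      (∀ θ, B.Mem θ → ∀ x : ℝ, 0 ≤ x →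
        |(∫ s in Ioi (0 : ℝ), Complex.exp (-Complex.I * s * x) * charFunExt θ s).re|
          ≤ C * (1 + x) ^ (-(1 + γ))) ∧
      ∀ θ, B.Mem θ → ∀ θ', B.Mem θ' → ∀ x : ℝ, 0 ≤ x →
        |(∫ s in Ioi (0 : ℝ), Complex.exp (-Complex.I * s * x)
            * (charFunExt θ s - charFunExt θ' s)).re|
          ≤ C * paramDist θ θ' * (1 + x) ^ (-(1 + γ)) := by
  obtain ⟨c, hc, G, hG, hle, hsub⟩ := B.exists_norm_charFunExt_le
  obtain ⟨D, hD, him, him_sub⟩ := B.exists_abs_charFunExt_neg_I_mul_im_le hγB hG hle hsub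
  obtain ⟨C, hC, htail⟩ := HolomorphicOnHalfStrip.exists_abs_re_integral_le
    (integrableOn_envelope hc B.a₁_pos) (tendsto_envelope hc B.a₁_pos) hγ
  have hdiff : ∀ θ (t : ℂ), 0 < t.re → DifferentiableAt ℂ (charFunExt θ) t :=
    fun θ t ht ↦ differentiableAt_charFunExt θ (Or.inl ht)
  refine ⟨C * (G + D), by positivity, fun θ h ↦ ?_, fun θ h θ' h' x hx ↦ ?_⟩
  · exact htail G D _ hG hD ⟨h.continuousOn_charFunExt, hdiff θ, hle θ h⟩ (him θ h)
  · have hd := paramDist_nonneg θ θ'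
    refine (htail (G * paramDist θ θ') (D * paramDist θ θ') _ (by positivity) (by positivity)
      ⟨h.continuousOn_charFunExt.sub h'.continuousOn_charFunExt,
        fun t ht ↦ (hdiff θ t ht).sub (hdiff θ' t ht), hsub θ h θ' h'⟩ (him_sub θ h θ' h')
      x hx).trans_eq ?_
    ring

end ParamBox

end Jump

/-! ### The stable characteristic function and the upper bound for the density -/

section UpperBound

open Set Topology ComplexConjugate

/-- The parameter of `-X` when `θ = (μ, σ, α, β)` is the parameter of `X`. -/
def reflect (θ : Fin 4 → ℝ) : Fin 4 → ℝ := ![-θ 0, θ 1, θ 2, -θ 3]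

theorem phiM_neg (θ : Fin 4 → ℝ) (t : ℝ) : phiM θ (-t) = conj (phiM θ t) := by
  rw [phiM, phiM, psiM, psiM, ← Complex.exp_conj, mul_neg, abs_neg, Real.sign_neg]
  congr 1
  split_ifs
  all_goals
    simp only [map_add, map_sub, map_mul, map_one, Complex.conj_I, Complex.conj_ofReal]
    push_cast
    ring

theorem phiM_reflect (θ : Fin 4 → ℝ) (t : ℝ) : phiM (reflect θ) t = phiM θ (-t) := by
  by_cases hα : θ 2 = 1
  all_goals
    simp only [phiM, psiM, reflect, Matrix.cons_val, hα, ↓reduceIte, mul_neg, abs_neg,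
      Real.sign_neg]
    push_cast
    ring_nf

theorem fM_reflect (θ : Fin 4 → ℝ) (x : ℝ) : fM (reflect θ) (-x) = fM θ x := by
  change 1 / (2 * Real.pi) * (fourierInt (phiM (reflect θ)) (-x)).re
    = 1 / (2 * Real.pi) * (fourierInt (phiM θ) x).re
  rw [funext (phiM_reflect θ), fourierInt_comp_neg, neg_neg]

theorem paramDist_reflect (θ θ' : Fin 4 → ℝ) :
    paramDist (reflect θ) (reflect θ') = paramDist θ θ' := by
  simp only [paramDist, Fin.sum_univ_four, reflect, Matrix.cons_val]
  congr 1
  ring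

theorem ParamBox.Mem.reflect {B : ParamBox} {θ : Fin 4 → ℝ} (h : B.Mem θ) :
    B.Mem (reflect θ) where
  abs_loc_le := (abs_neg (θ 0)).trans_le h.abs_loc_le
  scale_pos := h.scale_pos
  abs_log_scale_le := h.abs_log_scale_le
  le_index := h.le_index
  index_le := h.index_le
  abs_skew_le := (abs_neg (θ 3)).trans_le h.abs_skew_le

theorem phiM_eq_charFunExt {θ : Fin 4 → ℝ} (hσ : 0 < θ 1) (hα : 0 < θ 2) {t : ℝ} (ht : 0 ≤ t) :
    phiM θ t = charFunExt θ t := by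
  rcases ht.eq_or_lt with rfl | ht
  · simp [charFunExt_zero, phiM, psiM, Real.zero_rpow hα.ne']
  · rw [charFunExt_of_ne_zero θ (by exact_mod_cast ht.ne'), phiM, psiM_eq_cumulant hσ ht]

theorem ofReal_mem_halfStrip {t : ℝ} (ht : 0 ≤ t) : (t : ℂ) ∈ halfStrip := by
  simpa [halfStrip] using ht

theorem integrable_comp_abs {g : ℝ → ℝ} (hg : IntegrableOn g (Ioi 0)) :
    Integrable fun t ↦ g |t| := by
  have hind : Integrable ((Ioi 0).indicator g) := hg.integrable_indicator measurableSet_Ioi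
  refine (hind.add hind.comp_neg).congr ?_
  filter_upwards [Measure.ae_ne volume 0] with t ht
  rcases ht.lt_or_gt with ht | ht
  · simp [ht, ht.le, abs_of_neg ht]
  · simp [ht, ht.le, abs_of_pos ht]

theorem re_fourierInt_eq_two_mul {k : ℝ → ℂ} (hk : Integrable k) (hconj : ∀ t, k (-t) = conj (k t))
    (x : ℝ) : (fourierInt k x).re
      = 2 * (∫ t in Ioi (0 : ℝ), Complex.exp (-Complex.I * t * x) * k t).re := by
  have hint := integrable_cexp_mul hk x
  have hfull := Complex.reCLM.integral_comp_comm hint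
  have hhalf := Complex.reCLM.integral_comp_comm (hint.integrableOn (s := Ioi 0))
  simp only [Complex.reCLM_apply] at hfull hhalf
  rw [fourierInt, ← hfull, ← hhalf,
    ← integral_comp_abs (f := fun t : ℝ ↦ (Complex.exp (-Complex.I * t * x) * k t).re)]
  refine integral_congr_ae (.of_forall fun t ↦ ?_)
  rcases abs_choice t with h | h
  · simp only [h]
  · simp only [h, hconj]
    rw [← Complex.conj_re, map_mul, ← Complex.exp_conj]
    simp

theorem abs_inv_two_pi_mul_re_fourierInt_le {k : ℝ → ℂ} (hk : Integrable k)
    (hconj : ∀ t, k (-t) = conj (k t)) (x : ℝ) :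
    |1 / (2 * Real.pi) * (fourierInt k x).re|
      ≤ |(∫ t in Ioi (0 : ℝ), Complex.exp (-Complex.I * t * x) * k t).re| := by
  rw [re_fourierInt_eq_two_mul hk hconj, ← mul_assoc, abs_mul]
  refine mul_le_of_le_one_left (abs_nonneg _) ?_
  rw [abs_of_pos (by positivity), div_mul_eq_mul_div, div_le_one (by positivity)]
  linarith [Real.pi_gt_three]

namespace ParamBox

variable {B : ParamBox} {θ : Fin 4 → ℝ}

theorem Mem.phiM_eq_charFunExt (h : B.Mem θ) {t : ℝ} (ht : 0 ≤ t) :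
    phiM θ t = charFunExt θ t :=
  _root_.phiM_eq_charFunExt h.scale_pos h.index_mem.1 ht

theorem Mem.continuous_phiM (h : B.Mem θ) : Continuous (phiM θ) := by
  have hext : Continuous fun t : ℝ ↦ charFunExt θ ((max t 0 : ℝ) : ℂ) :=
    h.continuousOn_charFunExt.comp_continuous (by fun_prop)
      fun t ↦ ofReal_mem_halfStrip (le_max_right t 0)
  have heq : phiM θ = fun t ↦ if 0 ≤ t then charFunExt θ ((max t 0 : ℝ) : ℂ)
      else conj (charFunExt θ ((max (-t) 0 : ℝ) : ℂ)) := by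
    funext t
    split_ifs with ht
    · rw [max_eq_left ht, h.phiM_eq_charFunExt ht]
    · have ht : 0 ≤ -t := neg_nonneg.2 (le_of_not_ge ht)
      rw [max_eq_left ht, ← h.phiM_eq_charFunExt ht, ← phiM_neg, neg_neg]
  rw [heq]
  refine hext.if_le (Complex.continuous_conj.comp (hext.comp continuous_neg)) continuous_const
    continuous_id fun t ht ↦ ?_
  simp [← ht, charFunExt_zero]

variable (B) in
theorem exists_norm_phiM_le :
    ∃ g : ℝ → ℝ, Integrable g ∧ (∀ θ, B.Mem θ → ∀ t, ‖phiM θ t‖ ≤ g t) ∧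
      ∀ θ, B.Mem θ → ∀ θ', B.Mem θ' → ∀ t, ‖phiM θ t - phiM θ' t‖ ≤ paramDist θ θ' * g t := by
  obtain ⟨c, hc, G, -, hle, hsub⟩ := B.exists_norm_charFunExt_le
  refine ⟨fun t ↦ G * envelope c B.a₁ |t|,
    (integrable_comp_abs (integrableOn_envelope hc B.a₁_pos)).const_mul G,
    fun θ h t ↦ ?_, fun θ h θ' h' t ↦ ?_⟩
  · have habs : ‖phiM θ t‖ = ‖phiM θ |t|‖ := by
      rcases abs_choice t with ht | ht <;> rw [ht]
      rw [phiM_neg, RCLike.norm_conj]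
    rw [habs, h.phiM_eq_charFunExt (abs_nonneg t)]
    exact hle θ h _ (ofReal_mem_halfStrip (abs_nonneg t))
  · have habs : ‖phiM θ t - phiM θ' t‖ = ‖phiM θ |t| - phiM θ' |t|‖ := by
      rcases abs_choice t with ht | ht <;> rw [ht]
      rw [phiM_neg, phiM_neg, ← map_sub, RCLike.norm_conj]
    rw [habs, h.phiM_eq_charFunExt (abs_nonneg t), h'.phiM_eq_charFunExt (abs_nonneg t)]
    refine (hsub θ h θ' h' _ (ofReal_mem_halfStrip (abs_nonneg t))).trans_eq ?_
    rw [Complex.ofReal_re]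
    ring

theorem Mem.integrable_phiM (h : B.Mem θ) : Integrable (phiM θ) := by
  obtain ⟨g, hg, hle, -⟩ := B.exists_norm_phiM_le
  exact hg.mono' h.continuous_phiM.aestronglyMeasurable (.of_forall (hle θ h))

variable (B) in
theorem exists_abs_fM_le {γ : ℝ} (hγ : 0 < γ) (hγB : γ < B.a₁) :
    ∃ C, 0 ≤ C ∧
      (∀ θ, B.Mem θ → ∀ x, |fM θ x| ≤ C * (1 + |x|) ^ (-(1 + γ))) ∧
      ∀ θ, B.Mem θ → ∀ θ', B.Mem θ' → ∀ x,
        |fM θ x - fM θ' x| ≤ C * paramDist θ θ' * (1 + |x|) ^ (-(1 + γ)) := by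
  obtain ⟨C, hC, hle, hsub⟩ := B.exists_abs_re_integral_charFunExt_le hγ hγB
  have hle_nonneg : ∀ θ, B.Mem θ → ∀ x, 0 ≤ x → |fM θ x| ≤ C * (1 + x) ^ (-(1 + γ)) := by
    intro θ h x hx
    refine (abs_inv_two_pi_mul_re_fourierInt_le h.integrable_phiM (phiM_neg θ) x).trans ?_
    rw [setIntegral_congr_fun measurableSet_Ioi fun t (ht : 0 < t) ↦
      congrArg (_ * ·) (h.phiM_eq_charFunExt ht.le)]
    exact hle θ h x hx
  have hsub_nonneg : ∀ θ, B.Mem θ → ∀ θ', B.Mem θ' → ∀ x, 0 ≤ x →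
      |fM θ x - fM θ' x| ≤ C * paramDist θ θ' * (1 + x) ^ (-(1 + γ)) := by
    intro θ h θ' h' x hx
    have hdiff : fM θ x - fM θ' x
        = 1 / (2 * Real.pi) * (fourierInt (fun t ↦ phiM θ t - phiM θ' t) x).re := by
      rw [fourierInt_sub h.integrable_phiM h'.integrable_phiM, Complex.sub_re, mul_sub]
      rfl
    rw [hdiff]
    refine (abs_inv_two_pi_mul_re_fourierInt_le (k := fun t ↦ phiM θ t - phiM θ' t)
      (h.integrable_phiM.sub h'.integrable_phiM)
      (fun t ↦ by rw [phiM_neg, phiM_neg, map_sub]) x).trans ?_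
    rw [setIntegral_congr_fun measurableSet_Ioi fun t (ht : 0 < t) ↦ congrArg (_ * ·)
      (congrArg₂ (· - ·) (h.phiM_eq_charFunExt ht.le) (h'.phiM_eq_charFunExt ht.le))]
    exact hsub θ h θ' h' x hx
  refine ⟨C, hC, fun θ h x ↦ ?_, fun θ h θ' h' x ↦ ?_⟩
  all_goals rcases abs_cases x with ⟨hx, hx0⟩ | ⟨hx, hx0⟩ <;> rw [hx]
  · exact hle_nonneg θ h x hx0
  · rw [← fM_reflect]
    exact hle_nonneg _ h.reflect _ (neg_nonneg.2 hx0.le)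
  · exact hsub_nonneg θ h θ' h' x hx0
  · rw [← fM_reflect, ← fM_reflect θ', ← paramDist_reflect]
    exact hsub_nonneg _ h.reflect _ h'.reflect _ (neg_nonneg.2 hx0.le)

end ParamBox

end UpperBound

/-! ### Comparison with the Lévy density -/

section LevyDensity

open Set Topology

theorem neg_I_mul_cpow {α : ℝ} (hα : α ≠ 0) (t : ℝ) :
    (-Complex.I * (t : ℂ)) ^ (α : ℂ) =
      ((|t| ^ α : ℝ) : ℂ) * ((Real.cos (Real.pi * α / 2) : ℝ) -
        Complex.I * ((Real.sign t * Real.sin (Real.pi * α / 2) : ℝ) : ℂ)) := by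
  rcases lt_trichotomy t 0 with ht | rfl | ht
  · have hlog : Complex.log (-Complex.I * (t : ℂ)) =
        (Real.log (-t) : ℝ) + (Real.pi : ℂ) / 2 * Complex.I := by
      rw [show -Complex.I * (t : ℂ) = ((-t : ℝ) : ℂ) * Complex.I by push_cast; ring,
        Complex.log_ofReal_mul (neg_pos.2 ht) Complex.I_ne_zero, Complex.log_I]
    rw [Complex.cpow_def_of_ne_zero (by simp [ht.ne]), hlog, abs_of_neg ht, Real.sign_of_neg ht,
      Real.rpow_def_of_pos (neg_pos.2 ht), add_mul, Complex.exp_add,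
      show (Real.pi : ℂ) / 2 * Complex.I * α = (Real.pi * α / 2 : ℂ) * Complex.I by ring,
      Complex.exp_mul_I]
    push_cast
    ring
  · simp [Real.zero_rpow hα, hα]
  · have hlog : Complex.log (-Complex.I * (t : ℂ)) =
        (Real.log t : ℝ) + -((Real.pi : ℂ) / 2) * Complex.I := by
      rw [mul_comm, Complex.log_ofReal_mul ht (neg_ne_zero.2 Complex.I_ne_zero),
        Complex.log_neg_I]
    rw [Complex.cpow_def_of_ne_zero (by simp [ht.ne']), hlog, abs_of_pos ht, Real.sign_of_pos ht,
      Real.rpow_def_of_pos ht, add_mul, Complex.exp_add,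
      show -((Real.pi : ℂ) / 2) * Complex.I * α = (-(Real.pi * α / 2 : ℂ)) * Complex.I by ring,
      Complex.exp_mul_I, Complex.cos_neg, Complex.sin_neg]
    push_cast
    ring

theorem cos_pi_mul_div_two_eq_sinc (α : ℝ) :
    Real.cos (Real.pi * α / 2) =
      -(Real.pi * (α - 1) / 2 * Real.sinc (Real.pi * (α - 1) / 2)) := by
  rw [show Real.pi * α / 2 = Real.pi * (α - 1) / 2 + Real.pi / 2 by ring,
    Real.cos_add_pi_div_two]
  rcases eq_or_ne (Real.pi * (α - 1) / 2) 0 with h | h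
  · simp [h]
  · rw [Real.sinc_of_ne_zero h, mul_div_cancel₀ _ h]

/-- The constant `K` for which the Lévy density of a stable law of index `α` and scale `σ` is
`σ ^ α * (1 ± β) / 2 * K / |y| ^ (1 + α)`. The usual `α * (1 - α) / (Γ(2 - α) * cos (π * α / 2))`
is rewritten so as to be continuous at `α = 1`. -/
noncomputable def levyConst (α : ℝ) : ℝ :=
  2 * α / (Real.pi * Real.Gamma (2 - α) * Real.sinc (Real.pi * (α - 1) / 2))

theorem levyConst_pos {α : ℝ} (hα : α ∈ Ioo (0 : ℝ) 2) : 0 < levyConst α := by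
  have hsinc := half_le_sinc_pi_mul (Ioo_subset_Icc_self hα)
  have hΓ : 0 < Real.Gamma (2 - α) := Real.Gamma_pos_of_pos (sub_pos.2 hα.2)
  have := hα.1
  rw [levyConst]
  positivity

theorem continuousAt_levyConst {α : ℝ} (hα : α ∈ Ioo (0 : ℝ) 2) : ContinuousAt levyConst α := by
  have hsinc := half_le_sinc_pi_mul (Ioo_subset_Icc_self hα)
  have hΓ : 0 < Real.Gamma (2 - α) := Real.Gamma_pos_of_pos (sub_pos.2 hα.2)
  have hΓc : ContinuousAt (fun α ↦ Real.Gamma (2 - α)) α :=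
    (Real.differentiableAt_Gamma fun m ↦ by
      linarith [hα.2, m.cast_nonneg (α := ℝ)]).continuousAt.comp (by fun_prop)
  have hsc : ContinuousAt (fun α ↦ Real.sinc (Real.pi * (α - 1) / 2)) α :=
    (Real.continuous_sinc.comp (by fun_prop)).continuousAt
  unfold levyConst
  exact (by fun_prop : ContinuousAt (fun α : ℝ ↦ 2 * α) α).div
    ((continuousAt_const.mul hΓc).mul hsc) (by positivity)

theorem levyConst_mul_Gamma_div {α : ℝ} (hα : α ∈ Ioo (0 : ℝ) 2) (h1 : α ≠ 1) :
    levyConst α * (Real.Gamma (2 - α) / (α * (α - 1))) = -(Real.cos (Real.pi * α / 2))⁻¹ := by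
  have hsinc := half_le_sinc_pi_mul (Ioo_subset_Icc_self hα)
  have hs : Real.sinc (Real.pi * (α - 1) / 2) ≠ 0 := by positivity
  have hΓ := (Real.Gamma_pos_of_pos (sub_pos.2 hα.2)).ne'
  have hα0 := hα.1.ne'
  have hα1 := sub_ne_zero.2 h1
  rw [levyConst, cos_pi_mul_div_two_eq_sinc]
  field_simp

/-- The coefficient of `|y| ^ (-1 - α)` in the Lévy density of the stable law with parameters `θ`,
on the positive half-line for `e = 1` and on the negative one for `e = -1`. -/
noncomputable def tailWeight (e : ℝ) (θ : Fin 4 → ℝ) : ℝ :=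
  θ 1 ^ θ 2 * (1 + e * θ 3) / 2 * levyConst (θ 2)

theorem tailWeight_mul_Gamma_div {θ : Fin 4 → ℝ} (hα : θ 2 ∈ Ioo (0 : ℝ) 2) (h1 : θ 2 ≠ 1)
    (e : ℝ) :
    tailWeight e θ * (Real.Gamma (2 - θ 2) / (θ 2 * (θ 2 - 1))) =
      -(θ 1 ^ θ 2 * (1 + e * θ 3) / (2 * Real.cos (Real.pi * θ 2 / 2))) := by
  rw [tailWeight, mul_assoc, levyConst_mul_Gamma_div hα h1]
  field_simp

theorem tailWeight_pos {θ : Fin 4 → ℝ} (hθ : θ ∈ ThetaInt) {e : ℝ} (he : |e| = 1) :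
    0 < tailWeight e θ := by
  have hβ : 0 < 1 + e * θ 3 := by
    have : |e * θ 3| < 1 := by rw [abs_mul, he, one_mul]; exact abs_lt.2 hθ.2.2
    linarith [neg_abs_le (e * θ 3)]
  have := levyConst_pos hθ.2.1
  have := Real.rpow_pos_of_pos hθ.1 (θ 2)
  rw [tailWeight]
  positivity

theorem continuousAt_tailWeight {θ : Fin 4 → ℝ} (hθ : θ ∈ ThetaInt) (e : ℝ) :
    ContinuousAt (tailWeight e) θ := by
  have hscale : ContinuousAt (fun θ : Fin 4 → ℝ ↦ θ 1 ^ θ 2) θ :=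
    (continuous_apply 1).continuousAt.rpow (continuous_apply 2).continuousAt (.inl hθ.1.ne')
  have hlevy : ContinuousAt (fun θ : Fin 4 → ℝ ↦ levyConst (θ 2)) θ :=
    ContinuousAt.comp (f := fun θ : Fin 4 → ℝ ↦ θ 2) (continuousAt_levyConst hθ.2.1)
      (continuous_apply 2).continuousAt
  exact ((hscale.mul (continuousAt_const.add
    (continuousAt_const.mul (continuous_apply 3).continuousAt))).div_const 2).mul hlevy

theorem densityCharFun_eq_add_of_even {p : ℝ → ℝ} (hp : Integrable p)
    (heven : ∀ y, p (-y) = p y) (t : ℝ) :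
    densityCharFun p t =
      densityCharFun ((Ioi 0).indicator p) t + densityCharFun ((Ioi 0).indicator p) (-t) := by
  have hint := integrableOn_cexp_mul (hp.integrableOn (s := univ)) t
  rw [integrableOn_univ] at hint
  have hneg : ∫ y in Ioi (0 : ℝ), Complex.exp (Complex.I * y * (-t : ℝ)) * (p y : ℂ) =
      ∫ y in Iic (0 : ℝ), Complex.exp (Complex.I * y * t) * (p y : ℂ) := by
    rw [← neg_zero, ← integral_comp_neg_Ioi, neg_zero]
    refine integral_congr_ae (.of_forall fun y ↦ ?_)
    simp only [heven]
    push_cast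
    ring_nf
  rw [densityCharFun_indicator measurableSet_Ioi, densityCharFun_indicator measurableSet_Ioi, hneg,
    add_comm, intervalIntegral.integral_Iic_add_Ioi hint.integrableOn hint.integrableOn,
    densityCharFun_eq_integral]

theorem rpow_mul_abs_mul_rpow_one_sub_mul_sign {σ : ℝ} (hσ : 0 < σ) (α t : ℝ) :
    (σ * |t|) ^ α * ((σ * |t|) ^ (1 - α) * Real.sign t) = σ * t := by
  rcases eq_or_ne t 0 with rfl | ht
  · simp
  · rw [← mul_assoc, ← Real.rpow_add (mul_pos hσ (abs_pos.2 ht)), add_sub_cancel, Real.rpow_one,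
      mul_assoc]
    rcases ht.lt_or_gt with hneg | hpos
    · rw [Real.sign_of_neg hneg, abs_of_neg hneg, neg_mul_neg, mul_one]
    · rw [Real.sign_of_pos hpos, abs_of_pos hpos, mul_one]

/-- The Lévy–Khintchine form of the cumulant: a drift and one spectrally one-sided stable cumulant
for each half-line. -/
theorem psiM_eq_add_cpow {θ : Fin 4 → ℝ} (hσ : 0 < θ 1) (hα : θ 2 ∈ Ioo (0 : ℝ) 2)
    (h1 : θ 2 ≠ 1) (t : ℝ) :
    psiM θ t =
      Complex.I * ((θ 0 - θ 3 * Real.tan (Real.pi * θ 2 / 2) * θ 1 : ℝ) : ℂ) * t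
      + (tailWeight 1 θ * (Real.Gamma (2 - θ 2) / (θ 2 * (θ 2 - 1))) : ℝ) *
          (-Complex.I * t) ^ (θ 2 : ℂ)
      + (tailWeight (-1) θ * (Real.Gamma (2 - θ 2) / (θ 2 * (θ 2 - 1))) : ℝ) *
          (-Complex.I * (-t : ℝ)) ^ (θ 2 : ℂ) := by
  have hcos : Real.cos (Real.pi * θ 2 / 2) ≠ 0 := cos_pi_mul_div_two_ne_zero hα h1
  have hpow : (θ 1 * |t|) ^ θ 2 = θ 1 ^ θ 2 * |t| ^ θ 2 := Real.mul_rpow hσ.le (abs_nonneg t)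
  have hlin := rpow_mul_abs_mul_rpow_one_sub_mul_sign hσ (θ 2) t
  rw [tailWeight_mul_Gamma_div hα h1, tailWeight_mul_Gamma_div hα h1,
    neg_I_mul_cpow hα.1.ne', neg_I_mul_cpow hα.1.ne', abs_neg, Real.sign_neg,
    psiM, if_neg h1, abs_mul, abs_of_pos hσ, Real.tan_eq_sin_div_cos]
  rw [hpow] at hlin ⊢
  apply Complex.ext
  · simp only [Complex.add_re, Complex.sub_re, Complex.mul_re, Complex.ofReal_re,
      Complex.ofReal_im, Complex.I_re, Complex.I_im, Complex.one_re, Complex.one_im,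
      Complex.add_im, Complex.sub_im, Complex.mul_im]
    field_simp
    ring
  · simp only [Complex.add_re, Complex.sub_re, Complex.mul_re, Complex.ofReal_re,
      Complex.ofReal_im, Complex.I_re, Complex.I_im, Complex.one_re, Complex.one_im,
      Complex.add_im, Complex.sub_im, Complex.mul_im]
    field_simp
    linear_combination
      (-2 * θ 3 * Real.sin (Real.pi * θ 2 / 2)) * hlin

theorem isPositiveMultiplier_phiM_mul_of_ne_one {θ : Fin 4 → ℝ} (hσ : 0 < θ 1)
    (hα : θ 2 ∈ Ioo (0 : ℝ) 2) (h1 : θ 2 ≠ 1) {p : ℝ → ℝ} (hp : Integrable p)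
    (heven : ∀ y, p (-y) = p y)
    (hle : ∀ e : ℝ, |e| = 1 → ∀ y, 0 < y → p y ≤ tailWeight e θ * y ^ (-1 - θ 2)) :
    IsPositiveMultiplier fun t ↦ phiM θ t * Complex.exp (-densityCharFun p t) := by
  have half_line : ∀ e : ℝ, |e| = 1 → IsPositiveMultiplier fun t : ℝ ↦
      Complex.exp ((tailWeight e θ * (Real.Gamma (2 - θ 2) / (θ 2 * (θ 2 - 1))) : ℝ) *
        (-Complex.I * t) ^ (θ 2 : ℂ) - densityCharFun ((Ioi 0).indicator p) t) := fun e he ↦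
    isPositiveMultiplier_stable_sub hα.1 hα.2 h1 hp (hle e he)
  have hprod := ((IsPositiveMultiplier.cexp_I_mul
    (θ 0 - θ 3 * Real.tan (Real.pi * θ 2 / 2) * θ 1)).mul (half_line 1 abs_one)).mul
    (half_line (-1) (by simp)).comp_neg
  refine (congrArg IsPositiveMultiplier (funext fun t ↦ ?_)).mp hprod
  rw [← Complex.exp_add, ← Complex.exp_add, phiM, ← Complex.exp_add, psiM_eq_add_cpow hσ hα h1,
    densityCharFun_eq_add_of_even hp heven]
  congr 1
  ring

end LevyDensity

/-! ### Continuity in the parameter -/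

section Continuity

open Set Topology

theorem isOpen_thetaInt : IsOpen ThetaInt := by
  have h := fun i ↦ continuous_apply (A := fun _ : Fin 4 ↦ ℝ) i
  exact (isOpen_Ioi.preimage (h 1)).inter
    ((isOpen_Ioo.preimage (h 2)).inter (isOpen_Ioo.preimage (h 3)))

theorem ParamBox.exists_eventually_mem {θ₀ : Fin 4 → ℝ} (hθ : θ₀ ∈ ThetaInt) {a₁ a₂ : ℝ}
    (ha₁ : 0 < a₁) (ha : θ₀ 2 ∈ Ioo a₁ a₂) (ha₂ : a₂ < 2) :
    ∃ B : ParamBox, B.a₁ = a₁ ∧ ∀ᶠ θ in 𝓝 θ₀, B.Mem θ := by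
  have h := fun i ↦ (continuous_apply (A := fun _ : Fin 4 ↦ ℝ) i).continuousAt (x := θ₀)
  refine ⟨⟨|θ₀ 0| + 1, |Real.log (θ₀ 1)| + 1, a₁, a₂, by positivity, by positivity, ha₁, ha₂⟩,
    rfl, ?_⟩
  filter_upwards [isOpen_thetaInt.mem_nhds hθ,
    (h 0).abs.eventually_lt_const (lt_add_one _),
    ((h 1).log hθ.1.ne').abs.eventually_lt_const (lt_add_one _),
    (h 2).eventually_const_lt ha.1, (h 2).eventually_lt_const ha.2] with θ hin hμ hσ h₁ h₂
  exact ⟨hμ.le, hin.1, hσ.le, h₁.le, h₂.le, abs_le.2 ⟨hin.2.2.1.le, hin.2.2.2.le⟩⟩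

theorem ParamBox.exists_eventually_mem_of_mem_thetaInt {θ₀ : Fin 4 → ℝ} (hθ : θ₀ ∈ ThetaInt) :
    ∃ B : ParamBox, ∀ᶠ θ in 𝓝 θ₀, B.Mem θ := by
  obtain ⟨a₁, ha₁, ha₁'⟩ := exists_between hθ.2.1.1
  obtain ⟨a₂, ha₂', ha₂⟩ := exists_between hθ.2.1.2
  obtain ⟨B, -, hB⟩ := exists_eventually_mem hθ ha₁ ⟨ha₁', ha₂'⟩ ha₂
  exact ⟨B, hB⟩

theorem tendsto_paramDist (θ : Fin 4 → ℝ) : Tendsto (fun θ' ↦ paramDist θ' θ) (𝓝 θ) (𝓝 0) := by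
  have hcont : Continuous fun θ' ↦ paramDist θ' θ := by unfold paramDist; fun_prop
  simpa [paramDist] using hcont.tendsto θ

theorem continuousAt_phiM {θ : Fin 4 → ℝ} (hθ : θ ∈ ThetaInt) (t : ℝ) :
    ContinuousAt (fun θ ↦ phiM θ t) θ := by
  obtain ⟨B, hB⟩ := ParamBox.exists_eventually_mem_of_mem_thetaInt hθ
  obtain ⟨g, -, -, hlip⟩ := B.exists_norm_phiM_le
  rw [ContinuousAt, tendsto_iff_norm_sub_tendsto_zero]
  exact squeeze_zero' (.of_forall fun _ ↦ norm_nonneg _)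
    (hB.mono fun θ' hθ' ↦ hlip θ' hθ' θ hB.self_of_nhds t)
    (by simpa using (tendsto_paramDist θ).mul_const (g t))

theorem frequently_index_ne_one (θ : Fin 4 → ℝ) : ∃ᶠ θ' in 𝓝 θ, θ' 2 ≠ 1 := by
  have hupdate : Tendsto (fun s : ℝ ↦ Function.update θ 2 s) (𝓝 (θ 2)) (𝓝 θ) := by
    simpa using (continuous_const.update 2 continuous_id : Continuous
      fun s : ℝ ↦ Function.update θ 2 s).tendsto (θ 2)
  refine hupdate.frequently ?_
  simpa using mem_closure_iff_frequently.1 (dense_compl_singleton (1 : ℝ) (θ 2))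

/-- The index `1` is reached by a limit, since the Lévy measure of `psiM_eq_add_cpow` is only
available for the other indices. -/
theorem isPositiveMultiplier_phiM_mul {θ : Fin 4 → ℝ} (hθ : θ ∈ ThetaInt) {p : ℝ → ℝ}
    (hp : Integrable p) (heven : ∀ y, p (-y) = p y)
    (hle : ∀ᶠ θ' in 𝓝 θ, ∀ e : ℝ, |e| = 1 → ∀ y, 0 < y →
      p y ≤ tailWeight e θ' * y ^ (-1 - θ' 2)) :
    IsPositiveMultiplier fun t ↦ phiM θ t * Complex.exp (-densityCharFun p t) := by
  obtain ⟨θs, hlim, hθs⟩ := exists_seq_forall_of_frequently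
    ((frequently_index_ne_one θ).and_eventually
      ((isOpen_thetaInt.eventually_mem hθ).and hle))
  exact .of_tendsto
    (fun n ↦ isPositiveMultiplier_phiM_mul_of_ne_one (hθs n).2.1.1 (hθs n).2.1.2.1 (hθs n).1 hp
      heven (hθs n).2.2)
    fun t ↦ ((continuousAt_phiM hθ t).tendsto.comp hlim).mul_const _

end Continuity

section PowerDensity

open Set Topology

/-- The density `c * (1 + |y|) ^ (-(1 + a))`, which has the tails of a stable density of index
`a`. -/
noncomputable def powerDensity (c a y : ℝ) : ℝ := c * (1 + |y|) ^ (-(1 + a))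

theorem integrable_powerDensity (c : ℝ) {a : ℝ} (ha : 0 < a) : Integrable (powerDensity c a) :=
  (integrable_one_add_norm (E := ℝ) (μ := volume) (r := 1 + a) (by simp [ha])).const_mul c

theorem powerDensity_nonneg {c : ℝ} (hc : 0 ≤ c) (a y : ℝ) : 0 ≤ powerDensity c a y := by
  unfold powerDensity
  positivity

theorem powerDensity_neg (c a y : ℝ) : powerDensity c a (-y) = powerDensity c a y := by
  rw [powerDensity, abs_neg, powerDensity]

theorem powerDensity_le_mul_rpow {c a α y : ℝ} (hc : 0 ≤ c) (hα : 0 ≤ α) (hαa : α ≤ a)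
    (hy : 0 < y) : powerDensity c a y ≤ c * y ^ (-1 - α) := by
  rw [powerDensity, abs_of_pos hy]
  refine mul_le_mul_of_nonneg_left ?_ hc
  calc (1 + y) ^ (-(1 + a)) ≤ (1 + y) ^ (-1 - α) :=
        Real.rpow_le_rpow_of_exponent_le (by linarith) (by linarith)
    _ ≤ y ^ (-1 - α) := Real.rpow_le_rpow_of_nonpos hy (by linarith) (by linarith)

theorem exists_eventually_powerDensity_le {θ₀ : Fin 4 → ℝ} (hθ : θ₀ ∈ ThetaInt) {a : ℝ}
    (ha : θ₀ 2 < a) :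
    ∃ c, 0 < c ∧ ∀ᶠ θ in 𝓝 θ₀, ∀ e : ℝ, |e| = 1 → ∀ y, 0 < y →
      powerDensity c a y ≤ tailWeight e θ * y ^ (-1 - θ 2) := by
  obtain ⟨c, hc, hlt⟩ := exists_between (lt_min (tailWeight_pos hθ abs_one)
    (tailWeight_pos hθ (e := -1) (by simp)))
  refine ⟨c, hc, ?_⟩
  filter_upwards [isOpen_thetaInt.mem_nhds hθ,
    (continuous_apply 2).continuousAt.eventually_lt_const ha,
    (continuousAt_tailWeight hθ 1).eventually_const_lt (lt_min_iff.1 hlt).1,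
    (continuousAt_tailWeight hθ (-1)).eventually_const_lt (lt_min_iff.1 hlt).2]
    with θ hin hindex hpos hneg e he y hy
  refine (powerDensity_le_mul_rpow hc.le hin.2.1.1.le hindex.le hy).trans ?_
  gcongr
  rcases eq_or_eq_neg_of_abs_eq he with rfl | rfl
  · exact hpos.le
  · exact hneg.le

end PowerDensity

section Positivity

open Set Topology ComplexConjugate FourierTransform

theorem im_fourierInt_eq_zero {k : ℝ → ℂ} (hconj : ∀ t, k (-t) = conj (k t)) (x : ℝ) :
    (fourierInt k x).im = 0 := by
  rw [← Complex.conj_eq_iff_im, fourierInt, ← integral_conj, ← integral_neg_eq_self]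
  simp [hconj, ← Complex.exp_conj]

theorem fourier_eq_fourierInt (k : ℝ → ℂ) (w : ℝ) : 𝓕 k w = fourierInt k (2 * Real.pi * w) := by
  rw [Real.fourier_eq', fourierInt]
  congr! 4 with t
  simp only [RCLike.inner_apply, conj_trivial]
  push_cast
  ring

theorem HasNonnegFourier.exists_pos {k : ℝ → ℂ} (hk : HasNonnegFourier k) (hc : Continuous k)
    (hconj : ∀ t, k (-t) = conj (k t)) (h0 : k 0 ≠ 0) : ∃ y, 0 < (fourierInt k y).re := by
  by_contra! hnonpos
  have hzero : 𝓕 k = 0 := funext fun w ↦ by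
    rw [fourier_eq_fourierInt]
    exact Complex.ext (le_antisymm (hnonpos _) (hk.nonneg _)) (im_fourierInt_eq_zero hconj _)
  have hinv := hc.fourierInv_fourier_eq hk.integrable (by rw [hzero]; exact integrable_zero _ _ _)
  apply h0
  rw [← hinv, hzero, Real.fourierInv_eq']
  simp

theorem abs_re_fourierInt_sub_le {k l : ℝ → ℂ} (hk : Integrable k) (hl : Integrable l) (x : ℝ) :
    |(fourierInt k x).re - (fourierInt l x).re| ≤ ∫ t, ‖k t - l t‖ := by
  rw [← Complex.sub_re, ← fourierInt_sub hk hl]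
  exact (Complex.abs_re_le_norm _).trans (norm_fourierInt_le _ x)

end Positivity

/-! ### The lower bound for the density -/

section LowerBound

open Set Topology ComplexConjugate

/-- The stable characteristic function with jumps of intensity `p` removed: up to a constant
factor, `phiM θ` divided by the characteristic function of the compound Poisson law with Lévy
density `p`. -/
noncomputable def levyQuotient (p : ℝ → ℝ) (θ : Fin 4 → ℝ) (t : ℝ) : ℂ :=
  phiM θ t * Complex.exp (-densityCharFun p t)

variable {p : ℝ → ℝ} {θ θ₀ : Fin 4 → ℝ}

theorem cexp_densityCharFun_mul_levyQuotient (p : ℝ → ℝ) (θ : Fin 4 → ℝ) (t : ℝ) :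
    Complex.exp (densityCharFun p t) * levyQuotient p θ t = phiM θ t := by
  rw [levyQuotient, mul_left_comm, ← Complex.exp_add, add_neg_cancel, Complex.exp_zero, mul_one]

theorem levyQuotient_ne_zero (p : ℝ → ℝ) (θ : Fin 4 → ℝ) (t : ℝ) : levyQuotient p θ t ≠ 0 :=
  mul_ne_zero (Complex.exp_ne_zero _) (Complex.exp_ne_zero _)

theorem levyQuotient_neg (p : ℝ → ℝ) (θ : Fin 4 → ℝ) (t : ℝ) :
    levyQuotient p θ (-t) = conj (levyQuotient p θ t) := by
  rw [levyQuotient, levyQuotient, map_mul, phiM_neg, densityCharFun_neg, ← Complex.exp_conj,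
    map_neg]

theorem norm_cexp_neg_densityCharFun_le (p : ℝ → ℝ) (t : ℝ) :
    ‖Complex.exp (-densityCharFun p t)‖ ≤ Real.exp (∫ y, |p y|) := by
  rw [Complex.norm_exp, Real.exp_le_exp]
  exact (Complex.re_le_norm _).trans (by simpa using norm_densityCharFun_le p t)

theorem continuous_levyQuotient (hp : Integrable p) (hφ : Continuous (phiM θ)) :
    Continuous (levyQuotient p θ) :=
  hφ.mul (Complex.continuous_exp.comp (continuous_densityCharFun hp).neg)

theorem integrable_levyQuotient (hp : Integrable p) (hφ : Integrable (phiM θ)) :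
    Integrable (levyQuotient p θ) :=
  hφ.mul_bdd
    (Complex.continuous_exp.comp (continuous_densityCharFun hp).neg).aestronglyMeasurable
    (.of_forall (norm_cexp_neg_densityCharFun_le p))

theorem integrable_mul_re_fourierInt_sub (hp : Integrable p) {k : ℝ → ℂ} (hk : Integrable k)
    (x : ℝ) : Integrable fun y ↦ p y * (fourierInt k (x - y)).re := by
  simpa using (integrable_mul_fourierInt_sub hp hk x).re

theorem re_fourierInt_densityCharFun_mul (hp : Integrable p) {k : ℝ → ℂ} (hk : Integrable k)
    (x : ℝ) :
    (fourierInt (fun t ↦ densityCharFun p t * k t) x).re =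
      ∫ y, p y * (fourierInt k (x - y)).re := by
  rw [fourierInt_densityCharFun_mul hp hk, ← RCLike.re_eq_complex_re,
    ← integral_re (integrable_mul_fourierInt_sub hp hk x)]
  simp

/-- One jump of the compound Poisson part already accounts for the convolution with `p`; the
remaining factor `cexp (densityCharFun p) - densityCharFun p` is a positive multiplier. -/
theorem integral_mul_re_fourierInt_levyQuotient_le (hp : Integrable p) (hp₀ : ∀ y, 0 ≤ p y)
    (hφ : Integrable (phiM θ)) (hpos : IsPositiveMultiplier (levyQuotient p θ)) (x : ℝ) :
    ∫ y, p y * (fourierInt (levyQuotient p θ) (x - y)).re ≤ (fourierInt (phiM θ) x).re := by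
  have hint := integrable_levyQuotient hp hφ
  have hdiff := (IsPositiveMultiplier.densityCharFun hp hp₀).cexp_sub_self.hasNonnegFourier_mul _
    (hpos.hasNonnegFourier hint)
  simp only [sub_mul, cexp_densityCharFun_mul_levyQuotient] at hdiff
  have hnonneg := hdiff.nonneg x
  rwa [fourierInt_sub hφ (integrable_densityCharFun_mul hp hint), Complex.sub_re,
    re_fourierInt_densityCharFun_mul hp hint, sub_nonneg] at hnonneg

theorem ParamBox.exists_integral_norm_levyQuotient_sub_le (B : ParamBox) (hp : Integrable p) :
    ∃ C, ∀ θ, B.Mem θ → ∀ θ', B.Mem θ' →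
      ∫ t, ‖levyQuotient p θ t - levyQuotient p θ' t‖ ≤ paramDist θ θ' * C := by
  obtain ⟨g, hg, -, hlip⟩ := B.exists_norm_phiM_le
  refine ⟨∫ t, g t * Real.exp (∫ y, |p y|), fun θ h θ' h' ↦ ?_⟩
  rw [← integral_const_mul]
  refine integral_mono ((integrable_levyQuotient hp h.integrable_phiM).sub
    (integrable_levyQuotient hp h'.integrable_phiM)).norm ((hg.mul_const _).const_mul _) fun t ↦ ?_
  simp only [levyQuotient]
  rw [← sub_mul, norm_mul, ← mul_assoc]
  exact mul_le_mul (hlip θ h θ' h' t) (norm_cexp_neg_densityCharFun_le p t) (norm_nonneg _)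
    ((norm_nonneg _).trans (hlip θ h θ' h' t))

theorem tendsto_integral_norm_levyQuotient_sub (hθ : θ₀ ∈ ThetaInt) (hp : Integrable p) :
    Tendsto (fun θ ↦ ∫ t, ‖levyQuotient p θ t - levyQuotient p θ₀ t‖) (𝓝 θ₀) (𝓝 0) := by
  obtain ⟨B, hB⟩ := ParamBox.exists_eventually_mem_of_mem_thetaInt hθ
  obtain ⟨C, hC⟩ := B.exists_integral_norm_levyQuotient_sub_le hp
  exact squeeze_zero' (.of_forall fun _ ↦ integral_nonneg fun _ ↦ norm_nonneg _)
    (hB.mono fun θ hθ' ↦ hC θ hθ' θ₀ hB.self_of_nhds)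
    (by simpa using (tendsto_paramDist θ₀).mul_const C)

theorem exists_eventually_le_re_fourierInt_levyQuotient (hθ : θ₀ ∈ ThetaInt) (hp : Integrable p)
    (hpos : IsPositiveMultiplier (levyQuotient p θ₀)) :
    ∃ y₀ r δ, 0 < r ∧ 0 < δ ∧ ∀ᶠ θ in 𝓝 θ₀, ∀ y ∈ Icc (y₀ - r) (y₀ + r),
      δ ≤ (fourierInt (levyQuotient p θ) y).re := by
  obtain ⟨B, hB⟩ := ParamBox.exists_eventually_mem_of_mem_thetaInt hθ
  have h₀ := hB.self_of_nhds
  have hint := integrable_levyQuotient hp h₀.integrable_phiM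
  obtain ⟨y₀, hy₀⟩ := (hpos.hasNonnegFourier hint).exists_pos
    (continuous_levyQuotient hp h₀.continuous_phiM) (levyQuotient_neg p θ₀)
    (levyQuotient_ne_zero p θ₀ 0)
  set ρ := (fourierInt (levyQuotient p θ₀) y₀).re
  have hcont : ContinuousAt (fun y ↦ (fourierInt (levyQuotient p θ₀) y).re) y₀ :=
    (Complex.continuous_re.comp (continuous_fourierInt hint)).continuousAt
  obtain ⟨r, hr, hball⟩ := Metric.nhds_basis_closedBall.eventually_iff.1
    (hcont.eventually_const_lt (half_lt_self hy₀))
  refine ⟨y₀, r, ρ / 4, hr, by positivity, ?_⟩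
  filter_upwards [hB, (tendsto_integral_norm_levyQuotient_sub hθ hp).eventually_lt_const
    (show 0 < ρ / 4 by positivity)] with θ hmem hclose y hy
  rw [← Real.closedBall_eq_Icc] at hy
  have hdist := abs_re_fourierInt_sub_le (integrable_levyQuotient hp hmem.integrable_phiM) hint y
  linarith [hball hy, neg_abs_le ((fourierInt (levyQuotient p θ) y).re -
    (fourierInt (levyQuotient p θ₀) y).re)]

theorem mul_powerDensity_le {c a r x y y₀ : ℝ} (hc : 0 ≤ c) (ha : 0 ≤ a)
    (hy : |x - y - y₀| ≤ r) :
    (1 + |y₀| + r) ^ (-(1 + a)) * powerDensity c a x ≤ powerDensity c a y := by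
  have hr : 0 ≤ r := (abs_nonneg _).trans hy
  have habs : |y| ≤ |x| + |y₀| + r := by
    have hsplit : y = x - y₀ - (x - y - y₀) := by ring
    rw [hsplit]
    linarith [abs_sub (x - y₀) (x - y - y₀), abs_sub x y₀]
  rw [powerDensity, powerDensity, mul_left_comm, ← Real.mul_rpow (by positivity) (by positivity)]
  refine mul_le_mul_of_nonneg_left (Real.rpow_le_rpow_of_nonpos (by positivity) ?_ (by linarith)) hc
  nlinarith [abs_nonneg x, mul_nonneg (add_nonneg (abs_nonneg y₀) hr) (abs_nonneg x)]

theorem mul_powerDensity_le_integral {c a r δ y₀ : ℝ} (hc : 0 ≤ c) (ha : 0 ≤ a) (hr : 0 ≤ r)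
    (hδ : 0 ≤ δ) {w : ℝ → ℝ} (hw : ∀ y, 0 ≤ w y) (hwδ : ∀ y ∈ Icc (y₀ - r) (y₀ + r), δ ≤ w y)
    {x : ℝ} (hint : Integrable fun y ↦ powerDensity c a y * w (x - y)) :
    2 * r * ((1 + |y₀| + r) ^ (-(1 + a)) * powerDensity c a x * δ) ≤
      ∫ y, powerDensity c a y * w (x - y) := by
  calc 2 * r * ((1 + |y₀| + r) ^ (-(1 + a)) * powerDensity c a x * δ)
    _ = ∫ _ in Icc (x - y₀ - r) (x - y₀ + r),
          (1 + |y₀| + r) ^ (-(1 + a)) * powerDensity c a x * δ := by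
      rw [setIntegral_const, Real.volume_real_Icc_of_le (by linarith), smul_eq_mul]
      ring
    _ ≤ ∫ y in Icc (x - y₀ - r) (x - y₀ + r), powerDensity c a y * w (x - y) := by
      refine setIntegral_mono_on (integrableOn_const (by simp)) hint.integrableOn
        measurableSet_Icc fun y hy ↦ ?_
      refine mul_le_mul (mul_powerDensity_le hc ha (abs_le.2 ?_)) (hwδ _ ?_) hδ
        (powerDensity_nonneg hc a y)
      all_goals constructor <;> linarith [hy.1, hy.2]
    _ ≤ ∫ y, powerDensity c a y * w (x - y) :=
      setIntegral_le_integral hint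
        (.of_forall fun y ↦ mul_nonneg (powerDensity_nonneg hc a y) (hw _))

theorem exists_eventually_le_fM (hθ : θ₀ ∈ ThetaInt) {a : ℝ} (ha : θ₀ 2 < a) :
    ∃ m, 0 < m ∧ ∀ᶠ θ in 𝓝 θ₀, ∀ x, m * (1 + |x|) ^ (-(1 + a)) ≤ fM θ x := by
  have ha₀ : 0 < a := hθ.2.1.1.trans ha
  obtain ⟨c, hc, hle⟩ := exists_eventually_powerDensity_le hθ ha
  have hp := integrable_powerDensity c ha₀
  have hpos : ∀ᶠ θ in 𝓝 θ₀, IsPositiveMultiplier (levyQuotient (powerDensity c a) θ) := by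
    filter_upwards [isOpen_thetaInt.mem_nhds hθ, hle.eventually_nhds] with θ hin hnhds
    exact isPositiveMultiplier_phiM_mul hin hp (powerDensity_neg c a) hnhds
  obtain ⟨y₀, r, δ, hr, hδ, hδle⟩ :=
    exists_eventually_le_re_fourierInt_levyQuotient hθ hp hpos.self_of_nhds
  obtain ⟨B, hB⟩ := ParamBox.exists_eventually_mem_of_mem_thetaInt hθ
  refine ⟨1 / (2 * Real.pi) * (2 * r * ((1 + |y₀| + r) ^ (-(1 + a)) * c * δ)), by positivity, ?_⟩
  filter_upwards [hB, hpos, hδle] with θ hmem hposθ hδθ x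
  have hint := integrable_levyQuotient hp hmem.integrable_phiM
  have hconv := mul_powerDensity_le_integral hc.le ha₀.le hr.le hδ.le
    (hposθ.hasNonnegFourier hint).nonneg hδθ (integrable_mul_re_fourierInt_sub hp hint x)
  calc _ = 1 / (2 * Real.pi) *
        (2 * r * ((1 + |y₀| + r) ^ (-(1 + a)) * powerDensity c a x * δ)) := by
        rw [powerDensity]
        ring
    _ ≤ 1 / (2 * Real.pi) * (fourierInt (phiM θ) x).re := by
        gcongr
        exact hconv.trans (integral_mul_re_fourierInt_levyQuotient_le hp
          (powerDensity_nonneg hc.le a) hmem.integrable_phiM hposθ x)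

end LowerBound

/-! ### The log-density -/

section LogDensity

theorem ParamBox.Mem.continuous_fM {B : ParamBox} {θ : Fin 4 → ℝ} (h : B.Mem θ) :
    Continuous (fM θ) :=
  continuous_const.mul (Complex.continuous_re.comp (continuous_fourierInt h.integrable_phiM))

theorem abs_log_sub_log_le_of_rpow_le {a γ C d m u v x : ℝ} (hm : 0 < m)
    (hu : m * (1 + |x|) ^ (-(1 + a)) ≤ u) (hv : m * (1 + |x|) ^ (-(1 + a)) ≤ v)
    (huv : |u - v| ≤ C * d * (1 + |x|) ^ (-(1 + γ))) :
    |Real.log u - Real.log v| ≤ C / m * (1 + |x|) ^ (a - γ) * d := by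
  have hx : 0 < 1 + |x| := by positivity
  have hsplit : (1 + |x|) ^ (-(1 + γ)) = (1 + |x|) ^ (a - γ) * (1 + |x|) ^ (-(1 + a)) := by
    rw [← Real.rpow_add hx]
    congr 1
    ring
  calc |Real.log u - Real.log v|
    _ ≤ |u - v| / (m * (1 + |x|) ^ (-(1 + a))) := abs_log_sub_log_le_div (by positivity) hu hv
    _ ≤ C * d * (1 + |x|) ^ (-(1 + γ)) / (m * (1 + |x|) ^ (-(1 + a))) := by gcongr
    _ = C / m * (1 + |x|) ^ (a - γ) * d := by
      rw [hsplit]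
      field_simp

theorem integrable_sq_mul_of_abs_le_rpow {a γ C : ℝ} {f : ℝ → ℝ} (hf : AEStronglyMeasurable f)
    (hfC : ∀ x, |f x| ≤ C * (1 + |x|) ^ (-(1 + γ))) (hγ : 2 * a < 3 * γ) (K : ℝ) :
    Integrable fun x : ℝ ↦ (K * (1 + |x|) ^ (a - γ)) ^ 2 * f x := by
  have hmeas : Measurable fun x : ℝ ↦ (K * (1 + |x|) ^ (a - γ)) ^ 2 := by fun_prop
  refine (integrable_powerDensity (K ^ 2 * C) (a := 3 * γ - 2 * a) (by linarith)).mono'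
    (hmeas.aestronglyMeasurable.mul hf) (.of_forall fun x ↦ ?_)
  have hx : 0 < 1 + |x| := by positivity
  rw [Real.norm_eq_abs, abs_mul, abs_of_nonneg (sq_nonneg _)]
  calc (K * (1 + |x|) ^ (a - γ)) ^ 2 * |f x|
    _ ≤ (K * (1 + |x|) ^ (a - γ)) ^ 2 * (C * (1 + |x|) ^ (-(1 + γ))) := by
      gcongr
      exact hfC x
    _ = K ^ 2 * C * ((1 + |x|) ^ (a - γ) * (1 + |x|) ^ (a - γ) * (1 + |x|) ^ (-(1 + γ))) := by ring
    _ = powerDensity (K ^ 2 * C) (3 * γ - 2 * a) x := by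
      rw [← Real.rpow_add hx, ← Real.rpow_add hx, powerDensity]
      ring_nf

end LogDensity

/-- Local Lipschitz property of the log-density with square-integrable
envelope: around any `θ0 ∈ Θ_M°` there are a neighborhood `U ⊆ Θ_M°` and a measurable
`η̇ ≥ 0` with `∫ η̇² f(·;θ0) < ∞` such that
`|log f(x;θ') − log f(x;θ'')| ≤ η̇(x) ‖θ' − θ''‖` (Euclidean norm) for `θ', θ'' ∈ U`. -/
theorem log_density_locally_lipschitz (θ0 : Fin 4 → ℝ) (hθ0 : θ0 ∈ ThetaInt) :
    ∃ U : Set (Fin 4 → ℝ), U ⊆ ThetaInt ∧ U ∈ nhds θ0 ∧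
      ∃ η : ℝ → ℝ, Measurable η ∧ (∀ x, 0 ≤ η x) ∧
        MeasureTheory.Integrable (fun x : ℝ => η x ^ 2 * fM θ0 x) ∧
        ∀ θ' ∈ U, ∀ θ'' ∈ U, ∀ x : ℝ,
          |Real.log (fM θ' x) - Real.log (fM θ'' x)| ≤
            η x * Real.sqrt (∑ i : Fin 4, (θ' i - θ'' i) ^ 2) := by
  have hα : 0 < θ0 2 := hθ0.2.1.1
  obtain ⟨a, ha, ha'⟩ := exists_between (lt_min (by linarith : θ0 2 < 1.1 * θ0 2) hθ0.2.1.2)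
  obtain ⟨ha₁, ha₂⟩ := lt_min_iff.1 ha'
  obtain ⟨B, hBa, hB⟩ := ParamBox.exists_eventually_mem hθ0 (a₁ := 0.9 * θ0 2) (by positivity)
    ⟨by linarith, ha⟩ ha₂
  obtain ⟨C, hC, hbound, hlip⟩ := B.exists_abs_fM_le (γ := 0.8 * θ0 2) (by positivity)
    (by rw [hBa]; linarith)
  obtain ⟨m, hm, hlower⟩ := exists_eventually_le_fM hθ0 ha
  have hB₀ : B.Mem θ0 := hB.self_of_nhds
  refine ⟨{θ | θ ∈ ThetaInt ∧ B.Mem θ ∧ ∀ x, m * (1 + |x|) ^ (-(1 + a)) ≤ fM θ x},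
    fun θ hθ ↦ hθ.1, (isOpen_thetaInt.eventually_mem hθ0).and (hB.and hlower),
    fun x ↦ C / m * (1 + |x|) ^ (a - 0.8 * θ0 2), by fun_prop, fun x ↦ by positivity,
    integrable_sq_mul_of_abs_le_rpow hB₀.continuous_fM.aestronglyMeasurable (hbound θ0 hB₀)
      (by linarith) (C / m), ?_⟩
  rintro θ' ⟨-, hB', hm'⟩ θ'' ⟨-, hB'', hm''⟩ x
  exact abs_log_sub_log_le_of_rpow_le hm (hm' x) (hm'' x) (hlip θ' hB' θ'' hB'' x)
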